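/- Fix σ > 0 and constants α, β_w ∈ (0,1) with β_w < α for which there exist α_w ∈ (0, α) and t ≥ 0 satisfying (2/√π)·∫₀ᵗ e^{−s²} ds = (1 − α_w)/(1 − β_w) and (1 − β_w)·√(2/π)·e^{−t²} = α_w·√2·t. For each n let m = ⌈α·n⌉, k = ⌈β_w·n⌉; let A be a random m×n matrix with i.i.d. N(0,1) entries, v ∈ ℝᵐ independent with i.i.d. N(0,σ²) entries; for a k-sparse nonnegative x̃ set y = A·x̃ + v and ζ_obj = inf { ‖y − A·x‖₂ : ‖x‖₁ ≤ ‖x̃‖₁ }. Then for every ε₁ ∈ (0,1) there exist ε₂, ε₃ > 0 and N such that for all n ≥ N: (i) there exists a k-sparse nonnegative x̃ such that, with probability at least 1 − e^{−ε₂·n}, some minimizer x̂ of ζ_obj satisfies (1 − ε₁)·σ·√(α_w/(α − α_w)) ≤ ‖x̂ − x̃‖₂ ≤ (1 + ε₁)·σ·√(α_w/(α − α_w)); and (ii) for every k-sparse nonnegative x̃, with probability at least 1 − e^{−ε₃·n}, every minimizer x̂ of ζ_obj satisfies ‖x̂ − x̃‖₂ ≤ (1 + ε₁)·σ·√(α_w/(α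 − α_w)). -/

import Mathlib

open MeasureTheory ProbabilityTheory

noncomputable def e2norm {d : ℕ} (x : Fin d → ℝ) : ℝ := Real.sqrt (∑ i, x i ^ 2)

noncomputable def l1norm {d : ℕ} (x : Fin d → ℝ) : ℝ := ∑ i, |x i|

def kSparseNonneg (n k : ℕ) (x : Fin n → ℝ) : Prop :=
  (∀ i : Fin n, (i : ℕ) < n - k → x i = 0) ∧ ∀ i, 0 ≤ x i

noncomputable def mDim (α : ℝ) (n : ℕ) : ℕ := ⌈α * (n : ℝ)⌉₊

noncomputable def kDim (β : ℝ) (n : ℕ) : ℕ := ⌈β * (n : ℝ)⌉₊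

noncomputable def muAv (m n : ℕ) (σ : ℝ) :
    Measure ((Fin m → Fin n → ℝ) × (Fin m → ℝ)) :=
  (Measure.pi fun _ : Fin m => Measure.pi fun _ : Fin n => gaussianReal 0 1).prod
    (Measure.pi fun _ : Fin m => gaussianReal 0 (σ ^ 2).toNNReal)

/-- ‖y − A·x‖₂ with y = A·x̃ + v, for the sample ω = (A, v). -/
noncomputable def lassoVal (m n : ℕ) (xt : Fin n → ℝ)
    (ω : (Fin m → Fin n → ℝ) × (Fin m → ℝ)) (x : Fin n → ℝ) : ℝ :=
  e2norm (fun i => ((∑ j, ω.1 i j * xt j) + ω.2 i) - ∑ j, ω.1 i j * x j)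

/-- ζ_obj(A, v): the optimal value of the LASSO (1.9). -/
noncomputable def zetaObj (m n : ℕ) (xt : Fin n → ℝ)
    (ω : (Fin m → Fin n → ℝ) × (Fin m → ℝ)) : ℝ :=
  sInf {r : ℝ | ∃ x : Fin n → ℝ, l1norm x ≤ l1norm xt ∧ r = lassoVal m n xt ω x}

/-!
The LASSO error is the minimizer of `w ↦ ‖v - A w‖₂` over the convex set of `w` with
`‖x̃ + w‖₁ ≤ ‖x̃‖₁`. Gordon's comparison inequality, applied to `[A, v / σ]`, replaces this bilinear
Gaussian process by the decoupled objective `√(‖w‖₂² + σ²) ‖g‖₂ + σ h₀ - h ⬝ᵥ w` with independent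
Gaussian `g`, `h` and `h₀`, in both directions because the constraint set is convex and compact. The
set is contained in the descent cone of the `ℓ¹` norm at `x̃`, and coincides with it near `0` when
the nonzero entries of `x̃` are large. The largest correlation of `h` with a unit vector of the cone
is computed by duality: it is the distance from `h` to the polar cone, whose square is up to the
terms of the support a sum of squared soft thresholdings. It concentrates at `√(α_w n)` because the
pair of equations for `α_w` and `t` says precisely that `√2 t` is the optimal threshold.

At norm `‖w‖₂ = ρ` the decoupled objective is therefore about
`√n (√α √(ρ² + σ²) - √α_w ρ)`, which has its unique minimum at `ρ = σ √(α_w / (α - α_w))`. Both the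
value of the original minimum and its value on sets of `w` with another norm are pinned down up to
probability `e^{-cn}`, so the minimizer has norm close to this `ρ`. When `x̃` is small, the infimum
over norms below `ρ` is not explicit, but it still concentrates, and convexity along rays makes the
objective larger at norms above `ρ`.
-/

open Filter Set Topology Matrix
open scoped ENNReal NNReal

section Gaussian

variable {μ : ℝ} {v : ℝ≥0}

lemma integrable_gaussianReal_iff (hv : v ≠ 0) {f : ℝ → ℝ} :
    Integrable f (gaussianReal μ v) ↔ Integrable fun x => gaussianPDFReal μ v x * f x := by
  rw [gaussianReal_of_var_ne_zero μ hv, integrable_withDensity_iff_integrable_smul'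
    (measurable_gaussianPDF μ v) (ae_of_all _ fun _ => gaussianPDF_lt_top)]
  simp only [toReal_gaussianPDF, smul_eq_mul]

lemma hasDerivAt_gaussianPDFReal (x : ℝ) :
    HasDerivAt (gaussianPDFReal μ v) (-((x - μ) / v) * gaussianPDFReal μ v x) x := by
  have hexponent : HasDerivAt (fun x : ℝ => -(x - μ) ^ 2 / (2 * v)) (-((x - μ) / v)) x := by
    refine ((((hasDerivAt_id x).sub_const μ).pow 2).neg.div_const (2 * v : ℝ)).congr_deriv ?_
    simp only [id, Nat.cast_ofNat, Nat.add_one_sub_one, pow_one, mul_one]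
    rw [← mul_neg, mul_div_mul_left _ _ two_ne_zero, neg_div]
  refine (hexponent.exp.const_mul (√(2 * Real.pi * v))⁻¹).congr_deriv ?_
  rw [gaussianPDFReal]
  ring

lemma integrable_id_gaussianReal : Integrable (fun x : ℝ => x) (gaussianReal μ v) :=
  memLp_one_iff_integrable.1 (memLp_id_gaussianReal 1)

theorem integral_sub_mul_gaussianReal {f f' : ℝ → ℝ} {C C' : ℝ}
    (hf : ∀ x, HasDerivAt f (f' x) x) (hC : ∀ x, |f x| ≤ C) (hC' : ∀ x, |f' x| ≤ C') :
    ∫ x, (x - μ) * f x ∂(gaussianReal μ v) = v * ∫ x, f' x ∂(gaussianReal μ v) := by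
  rcases eq_or_ne v 0 with rfl | hv
  · simp
  have hv' : (v : ℝ) ≠ 0 := NNReal.coe_ne_zero.2 hv
  have hmeas : Measurable f :=
    (continuous_iff_continuousAt.2 fun x => (hf x).continuousAt).measurable
  have hmeas' : Measurable f' := by
    rw [show f' = deriv f from funext fun x => (hf x).deriv.symm]
    exact measurable_deriv f
  have hinteg : Integrable f (gaussianReal μ v) :=
    .of_bound hmeas.aestronglyMeasurable C (ae_of_all _ hC)
  have hinteg' : Integrable f' (gaussianReal μ v) :=
    .of_bound hmeas'.aestronglyMeasurable C' (ae_of_all _ hC')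
  have hinteg_sub : Integrable (fun x => (x - μ) * f x) (gaussianReal μ v) :=
    (integrable_id_gaussianReal.sub (integrable_const μ)).mul_bdd hmeas.aestronglyMeasurable
      (ae_of_all _ hC)
  rw [integrable_gaussianReal_iff hv] at hinteg hinteg' hinteg_sub
  have hparts := integral_mul_deriv_eq_deriv_mul_of_integrable
    (u := f) (v := gaussianPDFReal μ v) (fun x _ => hf x) (fun x _ => hasDerivAt_gaussianPDFReal x)
    ((hinteg_sub.const_mul (-(v : ℝ)⁻¹)).congr (ae_of_all _ fun x => by
      simp only [Pi.mul_apply]; ring))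
    (hinteg'.congr (ae_of_all _ fun x => mul_comm _ _))
    (hinteg.congr (ae_of_all _ fun x => mul_comm _ _))
  simp only [integral_gaussianReal_eq_integral_smul hv, smul_eq_mul]
  calc ∫ x, gaussianPDFReal μ v x * ((x - μ) * f x)
      = -v * ∫ x, f x * (-((x - μ) / v) * gaussianPDFReal μ v x) := by
        rw [← integral_const_mul]
        exact integral_congr_ae (ae_of_all _ fun x => by field_simp)
    _ = v * ∫ x, gaussianPDFReal μ v x * f' x := by
        rw [hparts, neg_mul_neg]
        simp only [mul_comm]

lemma measurePreserving_update {κ : Type*} [Fintype κ] [DecidableEq κ] {X : κ → Type*}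
    [∀ k, MeasurableSpace (X k)] (ν : ∀ k, Measure (X k)) [∀ k, IsProbabilityMeasure (ν k)]
    (k : κ) :
    MeasurePreserving (fun z : (∀ k, X k) × X k => Function.update z.1 k z.2)
      ((Measure.pi ν).prod (ν k)) (Measure.pi ν) := by
  have hmeas : Measurable fun z : (∀ k, X k) × X k => Function.update z.1 k z.2 :=
    measurable_pi_iff.2 fun j => by
      rcases eq_or_ne j k with rfl | hj
      · simpa using measurable_snd
      · simp only [Function.update_of_ne hj]
        fun_prop
  refine ⟨hmeas, (Measure.pi_eq fun s hs => ?_).symm⟩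
  have hpre : (fun z : (∀ k, X k) × X k => Function.update z.1 k z.2) ⁻¹' univ.pi s
      = univ.pi (Function.update s k univ) ×ˢ s k := by
    ext z
    simp only [mem_preimage, mem_univ_pi, mem_prod, Function.forall_update_iff, mem_univ, true_and,
      Function.forall_update_iff s fun j t => z.1 j ∈ t]
    exact and_comm
  rw [Measure.map_apply hmeas (.univ_pi hs), hpre, Measure.prod_prod, Measure.pi_pi,
    ← Finset.prod_erase_mul _ _ (Finset.mem_univ k),
    ← Finset.prod_erase_mul Finset.univ (fun i => ν i (s i)) (Finset.mem_univ k)]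
  simp only [Function.update_self, measure_univ, mul_one]
  refine congrArg (· * _) (Finset.prod_congr rfl fun j hj => ?_)
  rw [Function.update_of_ne (Finset.ne_of_mem_erase hj)]

/-- The law of a vector of independent standard Gaussian variables indexed by `κ`, on plain
functions rather than on `EuclideanSpace` so that it splits along sums and
products of index types. -/
noncomputable def stdGaussianPi (κ : Type*) [Fintype κ] : Measure (κ → ℝ) :=
  Measure.pi fun _ => gaussianReal 0 1

variable {κ κ' : Type*} [Fintype κ] [Fintype κ']

instance : IsProbabilityMeasure (stdGaussianPi κ) :=
  inferInstanceAs (IsProbabilityMeasure (Measure.pi _))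

lemma integrable_eval_stdGaussianPi (k : κ) : Integrable (fun x => x k) (stdGaussianPi κ) :=
  (measurePreserving_eval (fun _ : κ => gaussianReal 0 1) k).integrable_comp_of_integrable
    integrable_id_gaussianReal

lemma integral_stdGaussianPi_eq_integral_update [DecidableEq κ] (k : κ) {f : (κ → ℝ) → ℝ}
    (hfm : Measurable f) (hf : Integrable f (stdGaussianPi κ)) :
    ∫ x, f x ∂(stdGaussianPi κ) =
      ∫ x, ∫ y, f (Function.update x k y) ∂(gaussianReal 0 1) ∂(stdGaussianPi κ) := by
  have hpres : MeasurePreserving _ ((stdGaussianPi κ).prod (gaussianReal 0 1)) (stdGaussianPi κ) :=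
    measurePreserving_update (fun _ : κ => gaussianReal 0 1) k
  conv_lhs => rw [← hpres.map_eq]
  rw [integral_map_of_stronglyMeasurable hpres.measurable hfm.stronglyMeasurable]
  exact integral_prod _ (hpres.integrable_comp_of_integrable hf)

theorem integral_eval_mul_stdGaussianPi [DecidableEq κ] (k : κ) {f f' : (κ → ℝ) → ℝ} {C C' : ℝ}
    (hfm : Measurable f) (hfm' : Measurable f')
    (hf : ∀ x : κ → ℝ, HasDerivAt (fun y => f (Function.update x k y)) (f' x) (x k))
    (hC : ∀ x, |f x| ≤ C) (hC' : ∀ x, |f' x| ≤ C') :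
    ∫ x, x k * f x ∂(stdGaussianPi κ) = ∫ x, f' x ∂(stdGaussianPi κ) := by
  have hinteg : Integrable (fun x : κ → ℝ => x k * f x) (stdGaussianPi κ) :=
    (integrable_eval_stdGaussianPi k).mul_bdd hfm.aestronglyMeasurable (ae_of_all _ hC)
  have hinteg' : Integrable f' (stdGaussianPi κ) :=
    .of_bound hfm'.aestronglyMeasurable C' (ae_of_all _ hC')
  rw [integral_stdGaussianPi_eq_integral_update k (by fun_prop) hinteg,
    integral_stdGaussianPi_eq_integral_update k hfm' hinteg']
  refine integral_congr_ae (ae_of_all _ fun x => ?_)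
  have := integral_sub_mul_gaussianReal (μ := 0) (v := 1)
    (f := fun y => f (Function.update x k y)) (f' := fun y => f' (Function.update x k y))
    (fun y => by simpa using hf (Function.update x k y)) (fun _ => hC _) (fun _ => hC' _)
  simpa only [Function.update_self, sub_zero, NNReal.coe_one, one_mul] using this

lemma measurePreserving_comp_inl :
    MeasurePreserving (fun (x : κ ⊕ κ' → ℝ) k => x (.inl k)) (stdGaussianPi (κ ⊕ κ'))
      (stdGaussianPi κ) :=
  measurePreserving_fst.comp (measurePreserving_sumPiEquivProdPi fun _ : κ ⊕ κ' => gaussianReal 0 1)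

lemma measurePreserving_comp_inr :
    MeasurePreserving (fun (x : κ ⊕ κ' → ℝ) k => x (.inr k)) (stdGaussianPi (κ ⊕ κ'))
      (stdGaussianPi κ') :=
  measurePreserving_snd.comp (measurePreserving_sumPiEquivProdPi fun _ : κ ⊕ κ' => gaussianReal 0 1)

end Gaussian

section SigmoidPolynomial

variable {ι : Type*}

/-- The point of the cube `[0, 1]^ι` at which polynomials are evaluated to smooth out the indicators
of the events `lam i < z i`; it tends to these indicators as the inverse width `b` grows. -/
noncomputable def sigmoidVec (b : ℝ) (lam z : ι → ℝ) : ι → ℝ :=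
  fun i => Real.sigmoid (b * (z i - lam i))

/-- The polynomial in sigmoids that is the partial derivative in direction `i` of the polynomial in
sigmoids `Q`: since `s' = s (1 - s)` for the sigmoid `s`, such functions are closed under
differentiation. -/
noncomputable def sigmoidDeriv (b : ℝ) (i : ι) (Q : MvPolynomial ι ℝ) : MvPolynomial ι ℝ :=
  MvPolynomial.C b * MvPolynomial.X i * (1 - MvPolynomial.X i) * MvPolynomial.pderiv i Q

lemma exists_abs_eval_le_of_mem_Icc (Q : MvPolynomial ι ℝ) :
    ∃ C : ℝ, ∀ s ∈ Icc (0 : ι → ℝ) 1, |MvPolynomial.eval s Q| ≤ C :=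
  isCompact_Icc.exists_bound_of_continuousOn (MvPolynomial.continuous_eval Q).continuousOn

variable (b : ℝ) (lam : ι → ℝ)

lemma sigmoidVec_mem_Icc (z : ι → ℝ) : sigmoidVec b lam z ∈ Icc (0 : ι → ℝ) 1 :=
  ⟨fun _ => Real.sigmoid_nonneg _, fun _ => Real.sigmoid_le_one _⟩

lemma continuous_eval_sigmoidVec (Q : MvPolynomial ι ℝ) :
    Continuous fun z => MvPolynomial.eval (sigmoidVec b lam z) Q :=
  (MvPolynomial.continuous_eval Q).comp <|
    continuous_pi fun _ => continuous_sigmoid.comp (by fun_prop)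

lemma eval_sigmoidDeriv_add (i : ι) (P Q : MvPolynomial ι ℝ) (s : ι → ℝ) :
    MvPolynomial.eval s (sigmoidDeriv b i (P + Q)) =
      MvPolynomial.eval s (sigmoidDeriv b i P) + MvPolynomial.eval s (sigmoidDeriv b i Q) := by
  simp only [sigmoidDeriv, map_add, mul_add]

lemma eval_sigmoidDeriv_mul_X [DecidableEq ι] (i j : ι) (Q : MvPolynomial ι ℝ) (s : ι → ℝ) :
    MvPolynomial.eval s (sigmoidDeriv b i (Q * MvPolynomial.X j)) =
      MvPolynomial.eval s (sigmoidDeriv b i Q) * s j +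
        if i = j then MvPolynomial.eval s Q * (b * s j * (1 - s j)) else 0 := by
  rcases eq_or_ne i j with rfl | hij
  · simp only [sigmoidDeriv, Derivation.leibniz, MvPolynomial.pderiv_X_self, smul_eq_mul, map_mul,
      map_add, map_sub, map_one, MvPolynomial.eval_C, MvPolynomial.eval_X, if_true]
    ring
  · simp only [sigmoidDeriv, Derivation.leibniz, MvPolynomial.pderiv_X_of_ne hij.symm, smul_eq_mul,
      map_mul, map_add, map_sub, map_one, map_zero, MvPolynomial.eval_C, MvPolynomial.eval_X,
      if_neg hij]
    ring

lemma hasDerivAt_eval_sigmoidVec [Fintype ι] (Q : MvPolynomial ι ℝ) {z : ℝ → ι → ℝ} {z' : ι → ℝ}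
    {τ : ℝ} (hz : HasDerivAt z z' τ) :
    HasDerivAt (fun s => MvPolynomial.eval (sigmoidVec b lam (z s)) Q)
      (∑ i, z' i * MvPolynomial.eval (sigmoidVec b lam (z τ)) (sigmoidDeriv b i Q)) τ := by
  classical
  induction Q using MvPolynomial.induction_on with
  | C a => simpa [sigmoidDeriv] using hasDerivAt_const τ a
  | add P Q hP hQ =>
    simp only [eval_sigmoidDeriv_add, map_add, mul_add, Finset.sum_add_distrib]
    exact hP.add hQ
  | mul_X Q j hQ =>
    have hX : HasDerivAt (fun s => sigmoidVec b lam (z s) j)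
        (b * sigmoidVec b lam (z τ) j * (1 - sigmoidVec b lam (z τ) j) * z' j) τ := by
      refine ((Real.hasDerivAt_sigmoid _).comp τ
        (((hasDerivAt_pi.1 hz j).sub_const (lam j)).const_mul b)).congr_deriv ?_
      simp only [sigmoidVec]
      ring
    simp only [map_mul, MvPolynomial.eval_X, eval_sigmoidDeriv_mul_X, mul_add,
      Finset.sum_add_distrib, mul_ite, mul_zero, Finset.sum_ite_eq', Finset.mem_univ, if_true]
    refine (hQ.mul hX).congr_deriv ?_
    rw [Finset.sum_mul]
    simp only [mul_assoc]
    ring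

end SigmoidPolynomial

section Interpolation

variable {ι κ : Type*} [Fintype κ] (b : ℝ) (lam : ι → ℝ)

lemma continuous_eval_sigmoidVec_mulVec (c : Matrix ι κ ℝ) (Q : MvPolynomial ι ℝ) :
    Continuous fun x => MvPolynomial.eval (sigmoidVec b lam (c *ᵥ x)) Q :=
  (continuous_eval_sigmoidVec b lam Q).comp (by fun_prop)

lemma integrable_eval_sigmoidVec_mulVec (c : Matrix ι κ ℝ) (Q : MvPolynomial ι ℝ) :
    Integrable (fun x => MvPolynomial.eval (sigmoidVec b lam (c *ᵥ x)) Q) (stdGaussianPi κ) := by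
  obtain ⟨C, hC⟩ := exists_abs_eval_le_of_mem_Icc Q
  exact .of_bound (continuous_eval_sigmoidVec_mulVec b lam c Q).aestronglyMeasurable C
    (ae_of_all _ fun _ => hC _ (sigmoidVec_mem_Icc b lam _))

lemma integrable_mul_eval_sigmoidVec_mulVec (c : Matrix ι κ ℝ) (Q : MvPolynomial ι ℝ)
    {f : (κ → ℝ) → ℝ} (hf : Integrable f (stdGaussianPi κ)) :
    Integrable (fun x => f x * MvPolynomial.eval (sigmoidVec b lam (c *ᵥ x)) Q)
      (stdGaussianPi κ) := by
  obtain ⟨C, hC⟩ := exists_abs_eval_le_of_mem_Icc Q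
  exact hf.mul_bdd (continuous_eval_sigmoidVec_mulVec b lam c Q).aestronglyMeasurable
    (ae_of_all _ fun _ => hC _ (sigmoidVec_mem_Icc b lam _))

lemma integrable_mulVec_stdGaussianPi (c : Matrix ι κ ℝ) (i : ι) :
    Integrable (fun x => (c *ᵥ x) i) (stdGaussianPi κ) :=
  integrable_finsetSum _ fun k _ => (integrable_eval_stdGaussianPi k).const_mul (c i k)

lemma abs_mulVec_rotation_le (a a' : Matrix ι κ ℝ) (θ : ℝ) (x : κ → ℝ) (i : ι) :
    |((-Real.sin θ • a + Real.cos θ • a') *ᵥ x) i| ≤ |(a *ᵥ x) i| + |(a' *ᵥ x) i| := by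
  simp only [add_mulVec, smul_mulVec, Pi.add_apply, Pi.smul_apply, smul_eq_mul]
  refine (abs_add_le _ _).trans (add_le_add ?_ ?_) <;> rw [abs_mul]
  · exact mul_le_of_le_one_left (abs_nonneg _) (by simpa using Real.abs_sin_le_one θ)
  · exact mul_le_of_le_one_left (abs_nonneg _) (Real.abs_cos_le_one θ)

lemma rotation_mul_transpose {a a' : Matrix ι κ ℝ} (horth : a * a'ᵀ = 0) (θ : ℝ) :
    (-Real.sin θ • a + Real.cos θ • a') * (Real.cos θ • a + Real.sin θ • a')ᵀ =
      -((Real.sin θ * Real.cos θ) • (a * aᵀ - a' * a'ᵀ)) := by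
  have horth' : a' * aᵀ = 0 := by simpa using congrArg transpose horth
  simp only [transpose_add, transpose_smul, Matrix.add_mul, Matrix.mul_add, Matrix.smul_mul,
    Matrix.mul_smul, horth, horth', smul_zero, add_zero, zero_add, smul_smul]
  module

lemma hasDerivAt_mulVec_rotation [Finite ι] (a a' : Matrix ι κ ℝ) (θ : ℝ) (x : κ → ℝ) :
    HasDerivAt (fun θ => (Real.cos θ • a + Real.sin θ • a') *ᵥ x)
      ((-Real.sin θ • a + Real.cos θ • a') *ᵥ x) θ := by
  cases nonempty_fintype ι
  simp only [add_mulVec, smul_mulVec]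
  exact ((Real.hasDerivAt_cos θ).smul_const _).add ((Real.hasDerivAt_sin θ).smul_const _)

variable [Fintype ι]

lemma integral_eval_mul_eval_sigmoidVec (Q : MvPolynomial ι ℝ) (c : Matrix ι κ ℝ) (k : κ) :
    ∫ x, x k * MvPolynomial.eval (sigmoidVec b lam (c *ᵥ x)) Q ∂(stdGaussianPi κ) =
      ∑ i, c i k * ∫ x, MvPolynomial.eval (sigmoidVec b lam (c *ᵥ x)) (sigmoidDeriv b i Q)
        ∂(stdGaussianPi κ) := by
  classical
  choose C hC using exists_abs_eval_le_of_mem_Icc (ι := ι)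
  have hderiv : ∀ x : κ → ℝ, HasDerivAt (fun y => c *ᵥ Function.update x k y) (c.col k) (x k) :=
    fun x => ((Matrix.mulVecLin c).toContinuousLinearMap.hasFDerivAt.comp_hasDerivAt (x k)
      (hasDerivAt_update x k (x k))).congr_deriv (by simp)
  rw [integral_eval_mul_stdGaussianPi k
      (f' := fun x => ∑ i, c i k *
        MvPolynomial.eval (sigmoidVec b lam (c *ᵥ x)) (sigmoidDeriv b i Q))
      (C := C Q) (C' := ∑ i, |c i k| * C (sigmoidDeriv b i Q))
      (continuous_eval_sigmoidVec_mulVec b lam c Q).measurable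
      (continuous_finsetSum _ fun i _ =>
        (continuous_eval_sigmoidVec_mulVec b lam c _).const_mul (c i k)).measurable
      (fun x => by simpa using hasDerivAt_eval_sigmoidVec b lam Q (hderiv x))
      (fun x => hC Q _ (sigmoidVec_mem_Icc b lam _)) fun x => ?_,
    integral_finsetSum _ fun i _ => (integrable_eval_sigmoidVec_mulVec b lam c _).const_mul (c i k)]
  · simp only [integral_const_mul]
  · refine (Finset.abs_sum_le_sum_abs _ _).trans (Finset.sum_le_sum fun i _ => ?_)
    rw [abs_mul]
    exact mul_le_mul_of_nonneg_left (hC _ _ (sigmoidVec_mem_Icc b lam _)) (abs_nonneg _)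

lemma integral_mulVec_mul_eval_sigmoidVec (Q : MvPolynomial ι ℝ) (c c' : Matrix ι κ ℝ) (i : ι) :
    ∫ x, (c' *ᵥ x) i * MvPolynomial.eval (sigmoidVec b lam (c *ᵥ x)) Q ∂(stdGaussianPi κ) =
      ∑ j, (c' * cᵀ) i j * ∫ x, MvPolynomial.eval (sigmoidVec b lam (c *ᵥ x)) (sigmoidDeriv b j Q)
        ∂(stdGaussianPi κ) := by
  simp only [mulVec, dotProduct, Finset.sum_mul, mul_assoc]
  rw [integral_finsetSum _ fun k _ => (integrable_mul_eval_sigmoidVec_mulVec b lam c Q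
    (integrable_eval_stdGaussianPi k)).const_mul (c' i k)]
  simp only [integral_const_mul]
  refine (Finset.sum_congr rfl fun k _ => congrArg _
    (integral_eval_mul_eval_sigmoidVec b lam Q c k)).trans ?_
  simp only [Finset.mul_sum, Matrix.mul_apply, transpose_apply, Finset.sum_mul, mul_assoc]
  exact Finset.sum_comm

lemma hasDerivAt_integral_eval_sigmoidVec_rotation (Q : MvPolynomial ι ℝ) (a a' : Matrix ι κ ℝ)
    (θ : ℝ) :
    HasDerivAt
      (fun θ => ∫ x, MvPolynomial.eval
        (sigmoidVec b lam ((Real.cos θ • a + Real.sin θ • a') *ᵥ x)) Q ∂(stdGaussianPi κ))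
      (∫ x, ∑ i, ((-Real.sin θ • a + Real.cos θ • a') *ᵥ x) i * MvPolynomial.eval
        (sigmoidVec b lam ((Real.cos θ • a + Real.sin θ • a') *ᵥ x)) (sigmoidDeriv b i Q)
        ∂(stdGaussianPi κ)) θ := by
  choose C hC using exists_abs_eval_le_of_mem_Icc (ι := ι)
  let bound : (κ → ℝ) → ℝ := fun x =>
    ∑ i, (|(a *ᵥ x) i| + |(a' *ᵥ x) i|) * C (sigmoidDeriv b i Q)
  have hbound : Integrable bound (stdGaussianPi κ) :=
    integrable_finsetSum _ fun i _ => ((integrable_mulVec_stdGaussianPi a i).abs.add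
      (integrable_mulVec_stdGaussianPi a' i).abs).mul_const _
  have hderiv_le : ∀ (x : κ → ℝ) (θ : ℝ),
      ‖∑ i, ((-Real.sin θ • a + Real.cos θ • a') *ᵥ x) i * MvPolynomial.eval
        (sigmoidVec b lam ((Real.cos θ • a + Real.sin θ • a') *ᵥ x)) (sigmoidDeriv b i Q)‖ ≤
          bound x := fun x θ => by
    refine (norm_sum_le _ _).trans (Finset.sum_le_sum fun i _ => ?_)
    rw [norm_mul]
    exact mul_le_mul (abs_mulVec_rotation_le a a' θ x i)
      (hC _ _ (sigmoidVec_mem_Icc b lam _)) (norm_nonneg _) (by positivity)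
  have hvalue_deriv : ∀ (x : κ → ℝ) (θ : ℝ), HasDerivAt
      (fun θ => MvPolynomial.eval
        (sigmoidVec b lam ((Real.cos θ • a + Real.sin θ • a') *ᵥ x)) Q)
      (∑ i, ((-Real.sin θ • a + Real.cos θ • a') *ᵥ x) i * MvPolynomial.eval
        (sigmoidVec b lam ((Real.cos θ • a + Real.sin θ • a') *ᵥ x)) (sigmoidDeriv b i Q)) θ :=
    fun x θ => hasDerivAt_eval_sigmoidVec b lam Q (hasDerivAt_mulVec_rotation a a' θ x)
  exact (hasDerivAt_integral_of_dominated_loc_of_deriv_le univ_mem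
    (.of_forall fun θ => (integrable_eval_sigmoidVec_mulVec b lam _ Q).1)
    (integrable_eval_sigmoidVec_mulVec b lam _ Q)
    (integrable_finsetSum _ fun i _ => integrable_mul_eval_sigmoidVec_mulVec b lam _ _
      (integrable_mulVec_stdGaussianPi _ i)).1
    (ae_of_all _ fun x θ _ => hderiv_le x θ) hbound
    (ae_of_all _ fun x θ _ => hvalue_deriv x θ)).2

end Interpolation

/-- Rotating from `a` to `a'` changes the expectation monotonically because integration by parts
turns its derivative into the pairing of the covariance gap with the Hessian. -/
theorem integral_eval_sigmoidVec_le_of_covariance {ι κ : Type*} [Finite ι] [Fintype κ] (b : ℝ)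
    (lam : ι → ℝ) (Q : MvPolynomial ι ℝ) {a a' : Matrix ι κ ℝ}
    (horth : a * a'ᵀ = 0)
    (hsign : ∀ i j z, 0 ≤ (a * aᵀ - a' * a'ᵀ) i j *
      MvPolynomial.eval (sigmoidVec b lam z) (sigmoidDeriv b j (sigmoidDeriv b i Q))) :
    ∫ x, MvPolynomial.eval (sigmoidVec b lam (a' *ᵥ x)) Q ∂(stdGaussianPi κ) ≤
      ∫ x, MvPolynomial.eval (sigmoidVec b lam (a *ᵥ x)) Q ∂(stdGaussianPi κ) := by
  cases nonempty_fintype ι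
  set φ : ℝ → ℝ := fun θ => ∫ x, MvPolynomial.eval
    (sigmoidVec b lam ((Real.cos θ • a + Real.sin θ • a') *ᵥ x)) Q ∂(stdGaussianPi κ) with hφ
  have hderiv := hasDerivAt_integral_eval_sigmoidVec_rotation b lam Q a a'
  have hanti : AntitoneOn φ (Icc 0 (Real.pi / 2)) := by
    refine antitoneOn_of_deriv_nonpos (convex_Icc _ _)
      (fun θ _ => (hderiv θ).continuousAt.continuousWithinAt)
      (fun θ _ => (hderiv θ).differentiableAt.differentiableWithinAt) fun θ hθ => ?_
    rw [interior_Icc] at hθ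
    have hsin : 0 ≤ Real.sin θ :=
      Real.sin_nonneg_of_nonneg_of_le_pi hθ.1.le (by linarith [hθ.2, Real.pi_pos])
    have hcos : 0 ≤ Real.cos θ :=
      Real.cos_nonneg_of_neg_pi_div_two_le_of_le (by linarith [hθ.1, Real.pi_pos]) hθ.2.le
    rw [(hderiv θ).deriv, integral_finsetSum _ fun i _ =>
      integrable_mul_eval_sigmoidVec_mulVec b lam _ _ (integrable_mulVec_stdGaussianPi _ i)]
    refine Finset.sum_nonpos fun i _ => ?_
    rw [integral_mulVec_mul_eval_sigmoidVec]
    refine Finset.sum_nonpos fun j _ => ?_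
    rw [rotation_mul_transpose horth, Matrix.neg_apply, Matrix.smul_apply, smul_eq_mul, neg_mul,
      mul_assoc, ← integral_const_mul, neg_nonpos]
    exact mul_nonneg (mul_nonneg hsin hcos) (integral_nonneg fun x => hsign i j _)
  have := hanti (left_mem_Icc.2 (by positivity)) (right_mem_Icc.2 (by positivity))
    (by positivity : 0 ≤ Real.pi / 2)
  simpa [hφ] using this

section GordonPolynomial

variable {I J : Type*} [Fintype J]

/-- The factor `1 - ∏ j, (1 - X (i, j))` of `gordonPoly`: at the indicators of events `E i j` it is
the indicator of `⋃ j, E i j`. -/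
noncomputable def gordonRowPoly (J : Type*) [Fintype J] (i : I) : MvPolynomial (I × J) ℝ :=
  1 - ∏ j : J, (1 - MvPolynomial.X (i, j))

/-- The polynomial that, at the indicators of events `E i j`, is the indicator of
`⋂ i, ⋃ j, E i j`. -/
noncomputable def gordonPoly (I J : Type*) [Fintype I] [Fintype J] : MvPolynomial (I × J) ℝ :=
  ∏ i : I, gordonRowPoly J i

lemma pderiv_prod_eq_zero {ι τ : Type*} (k : ι) {S : Finset τ} {f : τ → MvPolynomial ι ℝ}
    (h : ∀ i ∈ S, MvPolynomial.pderiv k (f i) = 0) : MvPolynomial.pderiv k (∏ i ∈ S, f i) = 0 := by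
  classical
  induction S using Finset.induction_on with
  | empty => simp
  | insert a S ha ih =>
    rw [Finset.prod_insert ha, Derivation.leibniz, h a (Finset.mem_insert_self a S),
      ih fun i hi => h i (Finset.mem_insert_of_mem hi), smul_zero, smul_zero, add_zero]

lemma pderiv_prod_eq_single {ι τ : Type*} [DecidableEq τ] (k : ι) {S : Finset τ}
    {f : τ → MvPolynomial ι ℝ} {i : τ} (hi : i ∈ S)
    (h : ∀ j ∈ S, j ≠ i → MvPolynomial.pderiv k (f j) = 0) :
    MvPolynomial.pderiv k (∏ i ∈ S, f i) =
      (∏ j ∈ S.erase i, f j) * MvPolynomial.pderiv k (f i) := by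
  rw [← Finset.mul_prod_erase _ _ hi, Derivation.leibniz, pderiv_prod_eq_zero k fun j hj =>
    h j (Finset.mem_of_mem_erase hj) (Finset.ne_of_mem_erase hj)]
  rw [smul_zero, zero_add, smul_eq_mul]

lemma pderiv_one_sub_X {ι : Type*} {k l : ι} (h : l ≠ k) :
    MvPolynomial.pderiv k (1 - MvPolynomial.X l : MvPolynomial ι ℝ) = 0 := by
  rw [map_sub, Derivation.map_one_eq_zero, MvPolynomial.pderiv_X_of_ne h, sub_zero]

lemma pderiv_gordonRowPoly_of_ne {i i' : I} (j : J) (h : i' ≠ i) :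
    MvPolynomial.pderiv (i, j) (gordonRowPoly J i') = 0 := by
  rw [gordonRowPoly, map_sub, Derivation.map_one_eq_zero, zero_sub, neg_eq_zero]
  exact pderiv_prod_eq_zero _ fun j' _ => pderiv_one_sub_X fun hij => h (congrArg Prod.fst hij)

lemma pderiv_gordonRowPoly_self [DecidableEq J] (i : I) (j : J) :
    MvPolynomial.pderiv (i, j) (gordonRowPoly J i) =
      ∏ j' ∈ Finset.univ.erase j, (1 - MvPolynomial.X (i, j')) := by
  classical
  rw [gordonRowPoly, map_sub, pderiv_prod_eq_single (i, j) (Finset.mem_univ j) fun j' _ hj =>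
    pderiv_one_sub_X fun hij => hj (congrArg Prod.snd hij)]
  simp only [Derivation.map_one_eq_zero, map_sub, MvPolynomial.pderiv_X_self, zero_sub, mul_neg,
    mul_one, neg_neg]

lemma eval_gordonRowPoly (i : I) (s : I × J → ℝ) :
    MvPolynomial.eval s (gordonRowPoly J i) = 1 - ∏ j, (1 - s (i, j)) := by
  simp only [gordonRowPoly, map_sub, map_one, map_prod, MvPolynomial.eval_X]

variable {s : I × J → ℝ}

lemma eval_gordonRowPoly_mem_Icc (i : I) (hs : s ∈ Icc 0 1) :
    MvPolynomial.eval s (gordonRowPoly J i) ∈ Icc (0 : ℝ) 1 := by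
  rw [eval_gordonRowPoly]
  exact ⟨sub_nonneg.2 (Finset.prod_le_one (fun j _ => sub_nonneg.2 (hs.2 _)) fun j _ =>
    sub_le_self _ (hs.1 _)), sub_le_self _ (Finset.prod_nonneg fun j _ => sub_nonneg.2 (hs.2 _))⟩

lemma pderiv_prod_gordonRowPoly [DecidableEq I] [DecidableEq J] {S : Finset I} {i : I} (hi : i ∈ S)
    (j : J) :
    MvPolynomial.pderiv (i, j) (∏ i ∈ S, gordonRowPoly J i) =
      (∏ i' ∈ S.erase i, gordonRowPoly J i') *
        ∏ j' ∈ Finset.univ.erase j, (1 - MvPolynomial.X (i, j')) := by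
  rw [pderiv_prod_eq_single (i, j) hi fun i' _ hi' => pderiv_gordonRowPoly_of_ne j hi',
    pderiv_gordonRowPoly_self]

variable [Fintype I]

lemma eval_gordonPoly_mem_Icc (hs : s ∈ Icc 0 1) :
    MvPolynomial.eval s (gordonPoly I J) ∈ Icc (0 : ℝ) 1 := by
  rw [gordonPoly, map_prod]
  exact ⟨Finset.prod_nonneg fun i _ => (eval_gordonRowPoly_mem_Icc i hs).1,
    Finset.prod_le_one (fun i _ => (eval_gordonRowPoly_mem_Icc i hs).1)
      fun i _ => (eval_gordonRowPoly_mem_Icc i hs).2⟩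

lemma eval_gordonPoly_eq_zero {i : I} (hi : ∀ j, s (i, j) = 0) :
    MvPolynomial.eval s (gordonPoly I J) = 0 := by
  rw [gordonPoly, map_prod]
  refine Finset.prod_eq_zero (Finset.mem_univ i) ?_
  simp only [eval_gordonRowPoly, hi, sub_zero, Finset.prod_const_one, sub_self]

lemma eval_gordonPoly_eq_one (hs : ∀ i, ∃ j, s (i, j) = 1) :
    MvPolynomial.eval s (gordonPoly I J) = 1 := by
  rw [gordonPoly, map_prod]
  refine Finset.prod_eq_one fun i _ => ?_
  obtain ⟨j, hj⟩ := hs i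
  rw [eval_gordonRowPoly, Finset.prod_eq_zero (Finset.mem_univ j) (sub_eq_zero.2 hj.symm), sub_zero]

lemma eval_sigmoidDeriv_sigmoidDeriv_gordonPoly_nonneg {b : ℝ} (hb : 0 ≤ b) {i i' : I} (j j' : J)
    (hii : i' ≠ i) (hs : s ∈ Icc 0 1) :
    0 ≤ MvPolynomial.eval s (sigmoidDeriv b (i', j') (sigmoidDeriv b (i, j) (gordonPoly I J))) := by
  classical
  have hne : ∀ k, (i, k) ≠ (i', j') := fun k hk => hii (congrArg Prod.fst hk).symm
  have hrow : MvPolynomial.pderiv (i', j')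
      (∏ j' ∈ Finset.univ.erase j, (1 - MvPolynomial.X (i, j')) : MvPolynomial (I × J) ℝ) = 0 :=
    pderiv_prod_eq_zero _ fun k _ => pderiv_one_sub_X (hne k)
  have hi' : i' ∈ Finset.univ.erase i := Finset.mem_erase.2 ⟨hii, Finset.mem_univ i'⟩
  simp only [sigmoidDeriv, gordonPoly, pderiv_prod_gordonRowPoly (Finset.mem_univ i),
    Derivation.leibniz, pderiv_prod_gordonRowPoly hi', hrow, MvPolynomial.pderiv_X_of_ne (hne j),
    MvPolynomial.pderiv_C, pderiv_one_sub_X (hne j), smul_eq_mul, mul_zero, add_zero, zero_add,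
    map_mul, map_prod, map_sub, map_one, MvPolynomial.eval_X, MvPolynomial.eval_C]
  have hcompl : ∀ k, 0 ≤ 1 - s k := fun k => sub_nonneg.2 (hs.2 k)
  have hrows : 0 ≤ ∏ x ∈ (Finset.univ.erase i).erase i', MvPolynomial.eval s (gordonRowPoly J x) :=
    Finset.prod_nonneg fun i _ => (eval_gordonRowPoly_mem_Icc i hs).1
  have hcols : ∀ i j, 0 ≤ ∏ x ∈ Finset.univ.erase j, (1 - s (i, x)) :=
    fun i j => Finset.prod_nonneg fun _ _ => hcompl _
  exact mul_nonneg (mul_nonneg (mul_nonneg hb (hs.1 _)) (hcompl _))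
    (mul_nonneg (mul_nonneg (mul_nonneg hb (hs.1 _)) (hcompl _))
      (mul_nonneg (hcols _ _) (mul_nonneg hrows (hcols _ _))))

end GordonPolynomial

section HalfStep

variable {ι κ : Type*} [Fintype κ] (lam : ι → ℝ)

/-- The pointwise limit of `sigmoidVec b lam z` as `b → ∞`: the indicators of `lam i < z i`, with
value `1 / 2` in case of equality. -/
noncomputable def halfStepVec (lam z : ι → ℝ) : ι → ℝ := fun i => (1 + (z i - lam i).sign) / 2

lemma tendsto_sigmoidVec (z : ι → ℝ) :
    Tendsto (fun n : ℕ => sigmoidVec n lam z) atTop (𝓝 (halfStepVec lam z)) := by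
  refine tendsto_pi_nhds.2 fun i => ?_
  simp only [sigmoidVec, halfStepVec]
  rcases lt_trichotomy (z i - lam i) 0 with hneg | hzero | hpos
  · rw [Real.sign_of_neg hneg, add_neg_cancel, zero_div]
    exact Real.tendsto_sigmoid_atBot.comp
      (tendsto_natCast_atTop_atTop.atTop_mul_const_of_neg hneg)
  · simp [hzero, Real.sigmoid_zero]
  · rw [Real.sign_of_pos hpos, one_add_one_eq_two, div_self two_ne_zero]
    exact Real.tendsto_sigmoid_atTop.comp (tendsto_natCast_atTop_atTop.atTop_mul_const hpos)

lemma halfStepVec_mem_Icc (z : ι → ℝ) : halfStepVec lam z ∈ Icc (0 : ι → ℝ) 1 :=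
  isClosed_Icc.mem_of_tendsto (tendsto_sigmoidVec lam z)
    (.of_forall fun n => sigmoidVec_mem_Icc n lam z)

lemma tendsto_eval_sigmoidVec (Q : MvPolynomial ι ℝ) (z : ι → ℝ) :
    Tendsto (fun n : ℕ => MvPolynomial.eval (sigmoidVec n lam z) Q) atTop
      (𝓝 (MvPolynomial.eval (halfStepVec lam z) Q)) :=
  ((MvPolynomial.continuous_eval Q).tendsto _).comp (tendsto_sigmoidVec lam z)

lemma integrable_eval_halfStepVec_mulVec (c : Matrix ι κ ℝ) (Q : MvPolynomial ι ℝ) :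
    Integrable (fun x => MvPolynomial.eval (halfStepVec lam (c *ᵥ x)) Q) (stdGaussianPi κ) := by
  obtain ⟨C, hC⟩ := exists_abs_eval_le_of_mem_Icc Q
  exact .of_bound (aestronglyMeasurable_of_tendsto_ae atTop
      (fun n : ℕ => (continuous_eval_sigmoidVec_mulVec n lam c Q).aestronglyMeasurable)
      (ae_of_all _ fun x => tendsto_eval_sigmoidVec lam Q (c *ᵥ x))) C
    (ae_of_all _ fun _ => hC _ (halfStepVec_mem_Icc lam _))

lemma tendsto_integral_eval_sigmoidVec_mulVec (c : Matrix ι κ ℝ) (Q : MvPolynomial ι ℝ) :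
    Tendsto (fun n : ℕ => ∫ x, MvPolynomial.eval (sigmoidVec n lam (c *ᵥ x)) Q ∂(stdGaussianPi κ))
      atTop (𝓝 (∫ x, MvPolynomial.eval (halfStepVec lam (c *ᵥ x)) Q ∂(stdGaussianPi κ))) := by
  obtain ⟨C, hC⟩ := exists_abs_eval_le_of_mem_Icc Q
  exact tendsto_integral_of_dominated_convergence (fun _ => C)
    (fun n => (continuous_eval_sigmoidVec_mulVec n lam c Q).aestronglyMeasurable)
    (integrable_const C) (fun n => ae_of_all _ fun _ => hC _ (sigmoidVec_mem_Icc _ lam _))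
    (ae_of_all _ fun x => tendsto_eval_sigmoidVec lam Q (c *ᵥ x))

end HalfStep

section Gordon

variable {I J κ κ' : Type*} [Fintype κ] [Fintype κ']

lemma measurableSet_exists_forall_mulVec_lt [Countable I] [Countable J] (c : Matrix (I × J) κ ℝ)
    (lam : I × J → ℝ) : MeasurableSet {x | ∃ i, ∀ j, (c *ᵥ x) (i, j) < lam (i, j)} := by
  simp only [ofPred_exists, ofPred_forall]
  exact .iUnion fun i => .iInter fun j =>
    measurableSet_lt (by unfold mulVec dotProduct; fun_prop) measurable_const

lemma measurableSet_exists_forall_mulVec_le [Countable I] [Countable J] (c : Matrix (I × J) κ ℝ)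
    (lam : I × J → ℝ) : MeasurableSet {x | ∃ i, ∀ j, (c *ᵥ x) (i, j) ≤ lam (i, j)} := by
  simp only [ofPred_exists, ofPred_forall]
  exact .iUnion fun i => .iInter fun j =>
    measurableSet_le (by unfold mulVec dotProduct; fun_prop) measurable_const

section Finite

variable [Fintype I] [Fintype J] (c : Matrix (I × J) κ ℝ) (lam : I × J → ℝ)

lemma integral_eval_gordonPoly_le :
    ∫ x, MvPolynomial.eval (halfStepVec lam (c *ᵥ x)) (gordonPoly I J) ∂(stdGaussianPi κ) ≤
      1 - (stdGaussianPi κ).real {x | ∃ i, ∀ j, (c *ᵥ x) (i, j) < lam (i, j)} := by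
  set E : Set (κ → ℝ) := {x | ∃ i, ∀ j, (c *ᵥ x) (i, j) < lam (i, j)}
  have hE : MeasurableSet E := measurableSet_exists_forall_mulVec_lt c lam
  rw [← probReal_compl_eq_one_sub hE, ← integral_indicator_one hE.compl]
  refine integral_mono (integrable_eval_halfStepVec_mulVec lam c _)
    ((integrable_const 1).indicator hE.compl) fun x => ?_
  by_cases hx : x ∈ E
  · rw [indicator_of_notMem (notMem_compl_iff.2 hx)]
    obtain ⟨i, hi⟩ := hx
    refine (eval_gordonPoly_eq_zero (i := i) fun j => ?_).le
    rw [halfStepVec, Real.sign_of_neg (sub_neg.2 (hi j)), add_neg_cancel, zero_div]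
  · rw [indicator_of_mem (mem_compl hx)]
    exact (eval_gordonPoly_mem_Icc (halfStepVec_mem_Icc lam _)).2

lemma le_integral_eval_gordonPoly :
    1 - (stdGaussianPi κ).real {x | ∃ i, ∀ j, (c *ᵥ x) (i, j) ≤ lam (i, j)} ≤
      ∫ x, MvPolynomial.eval (halfStepVec lam (c *ᵥ x)) (gordonPoly I J) ∂(stdGaussianPi κ) := by
  set E : Set (κ → ℝ) := {x | ∃ i, ∀ j, (c *ᵥ x) (i, j) ≤ lam (i, j)}
  have hE : MeasurableSet E := measurableSet_exists_forall_mulVec_le c lam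
  rw [← probReal_compl_eq_one_sub hE, ← integral_indicator_one hE.compl]
  refine integral_mono ((integrable_const 1).indicator hE.compl)
    (integrable_eval_halfStepVec_mulVec lam c _) fun x => ?_
  by_cases hx : x ∈ E
  · rw [indicator_of_notMem (notMem_compl_iff.2 hx)]
    exact (eval_gordonPoly_mem_Icc (halfStepVec_mem_Icc lam _)).1
  · rw [indicator_of_mem (mem_compl hx)]
    simp only [E, mem_ofPred_eq, not_exists, not_forall, not_le] at hx
    refine (eval_gordonPoly_eq_one fun i => (hx i).imp fun j hj => ?_).ge
    rw [halfStepVec, Real.sign_of_pos (sub_pos.2 hj), one_add_one_eq_two, div_self two_ne_zero]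

end Finite

lemma integral_eval_gordonPoly_mono [Fintype I] [Fintype J] (lam : I × J → ℝ)
    {a a' : Matrix (I × J) κ ℝ} (horth : a * a'ᵀ = 0)
    (hin : ∀ i j j', (a * aᵀ) (i, j) (i, j') = (a' * a'ᵀ) (i, j) (i, j'))
    (hout : ∀ i i' j j', (a' * a'ᵀ) (i, j) (i', j') ≤ (a * aᵀ) (i, j) (i', j')) :
    ∫ x, MvPolynomial.eval (halfStepVec lam (a' *ᵥ x)) (gordonPoly I J) ∂(stdGaussianPi κ) ≤
      ∫ x, MvPolynomial.eval (halfStepVec lam (a *ᵥ x)) (gordonPoly I J) ∂(stdGaussianPi κ) := by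
  refine le_of_tendsto_of_tendsto' (tendsto_integral_eval_sigmoidVec_mulVec lam a' _)
    (tendsto_integral_eval_sigmoidVec_mulVec lam a _) fun n =>
      integral_eval_sigmoidVec_le_of_covariance (n : ℝ) lam _ horth ?_
  rintro ⟨i, j⟩ ⟨i', j'⟩ z
  rcases eq_or_ne i' i with rfl | hii
  · rw [Matrix.sub_apply, hin, sub_self, zero_mul]
  · exact mul_nonneg (sub_nonneg.2 (hout i i' j j'))
      (eval_sigmoidDeriv_sigmoidDeriv_gordonPoly_nonneg n.cast_nonneg j j' hii
        (sigmoidVec_mem_Icc _ lam z))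

theorem gordon_comparison_of_finite [Finite I] [Finite J] (lam : I × J → ℝ)
    {a : Matrix (I × J) κ ℝ} {a' : Matrix (I × J) κ' ℝ}
    (hin : ∀ i j j', (a * aᵀ) (i, j) (i, j') = (a' * a'ᵀ) (i, j) (i, j'))
    (hout : ∀ i i' j j', (a' * a'ᵀ) (i, j) (i', j') ≤ (a * aᵀ) (i, j) (i', j')) :
    stdGaussianPi κ {x | ∃ i, ∀ j, (a *ᵥ x) (i, j) < lam (i, j)} ≤
      stdGaussianPi κ' {x | ∃ i, ∀ j, (a' *ᵥ x) (i, j) ≤ lam (i, j)} := by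
  cases nonempty_fintype I
  cases nonempty_fintype J
  set A : Matrix (I × J) (κ ⊕ κ') ℝ := fromCols a 0
  set A' : Matrix (I × J) (κ ⊕ κ') ℝ := fromCols 0 a'
  have hA : A * Aᵀ = a * aᵀ := by simp [A, transpose_fromCols, fromCols_mul_fromRows]
  have hA' : A' * A'ᵀ = a' * a'ᵀ := by simp [A', transpose_fromCols, fromCols_mul_fromRows]
  have horth : A * A'ᵀ = 0 := by simp [A, A', transpose_fromCols, fromCols_mul_fromRows]
  have hcompare := ((le_integral_eval_gordonPoly A' lam).trans (integral_eval_gordonPoly_mono lam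
    horth (by simpa only [hA, hA'] using hin) (by simpa only [hA, hA'] using hout))).trans
      (integral_eval_gordonPoly_le A lam)
  rw [← (measurePreserving_comp_inl (κ' := κ')).measure_preimage
      (measurableSet_exists_forall_mulVec_lt a lam).nullMeasurableSet,
    ← (measurePreserving_comp_inr (κ := κ)).measure_preimage
      (measurableSet_exists_forall_mulVec_le a' lam).nullMeasurableSet]
  refine (ENNReal.toReal_le_toReal (measure_ne_top _ _) (measure_ne_top _ _)).1 ?_
  simpa [A, A', fromCols_mulVec, Measure.real, Function.comp_def] using
    sub_le_sub_iff_left 1 |>.1 hcompare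

theorem gordon_comparison_of_finite_left [Finite I] [Countable J] (lam : I × J → ℝ)
    {a : Matrix (I × J) κ ℝ} {a' : Matrix (I × J) κ' ℝ}
    (hin : ∀ i j j', (a * aᵀ) (i, j) (i, j') = (a' * a'ᵀ) (i, j) (i, j'))
    (hout : ∀ i i' j j', (a' * a'ᵀ) (i, j) (i', j') ≤ (a * aᵀ) (i, j) (i', j')) :
    stdGaussianPi κ {x | ∃ i, ∀ j, (a *ᵥ x) (i, j) < lam (i, j)} ≤
      stdGaussianPi κ' {x | ∃ i, ∀ j, (a' *ᵥ x) (i, j) ≤ lam (i, j)} := by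
  classical
  cases nonempty_fintype I
  set E : Finset J → Set (κ' → ℝ) := fun T => {x | ∃ i, ∀ j : T, (a' *ᵥ x) (i, j) ≤ lam (i, j)}
  have hanti : Antitone E := fun T T' hT x ⟨i, hi⟩ => ⟨i, fun j => hi ⟨j, hT j.2⟩⟩
  have hE : ⋂ T, E T ⊆ {x | ∃ i, ∀ j, (a' *ᵥ x) (i, j) ≤ lam (i, j)} := by
    intro x hx
    by_contra hcon
    have hviolated : ∀ i, ∃ j, lam (i, j) < (a' *ᵥ x) (i, j) := by
      simpa only [mem_ofPred_eq, not_exists, not_forall, not_le] using hcon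
    choose f hf using hviolated
    obtain ⟨i, hi⟩ := mem_iInter.1 hx (Finset.univ.image f)
    exact (hf i).not_ge (hi ⟨f i, Finset.mem_image_of_mem f (Finset.mem_univ i)⟩)
  refine le_trans ?_ (measure_mono hE)
  rw [Directed.measure_iInter
    (fun T => (measurableSet_exists_forall_mulVec_le
      (a'.submatrix (Prod.map id (Subtype.val : T → J)) id)
      (lam ∘ Prod.map id Subtype.val)).nullMeasurableSet)
    hanti.directed_ge ⟨∅, measure_ne_top _ _⟩]
  refine le_iInf fun T => le_trans (measure_mono ?_)
    (gordon_comparison_of_finite (J := T) (lam ∘ Prod.map id Subtype.val)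
      (a := a.submatrix (Prod.map id Subtype.val) id)
      (a' := a'.submatrix (Prod.map id Subtype.val) id)
      (fun i j j' => hin i j j') fun i i' j j' => hout i i' j j')
  rintro x ⟨i, hi⟩
  exact ⟨i, fun j => hi j⟩

theorem gordon_comparison [Countable I] [Countable J] (lam : I × J → ℝ)
    {a : Matrix (I × J) κ ℝ} {a' : Matrix (I × J) κ' ℝ}
    (hin : ∀ i j j', (a * aᵀ) (i, j) (i, j') = (a' * a'ᵀ) (i, j) (i, j'))
    (hout : ∀ i i' j j', (a' * a'ᵀ) (i, j) (i', j') ≤ (a * aᵀ) (i, j) (i', j')) :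
    stdGaussianPi κ {x | ∃ i, ∀ j, (a *ᵥ x) (i, j) < lam (i, j)} ≤
      stdGaussianPi κ' {x | ∃ i, ∀ j, (a' *ᵥ x) (i, j) ≤ lam (i, j)} := by
  set E : Finset I → Set (κ → ℝ) := fun S => {x | ∃ i : S, ∀ j, (a *ᵥ x) (i, j) < lam (i, j)}
  have hmono : Monotone E := fun S S' hS x ⟨i, hi⟩ => ⟨⟨i, hS i.2⟩, hi⟩
  have hE : {x | ∃ i, ∀ j, (a *ᵥ x) (i, j) < lam (i, j)} ⊆ ⋃ S, E S := fun x ⟨i, hi⟩ =>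
    mem_iUnion.2 ⟨{i}, (⟨⟨i, Finset.mem_singleton_self i⟩, hi⟩ : x ∈ E {i})⟩
  refine (measure_mono hE).trans ?_
  rw [Directed.measure_iUnion hmono.directed_le]
  exact iSup_le fun S => (gordon_comparison_of_finite_left (I := S)
    (lam ∘ Prod.map Subtype.val id) (a := a.submatrix (Prod.map Subtype.val id) id)
    (a' := a'.submatrix (Prod.map Subtype.val id) id)
    (fun i j j' => hin i j j') fun i i' j j' => hout i i' j j').trans
      (measure_mono fun _ ⟨i, hi⟩ => ⟨i.1, hi⟩)

end Gordon

/-- The Euclidean norm of a real vector with arbitrary finite index type, as a function on the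
plain Pi type (whose built-in norm is the sup norm). -/
noncomputable def euclNorm {ι : Type*} [Fintype ι] (x : ι → ℝ) : ℝ := ‖WithLp.toLp 2 x‖

section EuclNorm

variable {ι : Type*} [Fintype ι]

lemma euclNorm_nonneg (x : ι → ℝ) : 0 ≤ euclNorm x := norm_nonneg _

lemma euclNorm_sq (x : ι → ℝ) : euclNorm x ^ 2 = ∑ i, x i ^ 2 :=
  EuclideanSpace.real_norm_sq_eq _

lemma inner_toLp_eq_dotProduct (x y : ι → ℝ) :
    inner ℝ (WithLp.toLp 2 x) (WithLp.toLp 2 y) = x ⬝ᵥ y := by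
  rw [EuclideanSpace.inner_toLp_toLp, star_trivial, dotProduct_comm]

lemma dotProduct_self_eq_euclNorm_mul_self (x : ι → ℝ) : x ⬝ᵥ x = euclNorm x * euclNorm x := by
  rw [← inner_toLp_eq_dotProduct, real_inner_self_eq_norm_mul_norm, euclNorm]

lemma dotProduct_le_euclNorm_mul_euclNorm (x y : ι → ℝ) : x ⬝ᵥ y ≤ euclNorm x * euclNorm y :=
  inner_toLp_eq_dotProduct x y ▸ real_inner_le_norm _ _

lemma euclNorm_neg (x : ι → ℝ) : euclNorm (-x) = euclNorm x := by
  rw [euclNorm, WithLp.toLp_neg, norm_neg, euclNorm]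

lemma euclNorm_smul (c : ℝ) (x : ι → ℝ) : euclNorm (c • x) = |c| * euclNorm x := by
  rw [euclNorm, WithLp.toLp_smul, norm_smul, Real.norm_eq_abs, euclNorm]

lemma continuous_euclNorm : Continuous (euclNorm : (ι → ℝ) → ℝ) := by
  unfold euclNorm; fun_prop

instance nonempty_euclNorm_eq_one [Nonempty ι] : Nonempty {u : ι → ℝ // euclNorm u = 1} := by
  obtain ⟨v, hv⟩ := exists_norm_eq (EuclideanSpace ℝ ι) zero_le_one
  exact ⟨⟨v.ofLp, hv⟩⟩

lemma exists_euclNorm_eq_one_dotProduct_eq [Nonempty ι] (g : ι → ℝ) :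
    ∃ u : ι → ℝ, euclNorm u = 1 ∧ u ⬝ᵥ g = euclNorm g := by
  rcases (euclNorm_nonneg g).eq_or_lt with h | h
  · have hg : g = 0 := by simpa [euclNorm] using h.symm
    obtain ⟨u, hu⟩ := nonempty_euclNorm_eq_one (ι := ι)
    exact ⟨u, hu, by rw [← h, hg, dotProduct_zero]⟩
  · refine ⟨(euclNorm g)⁻¹ • g, ?_, ?_⟩
    · rw [euclNorm_smul, abs_of_pos (inv_pos.2 h), inv_mul_cancel₀ h.ne']
    · rw [smul_dotProduct, dotProduct_self_eq_euclNorm_mul_self, smul_eq_mul,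
        inv_mul_cancel_left₀ h.ne']

end EuclNorm

-- The normal direction is that of the point of `K` closest to the origin.
lemma exists_norm_eq_one_forall_lt_inner {E : Type*} [NormedAddCommGroup E] [InnerProductSpace ℝ E]
    {K : Set E} (hne : K.Nonempty) (hcomplete : IsComplete K) (hconv : Convex ℝ K) {c : ℝ}
    (hc : 0 ≤ c) (hK : ∀ z ∈ K, c < ‖z‖) : ∃ u : E, ‖u‖ = 1 ∧ ∀ z ∈ K, c < inner ℝ u z := by
  obtain ⟨v, hvK, hv⟩ := exists_norm_eq_iInf_of_complete_convex hne hcomplete hconv 0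
  have hv_pos : 0 < ‖v‖ := hc.trans_lt (hK v hvK)
  refine ⟨‖v‖⁻¹ • v, ?_, fun z hz => ?_⟩
  · rw [norm_smul, norm_inv, norm_norm, inv_mul_cancel₀ hv_pos.ne']
  · have hvz : ‖v‖ * ‖v‖ ≤ inner ℝ v z := by
      have := (norm_eq_iInf_iff_real_inner_le_zero hconv hvK).1 hv z hz
      rw [zero_sub, inner_neg_left, inner_sub_right, real_inner_self_eq_norm_mul_norm] at this
      linarith
    calc c < ‖v‖ := hK v hvK
      _ ≤ ‖v‖⁻¹ * inner ℝ v z := by rwa [le_inv_mul_iff₀ hv_pos]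
      _ = inner ℝ (‖v‖⁻¹ • v) z := by rw [real_inner_smul_left]

section GordonBilinear

variable {P Q : Type*} [Fintype P] [Fintype Q]

lemma measurePreserving_sumElim (κ κ' : Type*) [Fintype κ] [Fintype κ'] :
    MeasurePreserving (fun x : (κ → ℝ) × (κ' → ℝ) => Sum.elim x.1 x.2)
      ((stdGaussianPi κ).prod (stdGaussianPi κ')) (stdGaussianPi (κ ⊕ κ')) :=
  measurePreserving_sumPiEquivProdPi_symm fun _ : κ ⊕ κ' => gaussianReal 0 1

lemma half_le_stdGaussianPi_eval_nonpos {κ : Type*} [Fintype κ] (k : κ) :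
    1 / 2 ≤ stdGaussianPi κ {x | x k ≤ 0} := by
  set μ := gaussianReal 0 1
  have hsymm : μ (Ioi 0) = μ (Iio 0) := by
    have hneg : μ.map (fun x => -x) = μ := by simpa using gaussianReal_map_neg (μ := 0) (v := 1)
    rw [← hneg, Measure.map_apply measurable_neg measurableSet_Ioi, hneg]
    simp
  have htotal : 1 ≤ 2 * μ (Iic 0) := by
    rw [← prob_add_prob_compl (μ := μ) (measurableSet_Iic (a := 0)), compl_Iic, hsymm, two_mul]
    gcongr
    exact Iio_subset_Iic_self
  have heval : stdGaussianPi κ {x | x k ≤ 0} = μ (Iic 0) :=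
    (measurePreserving_eval (fun _ : κ => μ) k).measure_preimage measurableSet_Iic.nullMeasurableSet
  rwa [heval, ENNReal.div_le_iff' two_ne_zero ENNReal.ofNat_ne_top]

/-- The `Q × P` matrix with the entries of a vector indexed by `Q × P`. -/
def matrixOfProd (A : Q × P → ℝ) : Matrix Q P ℝ := Matrix.of (Function.curry A)

lemma dotProduct_matrixOfProd_mulVec (A : Q × P → ℝ) (p : P → ℝ) (q : Q → ℝ) :
    q ⬝ᵥ (matrixOfProd A *ᵥ p) = (fun k : Q × P => q k.1 * p k.2) ⬝ᵥ A := by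
  simp only [dotProduct, mulVec, matrixOfProd, Fintype.sum_prod_type, Finset.mul_sum, of_apply,
    Function.curry_apply]
  exact Finset.sum_congr rfl fun b _ => Finset.sum_congr rfl fun c _ => by ring

variable {I J : Type*} (p : I × J → P → ℝ) (q : I × J → Q → ℝ)

/-- The coefficients of the processes `qᵀ A p + ‖p‖ ‖q‖ γ` in the Gaussian entries of `A` and
`γ`, for families of vectors `p` and `q`. -/
noncomputable def bilinearCoeff : Matrix (I × J) ((Q × P) ⊕ Unit) ℝ :=
  fromCols (.of fun s k => q s k.1 * p s k.2) (.of fun s _ => euclNorm (p s) * euclNorm (q s))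

/-- The coefficients of the decoupled processes `‖p‖ qᵀ g + ‖q‖ pᵀ h` in the Gaussian entries of
`g` and `h`, for families of vectors `p` and `q`. -/
noncomputable def decoupledCoeff : Matrix (I × J) (Q ⊕ P) ℝ :=
  fromCols (.of fun s => euclNorm (p s) • q s) (.of fun s => euclNorm (q s) • p s)

lemma bilinearCoeff_mulVec (A : Q × P → ℝ) (γ : Unit → ℝ) (s : I × J) :
    (bilinearCoeff p q *ᵥ Sum.elim A γ) s =
      q s ⬝ᵥ (matrixOfProd A *ᵥ p s) + euclNorm (p s) * euclNorm (q s) * γ () := by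
  rw [bilinearCoeff, fromCols_mulVec_sumElim, dotProduct_matrixOfProd_mulVec]
  simp [mulVec, dotProduct]

lemma decoupledCoeff_mulVec (g : Q → ℝ) (h : P → ℝ) (s : I × J) :
    (decoupledCoeff p q *ᵥ Sum.elim g h) s =
      euclNorm (p s) * (q s ⬝ᵥ g) + euclNorm (q s) * (p s ⬝ᵥ h) := by
  rw [decoupledCoeff, fromCols_mulVec_sumElim]
  simp only [Pi.add_apply, mulVec, of_apply, smul_dotProduct, smul_eq_mul]

lemma bilinearCoeff_mul_transpose (s s' : I × J) :
    (bilinearCoeff p q * (bilinearCoeff p q)ᵀ) s s' =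
      (q s ⬝ᵥ q s') * (p s ⬝ᵥ p s') +
        euclNorm (p s) * euclNorm (q s) * (euclNorm (p s') * euclNorm (q s')) := by
  rw [bilinearCoeff, transpose_fromCols, fromCols_mul_fromRows]
  simp only [Matrix.add_apply, mul_apply, transpose_apply, of_apply, Fintype.sum_prod_type,
    dotProduct, Finset.sum_mul_sum, Finset.univ_unique, Finset.sum_singleton]
  congr 1
  exact Finset.sum_congr rfl fun b _ => Finset.sum_congr rfl fun c _ => by ring

lemma decoupledCoeff_mul_transpose (s s' : I × J) :
    (decoupledCoeff p q * (decoupledCoeff p q)ᵀ) s s' =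
      euclNorm (p s) * euclNorm (p s') * (q s ⬝ᵥ q s') +
        euclNorm (q s) * euclNorm (q s') * (p s ⬝ᵥ p s') := by
  rw [decoupledCoeff, transpose_fromCols, fromCols_mul_fromRows]
  simp only [Matrix.add_apply, mul_apply, transpose_apply, of_apply, Pi.smul_apply, smul_eq_mul,
    dotProduct, Finset.mul_sum]
  congr 1 <;> exact Finset.sum_congr rfl fun _ _ => by ring

variable {p q}

-- The covariances of the two processes differ by `(‖p‖‖p'‖ - p ⬝ᵥ p') (‖q‖‖q'‖ - q ⬝ᵥ q')`.
lemma gordon_comparison_bilinear_add [Countable I] [Countable J]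
    (hpq : ∀ i, (∀ j j', p (i, j) = p (i, j')) ∨ ∀ j j', q (i, j) = q (i, j')) (lam : I × J → ℝ) :
    ((stdGaussianPi (Q × P)).prod (stdGaussianPi Unit))
        {x | ∃ i, ∀ j, q (i, j) ⬝ᵥ (matrixOfProd x.1 *ᵥ p (i, j)) +
          euclNorm (p (i, j)) * euclNorm (q (i, j)) * x.2 () < lam (i, j)} ≤
      ((stdGaussianPi Q).prod (stdGaussianPi P))
        {x | ∃ i, ∀ j, euclNorm (p (i, j)) * (q (i, j) ⬝ᵥ x.1) +
          euclNorm (q (i, j)) * (p (i, j) ⬝ᵥ x.2) ≤ lam (i, j)} := by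
  have hcmp := gordon_comparison lam (a := bilinearCoeff p q) (a' := decoupledCoeff p q)
    (fun i j j' => ?_) (fun i i' j j' => ?_)
  · rw [← (measurePreserving_sumElim _ _).measure_preimage
      (measurableSet_exists_forall_mulVec_lt _ _).nullMeasurableSet,
      ← (measurePreserving_sumElim _ _).measure_preimage
      (measurableSet_exists_forall_mulVec_le _ _).nullMeasurableSet] at hcmp
    simpa only [preimage_ofPred_eq, bilinearCoeff_mulVec, decoupledCoeff_mulVec] using hcmp
  · rw [bilinearCoeff_mul_transpose, decoupledCoeff_mul_transpose]
    rcases hpq i with h | h <;> rw [h j' j, dotProduct_self_eq_euclNorm_mul_self] <;> ring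
  · rw [bilinearCoeff_mul_transpose, decoupledCoeff_mul_transpose]
    have hp := dotProduct_le_euclNorm_mul_euclNorm (p (i, j)) (p (i', j'))
    have hq := dotProduct_le_euclNorm_mul_euclNorm (q (i, j)) (q (i', j'))
    linarith [mul_nonneg (sub_nonneg.2 hp) (sub_nonneg.2 hq)]

lemma le_two_mul_of_half_le_of_mul_le {x y z : ℝ≥0∞} (hz : 1 / 2 ≤ z) (h : x * z ≤ y) :
    x ≤ 2 * y := by
  calc x = 2 * (x * (1 / 2)) := by
        rw [mul_left_comm, one_div, ENNReal.mul_inv_cancel two_ne_zero ENNReal.ofNat_ne_top,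
          mul_one]
    _ ≤ 2 * y := by gcongr; exact (by gcongr : x * (1 / 2) ≤ x * z).trans h

lemma gordon_comparison_bilinear [Countable I] [Countable J]
    (hpq : ∀ i, (∀ j j', p (i, j) = p (i, j')) ∨ ∀ j j', q (i, j) = q (i, j')) (lam : I × J → ℝ) :
    stdGaussianPi (Q × P)
        {A | ∃ i, ∀ j, q (i, j) ⬝ᵥ (matrixOfProd A *ᵥ p (i, j)) < lam (i, j)} ≤
      2 * ((stdGaussianPi Q).prod (stdGaussianPi P))
        {x | ∃ i, ∀ j, euclNorm (p (i, j)) * (q (i, j) ⬝ᵥ x.1) +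
          euclNorm (q (i, j)) * (p (i, j) ⬝ᵥ x.2) ≤ lam (i, j)} := by
  refine le_two_mul_of_half_le_of_mul_le (half_le_stdGaussianPi_eval_nonpos ()) ?_
  rw [← Measure.prod_prod]
  refine (measure_mono ?_).trans (gordon_comparison_bilinear_add hpq lam)
  rintro ⟨A, γ⟩ ⟨⟨i, hi⟩, hγ⟩
  refine ⟨i, fun j => ?_⟩
  have := mul_nonpos_of_nonneg_of_nonpos
    (mul_nonneg (euclNorm_nonneg (p (i, j))) (euclNorm_nonneg (q (i, j)))) hγ
  linarith [hi j]

lemma exists_euclNorm_eq_one_forall_lt_dotProduct_mulVec {D : Set (P → ℝ)} (hconv : Convex ℝ D)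
    (hcomp : IsCompact D) (hne : D.Nonempty) {c : ℝ} (hc : 0 ≤ c) {M : Matrix Q P ℝ}
    (hM : ∀ p ∈ D, c < euclNorm (M *ᵥ p)) :
    ∃ u : Q → ℝ, euclNorm u = 1 ∧ ∀ p ∈ D, c < u ⬝ᵥ (M *ᵥ p) := by
  set L : (P → ℝ) →ₗ[ℝ] EuclideanSpace ℝ Q :=
    (WithLp.linearEquiv 2 ℝ (Q → ℝ)).symm.toLinearMap ∘ₗ M.mulVecLin
  obtain ⟨u, hu, hlt⟩ := exists_norm_eq_one_forall_lt_inner (hne.image L)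
    (hcomp.image L.continuous_of_finiteDimensional).isComplete (hconv.linear_image L) hc
    (forall_mem_image.2 hM)
  refine ⟨u.ofLp, hu, fun p hp => ?_⟩
  rw [← inner_toLp_eq_dotProduct]
  exact hlt _ (mem_image_of_mem L hp)

variable [Nonempty Q]

lemma stdGaussianPi_exists_euclNorm_mulVec_lt_le (S : Set (P → ℝ)) (c : ℝ) :
    stdGaussianPi (Q × P) {A | ∃ p ∈ S, euclNorm (matrixOfProd A *ᵥ p) < c} ≤
      2 * ((stdGaussianPi Q).prod (stdGaussianPi P))
        {x | ∃ p ∈ S, euclNorm p * euclNorm x.1 + p ⬝ᵥ x.2 ≤ c} := by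
  rcases S.eq_empty_or_nonempty with rfl | hS
  · simp
  have := hS.to_subtype
  obtain ⟨w, hw⟩ := TopologicalSpace.exists_dense_seq S
  obtain ⟨u, hu⟩ := TopologicalSpace.exists_dense_seq {u : Q → ℝ // euclNorm u = 1}
  refine (measure_mono ?_).trans ((gordon_comparison_bilinear
    (p := fun s : ℕ × ℕ => (w s.1).1) (q := fun s : ℕ × ℕ => (u s.2).1)
    (fun _ => .inl fun _ _ => rfl) fun _ => c).trans (mul_right_mono (measure_mono ?_)))
  · rintro A ⟨p, hpS, hp⟩
    have hopen : IsOpen {p : S | euclNorm (matrixOfProd A *ᵥ p.1) < c} :=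
      isOpen_lt (continuous_euclNorm.comp (by fun_prop)) continuous_const
    obtain ⟨i, hi⟩ := hw.exists_mem_open hopen ⟨⟨p, hpS⟩, hp⟩
    refine ⟨i, fun j => lt_of_le_of_lt ?_ hi⟩
    simpa only [(u j).2, one_mul] using
      dotProduct_le_euclNorm_mul_euclNorm (u j).1 (matrixOfProd A *ᵥ (w i).1)
  · rintro ⟨g, h⟩ ⟨i, hi⟩
    refine ⟨w i, (w i).2, ?_⟩
    obtain ⟨v, hv, hvg⟩ := exists_euclNorm_eq_one_dotProduct_eq g
    have hall (v : {u : Q → ℝ // euclNorm u = 1}) :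
        euclNorm (w i).1 * (v.1 ⬝ᵥ g) + (w i).1 ⬝ᵥ h ≤ c := by
      refine hu.induction_on (p := fun v : {u : Q → ℝ // euclNorm u = 1} =>
        euclNorm (w i).1 * (v.1 ⬝ᵥ g) + (w i).1 ⬝ᵥ h ≤ c) v
        (isClosed_le (by fun_prop) continuous_const) fun j => ?_
      simpa only [(u j).2, one_mul] using hi j
    simpa only [hvg] using hall ⟨v, hv⟩

lemma stdGaussianPi_forall_lt_euclNorm_mulVec_le {D : Set (P → ℝ)} (hconv : Convex ℝ D)
    (hcomp : IsCompact D) (hne : D.Nonempty) {c : ℝ} (hc : 0 ≤ c) :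
    stdGaussianPi (Q × P) {A | ∀ p ∈ D, c < euclNorm (matrixOfProd A *ᵥ p)} ≤
      2 * ((stdGaussianPi Q).prod (stdGaussianPi P))
        {x | ∀ p ∈ D, c ≤ euclNorm p * euclNorm x.1 + p ⬝ᵥ x.2} := by
  have := hne.to_subtype
  obtain ⟨w, hw⟩ := TopologicalSpace.exists_dense_seq D
  obtain ⟨u, hu⟩ := TopologicalSpace.exists_dense_seq {u : Q → ℝ // euclNorm u = 1}
  refine (measure_mono ?_).trans ((gordon_comparison_bilinear
    (p := fun s : ℕ × ℕ => -(w s.2).1) (q := fun s : ℕ × ℕ => (u s.1).1)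
    (fun _ => .inr fun _ _ => rfl) fun _ => -c).trans (mul_right_mono (measure_mono ?_)))
  · intro A hA
    obtain ⟨v, hv, hlt⟩ :=
      exists_euclNorm_eq_one_forall_lt_dotProduct_mulVec hconv hcomp hne hc hA
    have hnear : ∀ᶠ v' in 𝓝 (⟨v, hv⟩ : {u : Q → ℝ // euclNorm u = 1}),
        ∀ p ∈ D, c < v'.1 ⬝ᵥ (matrixOfProd A *ᵥ p) :=
      hcomp.eventually_forall_of_forall_eventually fun p hp =>
        (isOpen_lt continuous_const (by fun_prop)).mem_nhds (hlt p hp)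
    obtain ⟨_, hi, i, rfl⟩ := mem_closure_iff_nhds.1 (hu ⟨v, hv⟩) _ hnear
    refine ⟨i, fun j => ?_⟩
    rw [mulVec_neg, dotProduct_neg, neg_lt_neg_iff]
    exact hi _ (w j).2
  · rintro ⟨g, h⟩ ⟨i, hi⟩ p hp
    have hall (p : D) : euclNorm p.1 * ((u i).1 ⬝ᵥ g) - p.1 ⬝ᵥ h ≤ -c := by
      refine hw.induction_on (p := fun p : D => euclNorm p.1 * ((u i).1 ⬝ᵥ g) - p.1 ⬝ᵥ h ≤ -c) p
        (isClosed_le ((continuous_euclNorm.comp continuous_subtype_val).mul_const _ |>.sub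
          (by fun_prop)) continuous_const) fun j => ?_
      simpa only [(u i).2, one_mul, euclNorm_neg, neg_dotProduct, ← sub_eq_add_neg] using hi j
    have hug : -euclNorm g ≤ (u i).1 ⬝ᵥ g := by
      have := dotProduct_le_euclNorm_mul_euclNorm (-(u i).1) g
      rw [euclNorm_neg, (u i).2, one_mul, neg_dotProduct] at this
      linarith
    linarith [hall ⟨p, hp⟩, mul_le_mul_of_nonneg_left hug (euclNorm_nonneg p)]

end GordonBilinear

section GaussianTail

lemma gaussianReal_real_Ici_le_exp {b : ℝ} (hb : 0 ≤ b) :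
    (gaussianReal 0 1).real (Ici b) ≤ Real.exp (-(b ^ 2 / 2)) := by
  have h : HasSubgaussianMGF id 1 (gaussianReal 0 1) :=
    ⟨integrable_exp_mul_gaussianReal, fun t => by simp [mgf_id_gaussianReal]⟩
  calc (gaussianReal 0 1).real (Ici b) ≤ Real.exp (-b ^ 2 / (2 * (1 : ℝ≥0))) := h.measure_ge_le hb
    _ = Real.exp (-(b ^ 2 / 2)) := by rw [NNReal.coe_one, mul_one, neg_div]

lemma gaussianReal_real_Iic_neg_le_exp {b : ℝ} (hb : 0 ≤ b) :
    (gaussianReal 0 1).real (Iic (-b)) ≤ Real.exp (-(b ^ 2 / 2)) := by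
  have hneg : (gaussianReal 0 1).map (fun x => -x) = gaussianReal 0 1 := by
    simpa using gaussianReal_map_neg (μ := 0) (v := 1)
  rw [← hneg, map_measureReal_apply measurable_neg measurableSet_Iic]
  simpa using gaussianReal_real_Ici_le_exp hb

lemma exp_neg_two_le : Real.exp (-2) ≤ 1 / 7 := by
  rw [show (-2 : ℝ) = -1 + -1 by norm_num, Real.exp_add]
  have := Real.exp_neg_one_lt_d9
  nlinarith [Real.exp_pos (-1)]

variable {κ : Type*} [Fintype κ]

lemma stdGaussianPi_real_eval_preimage (k : κ) {s : Set ℝ} (hs : MeasurableSet s) :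
    (stdGaussianPi κ).real {x | x k ∈ s} = (gaussianReal 0 1).real s :=
  (measurePreserving_eval (fun _ : κ => gaussianReal 0 1) k).measureReal_preimage
    hs.nullMeasurableSet

lemma six_sevenths_le_stdGaussianPi_eval_le_two (k : κ) :
    6 / 7 ≤ (stdGaussianPi κ).real {x | x k ≤ 2} := by
  have htail : (gaussianReal 0 1).real (Iic 2)ᶜ ≤ 1 / 7 := calc
    _ ≤ (gaussianReal 0 1).real (Ici 2) := measureReal_mono (by grind)
    _ ≤ Real.exp (-(2 ^ 2 / 2)) := gaussianReal_real_Ici_le_exp zero_le_two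
    _ ≤ 1 / 7 := by norm_num [exp_neg_two_le]
  rw [probReal_compl_eq_one_sub measurableSet_Iic] at htail
  have heval := stdGaussianPi_real_eval_preimage k (measurableSet_Iic (a := (2 : ℝ)))
  simp only [mem_Iic] at heval
  linarith

lemma stdGaussianPi_real_exists_eval_le_neg {b : ℝ} (hb : 0 ≤ b) :
    (stdGaussianPi κ).real {x | ∃ k, x k ≤ -b} ≤ Fintype.card κ * Real.exp (-(b ^ 2 / 2)) := by
  have hset : {x : κ → ℝ | ∃ k, x k ≤ -b} = ⋃ k, {x | x k ∈ Iic (-b)} := by ext; simp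
  calc _ ≤ ∑ k : κ, (stdGaussianPi κ).real {x | x k ∈ Iic (-b)} :=
        hset ▸ measureReal_iUnion_fintype_le _
    _ ≤ ∑ _k : κ, Real.exp (-(b ^ 2 / 2)) := Finset.sum_le_sum fun k _ => by
        rw [stdGaussianPi_real_eval_preimage k measurableSet_Iic]
        exact gaussianReal_real_Iic_neg_le_exp hb
    _ = _ := by simp

end GaussianTail

section CopyTrick

-- With `M ≈ 2 / p` copies, one of them succeeds with probability at least `1 - e⁻²`.
lemma le_of_forall_one_sub_pow_le {p τ : ℝ} (hp : p ∈ Icc 0 1) (hτ : 0 ≤ τ)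
    (h : ∀ M : ℕ, (1 - (1 - p) ^ M) * (6 / 7) ≤ 1 / 2 + M * τ) : p ≤ 24 * τ := by
  rcases hp.1.eq_or_lt with rfl | hp_pos
  · positivity
  set M := ⌈2 / p⌉₊
  have hM_ge : 2 ≤ M * p := (div_le_iff₀ hp_pos).1 (Nat.le_ceil _)
  have hM_le : M * p ≤ 3 := by
    have := (mul_lt_mul_iff_left₀ hp_pos).2 (Nat.ceil_lt_add_one (div_pos two_pos hp_pos).le)
    rw [add_mul, div_mul_cancel₀ _ hp_pos.ne'] at this
    linarith [hp.2]
  have hpow : (1 - p) ^ M ≤ 1 / 7 := calc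
    (1 - p) ^ M ≤ Real.exp (-p) ^ M :=
      pow_le_pow_left₀ (sub_nonneg.2 hp.2) (Real.one_sub_le_exp_neg p) _
    _ = Real.exp (-(M * p)) := by rw [← Real.exp_nat_mul, mul_neg]
    _ ≤ Real.exp (-2) := Real.exp_le_exp.2 (neg_le_neg hM_ge)
    _ ≤ 1 / 7 := exp_neg_two_le
  have hMτ : 1 / 5 ≤ M * τ := by linarith [h M]
  nlinarith [mul_le_mul_of_nonneg_left hMτ hp.1, mul_le_mul_of_nonneg_right hM_le hτ]

variable {P : Type*} [Fintype P]

lemma measurePreserving_curry_stdGaussianPi (Q P : Type*) [Fintype Q] [Fintype P] :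
    MeasurePreserving (MeasurableEquiv.curry Q P ℝ) (stdGaussianPi (Q × P))
      (Measure.pi fun _ : Q => stdGaussianPi P) := by
  refine ⟨MeasurableEquiv.measurable _, ?_⟩
  have h := Measure.infinitePi_map_curry fun (_ : Q) (_ : P) => gaussianReal 0 1
  simpa only [Measure.infinitePi_eq_pi, stdGaussianPi] using h

lemma measurableSet_exists_row_mem {Q P : Type*} [Countable Q] {B : Set (P → ℝ)}
    (hB : MeasurableSet B) :
    MeasurableSet {A : Q × P → ℝ | ∃ i, (fun c => A (i, c)) ∈ B} := by
  rw [ofPred_exists]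
  exact .iUnion fun i => hB.preimage (by fun_prop)

lemma stdGaussianPi_real_exists_row_mem {Q : Type*} [Fintype Q] {B : Set (P → ℝ)}
    (hB : MeasurableSet B) :
    (stdGaussianPi (Q × P)).real {A | ∃ i, (fun c => A (i, c)) ∈ B} =
      1 - (1 - (stdGaussianPi P).real B) ^ Fintype.card Q := by
  set U := {A : Q × P → ℝ | ∃ i, (fun c => A (i, c)) ∈ B} with hU
  have hcompl : Uᶜ = MeasurableEquiv.curry Q P ℝ ⁻¹' univ.pi fun _ => Bᶜ := by
    ext A; simp only [hU, mem_compl_iff, mem_ofPred_eq, not_exists, mem_preimage, mem_univ_pi]; rfl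
  have hprob : (stdGaussianPi (Q × P)).real Uᶜ =
      (1 - (stdGaussianPi P).real B) ^ Fintype.card Q := by
    rw [hcompl, (measurePreserving_curry_stdGaussianPi Q P).measureReal_preimage
      (MeasurableSet.univ_pi fun _ => hB.compl).nullMeasurableSet, Measure.real, Measure.pi_pi,
      Finset.prod_const, Finset.card_univ, ENNReal.toReal_pow, ← Measure.real,
      probReal_compl_eq_one_sub hB]
  rw [← hprob, probReal_compl_eq_one_sub (measurableSet_exists_row_mem hB),
    _root_.sub_sub_cancel]

-- Comparing `M` independent copies of `B` with a single copy of `E` amplifies the probability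
-- of `B`.
lemma stdGaussianPi_real_le_of_copies {B E : Set (P → ℝ)} (hB : MeasurableSet B)
    (hE : (stdGaussianPi P).real E ≤ 1 / 2) {b : ℝ} (hb : 0 ≤ b)
    (H : ∀ M : ℕ, ((stdGaussianPi (Fin M × P)).prod (stdGaussianPi Unit))
      ({A | ∃ i, (fun c => A (i, c)) ∈ B} ×ˢ {γ | γ () ≤ 2}) ≤
      ((stdGaussianPi (Fin M)).prod (stdGaussianPi P))
        {x | (∃ i, x.1 i ≤ -b) ∨ x.2 ∈ E}) :
    (stdGaussianPi P).real B ≤ 24 * Real.exp (-(b ^ 2 / 2)) := by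
  refine le_of_forall_one_sub_pow_le ⟨measureReal_nonneg, measureReal_le_one⟩
    (Real.exp_pos _).le fun M => ?_
  have hsub : {x : (Fin M → ℝ) × (P → ℝ) | (∃ i, x.1 i ≤ -b) ∨ x.2 ∈ E} ⊆
      {g | ∃ i, g i ≤ -b} ×ˢ univ ∪ univ ×ˢ E := by
    rintro x (h | h)
    exacts [.inl ⟨h, trivial⟩, .inr ⟨trivial, h⟩]
  have hupper : ((stdGaussianPi (Fin M)).prod (stdGaussianPi P)).real
      {x | (∃ i, x.1 i ≤ -b) ∨ x.2 ∈ E} ≤ 1 / 2 + M * Real.exp (-(b ^ 2 / 2)) := by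
    refine (measureReal_mono hsub).trans ((measureReal_union_le _ _).trans ?_)
    have := stdGaussianPi_real_exists_eval_le_neg (κ := Fin M) hb
    rw [Fintype.card_fin] at this
    rw [measureReal_prod_prod, measureReal_prod_prod, probReal_univ, probReal_univ, mul_one,
      one_mul]
    linarith
  have hlower := (ENNReal.toReal_mono (measure_ne_top _ _) (H M)).trans hupper
  rw [← Measure.real, measureReal_prod_prod, stdGaussianPi_real_exists_row_mem hB,
    Fintype.card_fin] at hlower
  have hcopies : 0 ≤ 1 - (1 - (stdGaussianPi P).real B) ^ M :=
    sub_nonneg.2 (pow_le_one₀ (sub_nonneg.2 measureReal_le_one)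
      (sub_le_self _ measureReal_nonneg))
  exact (mul_le_mul_of_nonneg_left (six_sevenths_le_stdGaussianPi_eval_le_two ()) hcopies).trans
    hlower

end CopyTrick

lemma exists_median (μ : Measure ℝ) [IsProbabilityMeasure μ] :
    ∃ x₀, (∀ x < x₀, μ.real (Iic x) ≤ 1 / 2) ∧ ∀ x > x₀, μ.real (Ici x) ≤ 1 / 2 := by
  obtain ⟨y, hy⟩ := ((tendsto_cdf_atBot μ).eventually_lt_const one_half_pos).exists
  obtain ⟨z, hz⟩ := ((tendsto_cdf_atTop μ).eventually_const_lt one_half_lt_one).exists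
  have hbdd : BddAbove {x | cdf μ x < 1 / 2} :=
    ⟨z, fun x hx => le_of_not_gt fun hzx => (hz.trans_le (monotone_cdf μ hzx.le)).not_gt hx⟩
  refine ⟨sSup {x | cdf μ x < 1 / 2}, fun x hx => ?_, fun x hx => ?_⟩
  · obtain ⟨x', hx', hlt⟩ := exists_lt_of_lt_csSup ⟨y, hy⟩ hx
    rw [← cdf_eq_real]
    exact ((monotone_cdf μ hlt.le).trans_lt hx').le
  · obtain ⟨x', hx', hlt⟩ := exists_between hx
    have hhalf : 1 / 2 ≤ μ.real (Iic x') := by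
      rw [← cdf_eq_real]
      exact le_of_not_gt fun h => (le_csSup hbdd h).not_gt hx'
    calc μ.real (Ici x) ≤ μ.real (Iic x')ᶜ := measureReal_mono (by grind)
      _ ≤ 1 / 2 := by rw [probReal_compl_eq_one_sub measurableSet_Iic]; linarith

section AffineSup

variable {P W : Type*} [Fintype P] (w : W → P → ℝ) (c : W → ℝ)

/-- The supremum of the affine functions `h ↦ w i ⬝ᵥ h - c i`, as a function of `h`. It is a junk
value wherever the supremum is infinite. -/
noncomputable def affineSup (h : P → ℝ) : ℝ := ⨆ i, (w i ⬝ᵥ h - c i)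

lemma measurable_affineSup [Countable W] : Measurable (affineSup w c) :=
  .iSup fun i => by unfold dotProduct; fun_prop

lemma euclNorm_single_one {Q : Type*} [Fintype Q] [DecidableEq Q] (i : Q) :
    euclNorm (Pi.single i 1) = 1 :=
  (PiLp.norm_single 2 (fun _ : Q => ℝ) i 1).trans norm_one

lemma single_one_dotProduct_matrixOfProd_mulVec {Q : Type*} [Fintype Q] [DecidableEq Q]
    (A : Q × P → ℝ) (i : Q) (v : P → ℝ) :
    Pi.single i 1 ⬝ᵥ (matrixOfProd A *ᵥ v) = v ⬝ᵥ fun k => A (i, k) := by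
  rw [single_one_dotProduct, mulVec, dotProduct_comm]
  rfl

variable {w c} [Nonempty W] [Countable W] {R b : ℝ}

lemma gordon_copies_affineSup_le (hR : ∀ j, euclNorm (w j) ≤ R)
    (hbdd : ∀ h, BddAbove (range fun j => w j ⬝ᵥ h - c j)) (hR_pos : 0 < R) (hb : 0 ≤ b)
    (M : ℕ) (x : ℝ) :
    ((stdGaussianPi (Fin M × P)).prod (stdGaussianPi Unit))
        ({A | ∃ i, (fun k => A (i, k)) ∈ {h | affineSup w c h ≤ x}} ×ˢ {γ | γ () ≤ 2}) ≤
      ((stdGaussianPi (Fin M)).prod (stdGaussianPi P))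
        {y | (∃ i, y.1 i ≤ -b) ∨ y.2 ∈ {h | affineSup w c h ≤ x + (b + 3) * R}} := by
  refine (measure_mono ?_).trans ((gordon_comparison_bilinear_add
    (p := fun s : Fin M × W => w s.2) (q := fun s : Fin M × W => Pi.single s.1 1)
    (fun _ => .inr fun _ _ => rfl) fun s => c s.2 + x + 3 * R).trans (measure_mono ?_))
  · rintro ⟨A, γ⟩ ⟨⟨i, hi⟩, hγ : γ () ≤ 2⟩
    refine ⟨i, fun j => ?_⟩
    have hrow : w j ⬝ᵥ (fun k => A (i, k)) - c j ≤ x := (le_ciSup (hbdd _) j).trans hi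
    simp only [single_one_dotProduct_matrixOfProd_mulVec, euclNorm_single_one]
    nlinarith [mul_le_mul_of_nonneg_left hγ (euclNorm_nonneg (w j)), hR j]
  · rintro ⟨g, h⟩ ⟨i, hi⟩
    refine or_iff_not_imp_left.2 fun hg =>
      (ciSup_le fun j => ?_ : affineSup w c h ≤ _)
    have hgi : -b < g i := not_le.1 fun h => hg ⟨i, h⟩
    have hij := hi j
    simp only [single_one_dotProduct, euclNorm_single_one] at hij
    nlinarith [mul_le_mul_of_nonneg_left hgi.le (euclNorm_nonneg (w j)),
      mul_le_mul_of_nonneg_right (hR j) hb]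

lemma gordon_copies_le_affineSup (hR : ∀ j, euclNorm (w j) ≤ R)
    (hbdd : ∀ h, BddAbove (range fun j => w j ⬝ᵥ h - c j)) (hR_pos : 0 < R) (hb : 0 ≤ b)
    (M : ℕ) (x : ℝ) :
    ((stdGaussianPi (Fin M × P)).prod (stdGaussianPi Unit))
        ({A | ∃ i, (fun k => A (i, k)) ∈ {h | x ≤ affineSup w c h}} ×ˢ {γ | γ () ≤ 2}) ≤
      ((stdGaussianPi (Fin M)).prod (stdGaussianPi P))
        {y | (∃ i, y.1 i ≤ -b) ∨ y.2 ∈ {h | x - (b + 3) * R ≤ affineSup w c h}} := by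
  refine (measure_mono ?_).trans ((gordon_comparison_bilinear_add (I := Fin M × W) (J := Unit)
    (p := fun s => -w s.1.2) (q := fun s => Pi.single s.1.1 1)
    (fun _ => .inr fun _ _ => rfl) fun s => -(c s.1.2 + x) + 3 * R).trans (measure_mono ?_))
  · rintro ⟨A, γ⟩ ⟨⟨i, hi⟩, hγ : γ () ≤ 2⟩
    obtain ⟨j, hj⟩ := exists_lt_of_lt_ciSup ((sub_lt_self x hR_pos).trans_le hi)
    refine ⟨(i, j), fun _ => ?_⟩
    simp only [single_one_dotProduct_matrixOfProd_mulVec, euclNorm_single_one, euclNorm_neg,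
      neg_dotProduct]
    nlinarith [mul_le_mul_of_nonneg_left hγ (euclNorm_nonneg (w j)), hR j]
  · rintro ⟨g, h⟩ ⟨⟨i, j⟩, hij⟩
    refine or_iff_not_imp_left.2 fun hg => le_trans ?_ (le_ciSup (hbdd h) j)
    have hgi : -b < g i := not_le.1 fun h => hg ⟨i, h⟩
    have hij := hij ()
    simp only [single_one_dotProduct, euclNorm_single_one, euclNorm_neg, neg_dotProduct] at hij
    nlinarith [mul_le_mul_of_nonneg_left hgi.le (euclNorm_nonneg (w j)),
      mul_le_mul_of_nonneg_right (hR j) hb]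

theorem affineSup_concentration (hR : ∀ j, euclNorm (w j) ≤ R)
    (hbdd : ∀ h, BddAbove (range fun j => w j ⬝ᵥ h - c j)) (hR_pos : 0 < R) :
    ∃ x₀, ∀ b ≥ 0, (stdGaussianPi P).real {h | (b + 4) * R ≤ |affineSup w c h - x₀|} ≤
      48 * Real.exp (-(b ^ 2 / 2)) := by
  have hmeas := measurable_affineSup w c
  have := Measure.isProbabilityMeasure_map (μ := stdGaussianPi P) hmeas.aemeasurable
  obtain ⟨x₀, hlow, hhigh⟩ := exists_median ((stdGaussianPi P).map (affineSup w c))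
  refine ⟨x₀, fun b hb => ?_⟩
  have hle : (stdGaussianPi P).real {h | affineSup w c h ≤ x₀ - (b + 4) * R} ≤
      24 * Real.exp (-(b ^ 2 / 2)) := by
    refine stdGaussianPi_real_le_of_copies (hmeas measurableSet_Iic) ?_ hb fun M =>
      gordon_copies_affineSup_le hR hbdd hR_pos hb M _
    have h := hlow (x₀ - R) (sub_lt_self _ hR_pos)
    rw [map_measureReal_apply hmeas measurableSet_Iic] at h
    rwa [show x₀ - (b + 4) * R + (b + 3) * R = x₀ - R by ring]
  have hge : (stdGaussianPi P).real {h | x₀ + (b + 4) * R ≤ affineSup w c h} ≤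
      24 * Real.exp (-(b ^ 2 / 2)) := by
    refine stdGaussianPi_real_le_of_copies (hmeas measurableSet_Ici) ?_ hb fun M =>
      gordon_copies_le_affineSup hR hbdd hR_pos hb M _
    have h := hhigh (x₀ + R) (lt_add_of_pos_right _ hR_pos)
    rw [map_measureReal_apply hmeas measurableSet_Ici] at h
    rwa [show x₀ + (b + 4) * R - (b + 3) * R = x₀ + R by ring]
  have hsub : {h | (b + 4) * R ≤ |affineSup w c h - x₀|} ⊆
      {h | affineSup w c h ≤ x₀ - (b + 4) * R} ∪ {h | x₀ + (b + 4) * R ≤ affineSup w c h} := by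
    intro h hh
    rcases le_abs.1 (mem_ofPred_eq ▸ hh) with h | h
    exacts [.inr (by simp only [mem_ofPred_eq]; linarith),
      .inl (by simp only [mem_ofPred_eq]; linarith)]
  linarith [(measureReal_mono (μ := stdGaussianPi P) hsub).trans (measureReal_union_le _ _)]

end AffineSup

section Chernoff

variable {Ω : Type*} {mΩ : MeasurableSpace Ω} {ν : Measure Ω} [IsProbabilityMeasure ν]
  {X : Ω → ℝ} {δ : ℝ}

lemma exists_mgf_le_exp_mul (hX : 0 ∈ interior (integrableExpSet X ν)) (hδ : 0 < δ) :
    ∃ s > 0, s ∈ integrableExpSet X ν ∧ mgf X ν s ≤ Real.exp (s * (ν[X] + δ)) := by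
  have hderiv : HasDerivAt (mgf X ν) ν[X] 0 := by simpa using hasDerivAt_mgf hX
  have hclose := hderiv.isLittleO.def hδ
  have hmem := mem_interior_iff_mem_nhds.1 hX
  obtain ⟨s, ⟨hs_close, hs_mem⟩, hs : 0 < s⟩ :=
    (((hclose.and hmem).filter_mono (nhdsWithin_le_nhds (s := Ioi 0))).and
      self_mem_nhdsWithin).exists
  refine ⟨s, hs, hs_mem, ?_⟩
  rw [sub_zero, mgf_zero, smul_eq_mul, Real.norm_eq_abs, Real.norm_eq_abs, abs_of_pos hs]
    at hs_close
  linarith [(le_abs_self _).trans hs_close, Real.add_one_le_exp (s * (ν[X] + δ))]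

variable {κ : Type*} [Fintype κ]

lemma measure_pi_real_sum_ge_le_exp (S : Finset κ) {s N : ℝ} (hX : Measurable X) (hs : 0 < s)
    (hs_mem : s ∈ integrableExpSet X ν) (hδ : 0 < δ)
    (hmgf : mgf X ν s ≤ Real.exp (s * (ν[X] + δ))) (hN : (S.card : ℝ) ≤ N) :
    (Measure.pi fun _ : κ => ν).real {h | S.card * ν[X] + 2 * δ * N ≤ ∑ i ∈ S, X (h i)} ≤
      Real.exp (-(s * δ * N)) := by
  set Y : κ → (κ → Ω) → ℝ := fun i h => X (h i)
  have hY : ∀ i, Measurable (Y i) := fun i => by fun_prop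
  have hindep : iIndepFun Y (Measure.pi fun _ => ν) := iIndepFun_pi fun _ => hX.aemeasurable
  have hpres := fun i => measurePreserving_eval (fun _ : κ => ν) i
  have hmgf_eval : ∀ i, mgf (Y i) (Measure.pi fun _ => ν) s = mgf X ν s := fun i =>
    ((hpres i).map_eq ▸ mgf_map (hpres i).aemeasurable (by fun_prop)).symm
  have hinteg := hindep.integrable_exp_mul_sum hY (s := S) fun i _ =>
    (hpres i).integrable_comp_of_integrable hs_mem
  have hchernoff := measure_ge_le_exp_mul_mgf (S.card * ν[X] + 2 * δ * N) hs.le hinteg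
  rw [hindep.mgf_sum hY, Finset.prod_congr rfl fun i _ => hmgf_eval i, Finset.prod_const]
    at hchernoff
  simp only [Finset.sum_apply] at hchernoff
  refine hchernoff.trans ((mul_le_mul_of_nonneg_left (pow_le_pow_left₀ mgf_nonneg hmgf _)
    (Real.exp_pos _).le).trans ?_)
  rw [← Real.exp_nat_mul, ← Real.exp_add, Real.exp_le_exp]
  nlinarith [mul_le_mul_of_nonneg_left hN (mul_pos hs hδ).le]

theorem exists_measure_pi_real_abs_sum_sub_ge_le_exp (hX : Measurable X)
    (hX0 : 0 ∈ interior (integrableExpSet X ν)) (hδ : 0 < δ) :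
    ∃ c > 0, ∀ (κ : Type*) [Fintype κ] (S : Finset κ) (N : ℝ), (S.card : ℝ) ≤ N →
      (Measure.pi fun _ : κ => ν).real {h | δ * N ≤ |∑ i ∈ S, X (h i) - S.card * ν[X]|} ≤
        2 * Real.exp (-(c * N)) := by
  have hneg : 0 ∈ interior (integrableExpSet (fun ω => -X ω) ν) := by
    have hset : integrableExpSet (fun ω => -X ω) ν = Neg.neg ⁻¹' integrableExpSet X ν := by
      simp only [integrableExpSet, preimage_ofPred_eq, mul_neg, neg_mul]
    rw [hset, ← Homeomorph.coe_neg, ← (Homeomorph.neg ℝ).preimage_interior]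
    simpa using hX0
  obtain ⟨s, hs, hs_mem, hs_mgf⟩ := exists_mgf_le_exp_mul hX0 (half_pos hδ)
  obtain ⟨r, hr, hr_mem, hr_mgf⟩ := exists_mgf_le_exp_mul hneg (half_pos hδ)
  refine ⟨min s r * (δ / 2), by positivity, fun κ _ S N hN => ?_⟩
  have hN0 : 0 ≤ δ / 2 * N := mul_nonneg (half_pos hδ).le ((Nat.cast_nonneg _).trans hN)
  have hupper := measure_pi_real_sum_ge_le_exp S hX hs hs_mem (half_pos hδ) hs_mgf hN
  have hlower := measure_pi_real_sum_ge_le_exp (X := fun ω => -X ω) S hX.neg hr hr_mem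
    (half_pos hδ) hr_mgf hN
  have hsub : {h : κ → Ω | δ * N ≤ |∑ i ∈ S, X (h i) - S.card * ν[X]|} ⊆
      {h | S.card * ν[X] + 2 * (δ / 2) * N ≤ ∑ i ∈ S, X (h i)} ∪
      {h | S.card * (∫ ω, -X ω ∂ν) + 2 * (δ / 2) * N ≤ ∑ i ∈ S, -X (h i)} := by
    intro h hh
    simp only [mem_union, mem_ofPred_eq, integral_neg, Finset.sum_neg_distrib] at hh ⊢
    rcases le_abs.1 hh with hh | hh
    exacts [.inl (by linarith), .inr (by linarith)]
  have hmono : ∀ q, min s r ≤ q →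
      Real.exp (-(q * (δ / 2) * N)) ≤ Real.exp (-(min s r * (δ / 2) * N)) := fun q hq =>
    Real.exp_le_exp.2 (by nlinarith [mul_le_mul_of_nonneg_right hq hN0])
  refine (measureReal_mono hsub).trans ((measureReal_union_le _ _).trans ?_)
  linarith [hmono s (min_le_left s r), hmono r (min_le_right s r), hupper, hlower]

end Chernoff

lemma integrable_exp_mul_gaussianReal {f : ℝ → ℝ} {C s : ℝ} (hf : Measurable f)
    (hbound : ∀ x, |f x| ≤ C * (1 + x ^ 2)) (hs : |s| * C ≤ 1 / 4) :
    Integrable (fun x => Real.exp (s * f x)) (gaussianReal 0 1) := by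
  rw [integrable_gaussianReal_iff one_ne_zero]
  refine ((integrable_exp_neg_mul_sq (b := 1 / 4) (by norm_num)).const_mul
    ((√(2 * Real.pi))⁻¹ * Real.exp (1 / 4))).mono' (by fun_prop) (ae_of_all _ fun x => ?_)
  have hexponent : s * f x ≤ |s| * C * (1 + x ^ 2) := by
    calc s * f x ≤ |s| * |f x| := (le_abs_self _).trans_eq (abs_mul _ _)
      _ ≤ |s| * (C * (1 + x ^ 2)) := by gcongr; exact hbound x
      _ = |s| * C * (1 + x ^ 2) := by ring
  rw [gaussianPDFReal, Real.norm_of_nonneg (by positivity), mul_assoc (_)⁻¹, mul_assoc (_)⁻¹,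
    ← Real.exp_add, ← Real.exp_add]
  simp only [NNReal.coe_one, mul_one, sub_zero]
  refine mul_le_mul_of_nonneg_left (Real.exp_le_exp.2 ?_) (by positivity)
  nlinarith [sq_nonneg x]

lemma zero_mem_interior_integrableExpSet_gaussianReal {f : ℝ → ℝ} {C : ℝ} (hC : 0 < C)
    (hf : Measurable f) (hbound : ∀ x, |f x| ≤ C * (1 + x ^ 2)) :
    0 ∈ interior (integrableExpSet f (gaussianReal 0 1)) := by
  refine mem_interior_iff_mem_nhds.2 (mem_of_superset
    (Metric.closedBall_mem_nhds (0 : ℝ) (ε := 1 / (4 * C)) (by positivity)) fun s hs => ?_)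
  refine integrable_exp_mul_gaussianReal hf hbound ?_
  rw [mem_closedBall_zero_iff, Real.norm_eq_abs, le_div_iff₀ (by positivity)] at hs
  linarith

section SoftThreshold

lemma integrable_sq_gaussianReal {μ : ℝ} {v : ℝ≥0} :
    Integrable (fun x : ℝ => x ^ 2) (gaussianReal μ v) :=
  (memLp_id_gaussianReal 2).integrable_sq

lemma integral_sq_gaussianReal_zero {v : ℝ≥0} : ∫ x, x ^ 2 ∂(gaussianReal 0 v) = v := by
  rw [← variance_id_gaussianReal (μ := 0) (v := v),
    variance_of_integral_eq_zero aemeasurable_id integral_id_gaussianReal]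
  rfl

lemma hasDerivAt_gaussianPDFReal_zero_one (x : ℝ) :
    HasDerivAt (gaussianPDFReal 0 1) (-(gaussianPDFReal 0 1 x * x)) x :=
  (hasDerivAt_gaussianPDFReal x).congr_deriv (by rw [NNReal.coe_one]; ring)

lemma hasDerivAt_gaussianPDFReal_mul_id (x : ℝ) :
    HasDerivAt (fun x => gaussianPDFReal 0 1 x * x)
      (gaussianPDFReal 0 1 x - gaussianPDFReal 0 1 x * x ^ 2) x :=
  ((hasDerivAt_gaussianPDFReal_zero_one x).mul (hasDerivAt_id x)).congr_deriv (by
    simp only [id_eq]; ring)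

lemma integrable_gaussianPDFReal_mul_id : Integrable fun x => gaussianPDFReal 0 1 x * x :=
  (integrable_gaussianReal_iff one_ne_zero).1 integrable_id_gaussianReal

lemma integrable_gaussianPDFReal_mul_sq : Integrable fun x => gaussianPDFReal 0 1 x * x ^ 2 :=
  (integrable_gaussianReal_iff one_ne_zero).1 integrable_sq_gaussianReal

lemma integral_Ioi_gaussianPDFReal_mul_id (l : ℝ) :
    ∫ x in Ioi l, gaussianPDFReal 0 1 x * x = gaussianPDFReal 0 1 l := by
  have hlim : Tendsto (gaussianPDFReal 0 1) atTop (𝓝 0) :=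
    tendsto_zero_of_hasDerivAt_of_integrableOn_Ioi (a := l)
      (fun x _ => hasDerivAt_gaussianPDFReal_zero_one x)
      integrable_gaussianPDFReal_mul_id.neg.integrableOn
      (integrable_gaussianPDFReal 0 1).integrableOn
  simpa [integral_neg] using integral_Ioi_of_hasDerivAt_of_tendsto' (a := l)
    (fun x _ => hasDerivAt_gaussianPDFReal_zero_one x)
    integrable_gaussianPDFReal_mul_id.neg.integrableOn hlim

lemma integral_Ioi_gaussianPDFReal_mul_sq (l : ℝ) :
    ∫ x in Ioi l, gaussianPDFReal 0 1 x * x ^ 2 =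
      gaussianPDFReal 0 1 l * l + ∫ x in Ioi l, gaussianPDFReal 0 1 x := by
  have hinteg := (integrable_gaussianPDFReal 0 1).sub integrable_gaussianPDFReal_mul_sq
  have hlim : Tendsto (fun x => gaussianPDFReal 0 1 x * x) atTop (𝓝 0) :=
    tendsto_zero_of_hasDerivAt_of_integrableOn_Ioi (a := l)
      (fun x _ => hasDerivAt_gaussianPDFReal_mul_id x) hinteg.integrableOn
      integrable_gaussianPDFReal_mul_id.integrableOn
  have hftc := integral_Ioi_of_hasDerivAt_of_tendsto' (a := l)
    (fun x _ => hasDerivAt_gaussianPDFReal_mul_id x) hinteg.integrableOn hlim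
  rw [integral_sub (integrable_gaussianPDFReal 0 1).integrableOn
    integrable_gaussianPDFReal_mul_sq.integrableOn] at hftc
  linarith

/-- The magnitude `(|x| - l)₊` of the soft thresholding of `x` at level `l`, which measures the
distance from `x` to the interval `[-l, l]`. -/
noncomputable def softThreshold (l x : ℝ) : ℝ := max (|x| - l) 0

lemma softThreshold_nonneg (l x : ℝ) : 0 ≤ softThreshold l x := le_max_right _ _

lemma abs_sub_le_softThreshold (l x : ℝ) : |x| - l ≤ softThreshold l x := le_max_left _ _

lemma softThreshold_le_abs {l : ℝ} (hl : 0 ≤ l) (x : ℝ) : softThreshold l x ≤ |x| :=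
  max_le (sub_le_self _ hl) (abs_nonneg x)

lemma abs_mul_softThreshold (l x : ℝ) :
    |x| * softThreshold l x = softThreshold l x ^ 2 + l * softThreshold l x := by
  rcases max_cases (|x| - l) 0 with ⟨h, _⟩ | ⟨h, _⟩ <;> rw [softThreshold, h] <;> ring

lemma measurable_softThreshold (l : ℝ) : Measurable (softThreshold l) := by
  unfold softThreshold
  fun_prop

variable {l : ℝ}

lemma integral_comp_softThreshold (hl : 0 ≤ l) {F : ℝ → ℝ} (hF : F 0 = 0) :
    ∫ x, F (softThreshold l x) ∂(gaussianReal 0 1) =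
      2 * ∫ x in Ioi l, gaussianPDFReal 0 1 x * F (x - l) := by
  rw [integral_gaussianReal_eq_integral_smul one_ne_zero]
  have heven : ∀ x, gaussianPDFReal 0 1 x • F (softThreshold l x) =
      gaussianPDFReal 0 1 |x| * F (max (|x| - l) 0) := fun x => by
    simp only [gaussianPDFReal, sub_zero, sq_abs, softThreshold, smul_eq_mul]
  simp only [heven, integral_comp_abs (f := fun x => gaussianPDFReal 0 1 x * F (max (x - l) 0))]
  rw [setIntegral_eq_of_subset_of_forall_sdiff_eq_zero measurableSet_Ioi (Ioi_subset_Ioi hl)]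
  · exact congrArg _ (setIntegral_congr_fun measurableSet_Ioi fun x (hx : l < x) => by
      rw [max_eq_left (sub_nonneg.2 hx.le)])
  · rintro x ⟨_, hx⟩
    rw [max_eq_right (sub_nonpos.2 (not_lt.1 hx)), hF, mul_zero]

lemma integral_softThreshold (hl : 0 ≤ l) : ∫ x, softThreshold l x ∂(gaussianReal 0 1) =
    2 * (gaussianPDFReal 0 1 l - l * ∫ x in Ioi l, gaussianPDFReal 0 1 x) := by
  rw [integral_comp_softThreshold hl (F := fun x => x) rfl]
  simp only [mul_sub]
  rw [integral_sub integrable_gaussianPDFReal_mul_id.integrableOn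
    ((integrable_gaussianPDFReal 0 1).mul_const l).integrableOn,
    integral_Ioi_gaussianPDFReal_mul_id, integral_mul_const, mul_comm l]
  ring

lemma integral_softThreshold_sq (hl : 0 ≤ l) :
    ∫ x, softThreshold l x ^ 2 ∂(gaussianReal 0 1) =
      2 * ((1 + l ^ 2) * (∫ x in Ioi l, gaussianPDFReal 0 1 x) - l * gaussianPDFReal 0 1 l) := by
  rw [integral_comp_softThreshold hl (F := fun x => x ^ 2) (by norm_num)]
  have hexpand : ∀ x, gaussianPDFReal 0 1 x * (x - l) ^ 2 = gaussianPDFReal 0 1 x * x ^ 2 -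
      2 * l * (gaussianPDFReal 0 1 x * x) + l ^ 2 * gaussianPDFReal 0 1 x := fun x => by ring
  have hid := (integrable_gaussianPDFReal_mul_id.const_mul (2 * l)).integrableOn (s := Ioi l)
  have hsq := integrable_gaussianPDFReal_mul_sq.integrableOn (s := Ioi l)
  have hpdf := ((integrable_gaussianPDFReal 0 1).const_mul (l ^ 2)).integrableOn (s := Ioi l)
  rw [integral_congr_ae (ae_of_all _ hexpand), integral_add (hsq.fun_sub hid) hpdf,
    integral_sub hsq hid, integral_const_mul, integral_const_mul,
    integral_Ioi_gaussianPDFReal_mul_id, integral_Ioi_gaussianPDFReal_mul_sq]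
  ring

lemma gaussianPDFReal_sqrt_two_mul (t : ℝ) :
    gaussianPDFReal 0 1 (√2 * t) = (√2 * √Real.pi)⁻¹ * Real.exp (-t ^ 2) := by
  rw [gaussianPDFReal, NNReal.coe_one, mul_one, mul_one, sub_zero, mul_pow,
    Real.sq_sqrt zero_le_two, neg_div, mul_div_cancel_left₀ _ two_ne_zero,
    Real.sqrt_mul zero_le_two]

lemma two_mul_integral_Ioi_gaussianPDFReal_sqrt_two_mul (t : ℝ) :
    2 * ∫ x in Ioi (√2 * t), gaussianPDFReal 0 1 x =
      1 - 2 / √Real.pi * ∫ s in (0 : ℝ)..t, Real.exp (-s ^ 2) := by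
  have hhalf : ∫ x in Ioi 0, gaussianPDFReal 0 1 x = 1 / 2 := by
    have habs := integral_comp_abs (f := gaussianPDFReal 0 1)
    have heven : ∀ x, gaussianPDFReal 0 1 |x| = gaussianPDFReal 0 1 x := fun x => by
      simp only [gaussianPDFReal, sub_zero, sq_abs]
    rw [integral_congr_ae (ae_of_all _ heven), integral_gaussianPDFReal_eq_one 0 one_ne_zero]
      at habs
    linarith
  have hsplit := intervalIntegral.integral_interval_add_Ioi (a := 0) (b := √2 * t)
    (integrable_gaussianPDFReal 0 1).integrableOn (integrable_gaussianPDFReal 0 1).integrableOn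
  have hsubst : ∫ x in 0..√2 * t, gaussianPDFReal 0 1 x =
      (√Real.pi)⁻¹ * ∫ s in (0 : ℝ)..t, Real.exp (-s ^ 2) := by
    have h := intervalIntegral.mul_integral_comp_mul_left (f := gaussianPDFReal 0 1)
      (a := 0) (b := t) √2
    simp only [mul_zero, gaussianPDFReal_sqrt_two_mul, intervalIntegral.integral_const_mul] at h
    rw [← h, mul_inv]
    field_simp
  rw [hsubst, hhalf] at hsplit
  linear_combination 2 * hsplit

/-- The threshold `l` is matched to the sparsity `β` and the parameter `a`: the normal equations of
the soft-thresholding problem, from which `a` is recovered as the squared Gaussian distance to the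
descent cone of the `ℓ¹` norm. -/
structure IsMatchedThreshold (β a l : ℝ) : Prop where
  threshold_nonneg : 0 ≤ l
  integral_eq : (1 - β) * ∫ x, softThreshold l x ∂(gaussianReal 0 1) = β * l
  integral_sq_eq :
    (1 - β) * ∫ x, softThreshold l x ^ 2 ∂(gaussianReal 0 1) = a - β * (1 + l ^ 2)

lemma isMatchedThreshold_sqrt_two_mul {a β t : ℝ} (hβ : β ≠ 1) (ht : 0 ≤ t)
    (herf : 2 / √Real.pi * ∫ s in (0 : ℝ)..t, Real.exp (-s ^ 2) = (1 - a) / (1 - β))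
    (hchar : (1 - β) * √(2 / Real.pi) * Real.exp (-t ^ 2) = a * (√2 * t)) :
    IsMatchedThreshold β a (√2 * t) := by
  have hl : 0 ≤ √2 * t := by positivity
  have htail : (1 - β) * (2 * ∫ x in Ioi (√2 * t), gaussianPDFReal 0 1 x) = a - β := by
    rw [two_mul_integral_Ioi_gaussianPDFReal_sqrt_two_mul, herf, mul_sub,
      mul_div_cancel₀ _ (sub_ne_zero.2 hβ.symm)]
    ring
  have hpdf : (1 - β) * (2 * gaussianPDFReal 0 1 (√2 * t)) = a * (√2 * t) := by
    rw [← hchar, gaussianPDFReal_sqrt_two_mul, Real.sqrt_div zero_le_two]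
    have hsqrt : 2 * (√2 * √Real.pi)⁻¹ = √2 / √Real.pi := by
      field_simp
      rw [Real.sq_sqrt zero_le_two]
    linear_combination (1 - β) * Real.exp (-t ^ 2) * hsqrt
  refine ⟨hl, ?_, ?_⟩
  · rw [integral_softThreshold hl]
    linear_combination hpdf - √2 * t * htail
  · rw [integral_softThreshold_sq hl]
    linear_combination (1 + (√2 * t) ^ 2) * htail - √2 * t * hpdf

end SoftThreshold

section DescentCone

/-- The soft thresholding operator at level `l`, of magnitude `softThreshold l`. -/
noncomputable def shrink (l x : ℝ) : ℝ := if 0 ≤ x then softThreshold l x else -softThreshold l x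

lemma abs_shrink (l x : ℝ) : |shrink l x| = softThreshold l x := by
  unfold shrink
  split_ifs
  · exact abs_of_nonneg (softThreshold_nonneg l x)
  · rw [abs_neg, abs_of_nonneg (softThreshold_nonneg l x)]

lemma mul_shrink (l x : ℝ) : x * shrink l x = softThreshold l x ^ 2 + l * softThreshold l x := by
  rw [← abs_mul_softThreshold]
  unfold shrink
  split_ifs with hx
  · rw [abs_of_nonneg hx]
  · rw [abs_of_neg (not_le.1 hx), mul_neg, neg_mul]

lemma abs_sub_shrink_le {l : ℝ} (hl : 0 ≤ l) (x : ℝ) : |x - shrink l x| ≤ l := by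
  have hle := abs_sub_le_softThreshold l x
  have hle_abs := softThreshold_le_abs hl x
  unfold shrink
  split_ifs with hx
  · rw [abs_of_nonneg hx] at hle hle_abs
    rw [abs_of_nonneg (by linarith)]
    linarith
  · rw [abs_of_neg (not_le.1 hx)] at hle hle_abs
    rw [abs_of_nonpos (by linarith)]
    linarith

variable {ι : Type*} [DecidableEq ι] {K : Finset ι}

/-- The vector `h - z` for a `z` which equals `s` on `K` and lies in `[-l, l]` off `K`. For `s = l`
this `z` is a normal vector of the cone `descentCone K` below; a slightly larger `s` puts `h - z`
itself inside the cone when `h` is typical. -/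
noncomputable def coneResidual (K : Finset ι) (l s : ℝ) (h : ι → ℝ) (i : ι) : ℝ :=
  if i ∈ K then h i - s else shrink l (h i)

lemma coneResidual_of_mem {l s : ℝ} {h : ι → ℝ} {i : ι} (hi : i ∈ K) :
    coneResidual K l s h i = h i - s := if_pos hi

variable [Fintype ι]

/-- The cone of directions along which the `ℓ¹` norm does not increase, to first order, at a vector
which is positive exactly on `K`. -/
def descentCone (K : Finset ι) : Set (ι → ℝ) := {w | ∑ i ∈ K, w i + ∑ i ∈ Kᶜ, |w i| ≤ 0}

lemma mem_descentCone {w : ι → ℝ} :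
    w ∈ descentCone K ↔ ∑ i ∈ K, w i + ∑ i ∈ Kᶜ, |w i| ≤ 0 := Iff.rfl

lemma smul_mem_descentCone {w : ι → ℝ} (hw : w ∈ descentCone K) {r : ℝ} (hr : 0 ≤ r) :
    r • w ∈ descentCone K := by
  simp only [mem_descentCone, Pi.smul_apply, smul_eq_mul, abs_mul, abs_of_nonneg hr,
    ← Finset.mul_sum, ← mul_add]
  exact mul_nonpos_of_nonneg_of_nonpos hr hw

lemma coneResidual_of_mem_compl {l s : ℝ} {h : ι → ℝ} {i : ι} (hi : i ∈ Kᶜ) :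
    coneResidual K l s h i = shrink l (h i) := if_neg (Finset.mem_compl.1 hi)

lemma euclNorm_coneResidual_sq (K : Finset ι) (l s : ℝ) (h : ι → ℝ) :
    euclNorm (coneResidual K l s h) ^ 2 =
      ∑ i ∈ K, h i ^ 2 - 2 * s * ∑ i ∈ K, h i + K.card * s ^ 2
        + ∑ i ∈ Kᶜ, softThreshold l (h i) ^ 2 := by
  rw [euclNorm_sq, ← Finset.sum_add_sum_compl K]
  congr 1
  · rw [Finset.mul_sum, ← nsmul_eq_mul, ← Finset.sum_const, ← Finset.sum_sub_distrib,
      ← Finset.sum_add_distrib]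
    refine Finset.sum_congr rfl fun i hi => ?_
    rw [coneResidual_of_mem hi]
    ring
  · refine Finset.sum_congr rfl fun i hi => ?_
    rw [coneResidual_of_mem_compl hi, ← sq_abs, abs_shrink]

lemma dotProduct_coneResidual (K : Finset ι) (l s : ℝ) (h : ι → ℝ) :
    h ⬝ᵥ coneResidual K l s h =
      ∑ i ∈ K, h i ^ 2 - s * ∑ i ∈ K, h i
        + (∑ i ∈ Kᶜ, softThreshold l (h i) ^ 2 + l * ∑ i ∈ Kᶜ, softThreshold l (h i)) := by
  rw [dotProduct, ← Finset.sum_add_sum_compl K, Finset.mul_sum, Finset.mul_sum,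
    ← Finset.sum_sub_distrib, ← Finset.sum_add_distrib]
  congr 1
  · refine Finset.sum_congr rfl fun i hi => ?_
    rw [coneResidual_of_mem hi]
    ring
  · refine Finset.sum_congr rfl fun i hi => ?_
    rw [coneResidual_of_mem_compl hi, mul_shrink]

lemma coneResidual_mem_descentCone_iff {l s : ℝ} {h : ι → ℝ} :
    coneResidual K l s h ∈ descentCone K ↔
      ∑ i ∈ K, h i + ∑ i ∈ Kᶜ, softThreshold l (h i) ≤ K.card * s := by
  have hK : ∑ i ∈ K, coneResidual K l s h i = ∑ i ∈ K, h i - K.card * s := by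
    rw [← nsmul_eq_mul, ← Finset.sum_const, ← Finset.sum_sub_distrib]
    exact Finset.sum_congr rfl fun i hi => coneResidual_of_mem hi
  have hKc : ∑ i ∈ Kᶜ, |coneResidual K l s h i| = ∑ i ∈ Kᶜ, softThreshold l (h i) :=
    Finset.sum_congr rfl fun i hi => by rw [coneResidual_of_mem_compl hi, abs_shrink]
  rw [mem_descentCone, hK, hKc, sub_add_eq_add_sub, sub_nonpos]

lemma dotProduct_le_euclNorm_coneResidual_mul {l : ℝ} (hl : 0 ≤ l) (h : ι → ℝ) {w : ι → ℝ}
    (hw : w ∈ descentCone K) :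
    h ⬝ᵥ w ≤ euclNorm (coneResidual K l l h) * euclNorm w := by
  have hK : ∑ i ∈ K, (h - coneResidual K l l h) i * w i = l * ∑ i ∈ K, w i := by
    rw [Finset.mul_sum]
    refine Finset.sum_congr rfl fun i hi => ?_
    rw [Pi.sub_apply, coneResidual_of_mem hi, sub_sub_cancel]
  have hKc : ∑ i ∈ Kᶜ, (h - coneResidual K l l h) i * w i ≤ l * ∑ i ∈ Kᶜ, |w i| := by
    rw [Finset.mul_sum]
    refine Finset.sum_le_sum fun i hi => (le_abs_self _).trans ?_
    rw [Pi.sub_apply, coneResidual_of_mem_compl hi, abs_mul]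
    exact mul_le_mul_of_nonneg_right (abs_sub_shrink_le hl _) (abs_nonneg _)
  have hnormal : (h - coneResidual K l l h) ⬝ᵥ w ≤ 0 := by
    rw [dotProduct, ← Finset.sum_add_sum_compl K, hK]
    have := mul_nonpos_of_nonneg_of_nonpos hl (mem_descentCone.1 hw)
    linarith
  rw [sub_dotProduct, sub_nonpos] at hnormal
  exact hnormal.trans (dotProduct_le_euclNorm_mul_euclNorm _ _)

/-- The statistics of `h` which govern its correlation with `descentCone K` are within `η * N` of
the values expected for a standard Gaussian `h`, with `#K ≈ β * N` and `#Kᶜ ≈ (1 - β) * N`, when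
`l` is the threshold matched to `β` and `a`. -/
structure IsTypical (K : Finset ι) (h : ι → ℝ) (β l a η N : ℝ) : Prop where
  card : |(K.card : ℝ) - β * N| ≤ η * N
  sum : |∑ i ∈ K, h i| ≤ η * N
  sum_sq : |∑ i ∈ K, h i ^ 2 - β * N| ≤ η * N
  sum_compl : |∑ i ∈ Kᶜ, softThreshold l (h i) - β * l * N| ≤ η * N
  sum_compl_sq :
    |∑ i ∈ Kᶜ, softThreshold l (h i) ^ 2 - (a - β * (1 + l ^ 2)) * N| ≤ η * N

namespace IsTypical

variable {h : ι → ℝ} {β l a η N : ℝ}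

lemma euclNorm_coneResidual_sq_le (H : IsTypical K h β l a η N) {τ : ℝ} (hs : 0 ≤ l + τ) :
    euclNorm (coneResidual K l (l + τ) h) ^ 2 ≤
      (a + 2 * τ * β * l + β * τ ^ 2 + η * (2 + 2 * (l + τ) + (l + τ) ^ 2)) * N := by
  have hcard := mul_le_mul_of_nonneg_right (abs_le.1 H.card).2 (sq_nonneg (l + τ))
  have hsum := mul_le_mul_of_nonneg_left (abs_le.1 H.sum).1 hs
  rw [euclNorm_coneResidual_sq]
  linear_combination (abs_le.1 H.sum_sq).2 + (abs_le.1 H.sum_compl_sq).2 + hcard + 2 * hsum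

lemma coneResidual_mem_descentCone (H : IsTypical K h β l a η N) {τ : ℝ} (hs : 0 ≤ l + τ)
    (hN : 0 ≤ N) (hη : η * (2 + (l + τ)) ≤ β * τ) :
    coneResidual K l (l + τ) h ∈ descentCone K := by
  have hcard := mul_le_mul_of_nonneg_right (abs_le.1 H.card).1 hs
  rw [coneResidual_mem_descentCone_iff]
  linear_combination (abs_le.1 H.sum).2 + (abs_le.1 H.sum_compl).2 + hcard + N * hη

lemma le_dotProduct_coneResidual (H : IsTypical K h β l a η N) (hl : 0 ≤ l) {s : ℝ} (hs : 0 ≤ s) :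
    (a - η * (2 + l + s)) * N ≤ h ⬝ᵥ coneResidual K l s h := by
  have hsum := mul_le_mul_of_nonneg_left (abs_le.1 H.sum).2 hs
  have hcompl := mul_le_mul_of_nonneg_left (abs_le.1 H.sum_compl).1 hl
  rw [dotProduct_coneResidual]
  linear_combination
    (abs_le.1 H.sum_sq).1 + (abs_le.1 H.sum_compl_sq).1 + hsum + hcompl

lemma euclNorm_coneResidual_le (H : IsTypical K h β l a η N) {τ δ : ℝ} (hs : 0 ≤ l + τ)
    (hN : 0 ≤ N) (ha : 0 ≤ a) (hδ : 0 ≤ δ)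
    (hη : 2 * τ * β * l + β * τ ^ 2 + η * (2 + 2 * (l + τ) + (l + τ) ^ 2) ≤ 2 * √a * δ) :
    euclNorm (coneResidual K l (l + τ) h) ≤ (√a + δ) * √N := by
  refine le_of_sq_le_sq ?_ (by positivity)
  rw [mul_pow, Real.sq_sqrt hN]
  refine (H.euclNorm_coneResidual_sq_le hs).trans (mul_le_mul_of_nonneg_right ?_ hN)
  linear_combination hη - Real.sq_sqrt ha + sq_nonneg δ

lemma dotProduct_le_mul_euclNorm (H : IsTypical K h β l a η N) {δ : ℝ} (hl : 0 ≤ l)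
    (hN : 0 ≤ N) (ha : 0 ≤ a) (hδ : 0 ≤ δ) (hη : η * (2 + 2 * l + l ^ 2) ≤ 2 * √a * δ)
    {w : ι → ℝ} (hw : w ∈ descentCone K) :
    h ⬝ᵥ w ≤ (√a + δ) * √N * euclNorm w := by
  have hnorm := H.euclNorm_coneResidual_le (τ := 0) (by simpa using hl) hN ha hδ (by simpa using hη)
  rw [add_zero] at hnorm
  exact (dotProduct_le_euclNorm_coneResidual_mul hl h hw).trans
    (mul_le_mul_of_nonneg_right hnorm (euclNorm_nonneg w))

end IsTypical

lemma exists_mem_descentCone_euclNorm_eq_one {h d : ι → ℝ} {b : ℝ} (hd : d ∈ descentCone K)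
    (hpos : 0 < h ⬝ᵥ d) (hb : b * euclNorm d ≤ h ⬝ᵥ d) :
    ∃ w ∈ descentCone K, euclNorm w = 1 ∧ b ≤ h ⬝ᵥ w := by
  have hd_pos : 0 < euclNorm d := by
    refine (euclNorm_nonneg d).lt_of_ne fun hzero => hpos.not_ge ?_
    simpa only [← hzero, mul_zero] using dotProduct_le_euclNorm_mul_euclNorm h d
  refine ⟨(euclNorm d)⁻¹ • d, smul_mem_descentCone hd (inv_pos.2 hd_pos).le, ?_, ?_⟩
  · rw [euclNorm_smul, abs_of_pos (inv_pos.2 hd_pos), inv_mul_cancel₀ hd_pos.ne']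
  · rwa [dotProduct_smul, smul_eq_mul, inv_mul_eq_div, le_div_iff₀ hd_pos]

lemma IsTypical.exists_unit_mem_descentCone {h : ι → ℝ} {β l a η N : ℝ}
    (H : IsTypical K h β l a η N) {δ τ : ℝ} (hl : 0 ≤ l) (hN : 0 < N) (ha : 0 < a) (hδ : 0 < δ)
    (hδa : δ ≤ √a) (hη : 0 ≤ η) (hτ : 0 ≤ τ) (hητ : η * (2 + (l + τ)) ≤ β * τ)
    (hητ_sq : η * (2 + 2 * (l + τ) + (l + τ) ^ 2) ≤ √a * δ / 2)
    (hτ_sq : 2 * τ * β * l + β * τ ^ 2 ≤ √a * δ / 2) :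
    ∃ w ∈ descentCone K, euclNorm w = 1 ∧ (√a - δ) * √N ≤ h ⬝ᵥ w := by
  have hs : 0 ≤ l + τ := add_nonneg hl hτ
  have hdot : (a - √a * δ / 2) * N ≤ h ⬝ᵥ coneResidual K l (l + τ) h := by
    refine le_trans (mul_le_mul_of_nonneg_right ?_ hN.le) (H.le_dotProduct_coneResidual hl hs)
    have : 0 ≤ η * (τ + (l + τ) ^ 2) := by positivity
    linear_combination hητ_sq + this
  have hnorm := H.euclNorm_coneResidual_le (δ := δ / 2) hs hN.le ha.le (by positivity)
    (by linear_combination hητ_sq + hτ_sq)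
  have hsq : √a * √a = a := Real.mul_self_sqrt ha.le
  have hδ_mul : √a * δ ≤ √a * √a := mul_le_mul_of_nonneg_left hδa (Real.sqrt_nonneg a)
  refine exists_mem_descentCone_euclNorm_eq_one (H.coneResidual_mem_descentCone hs hN.le hητ)
    (lt_of_lt_of_le (mul_pos (by linarith) hN) hdot) ?_
  calc (√a - δ) * √N * euclNorm (coneResidual K l (l + τ) h)
      ≤ (√a - δ) * √N * ((√a + δ / 2) * √N) :=
        mul_le_mul_of_nonneg_left hnorm (mul_nonneg (sub_nonneg.2 hδa) (Real.sqrt_nonneg N))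
    _ = (√a * √a - √a * δ / 2 - δ ^ 2 / 2) * (√N * √N) := by ring
    _ ≤ (a - √a * δ / 2) * N := by
        rw [hsq, Real.mul_self_sqrt hN.le]
        exact mul_le_mul_of_nonneg_right (by linarith [sq_nonneg δ]) hN.le
    _ ≤ _ := hdot

end DescentCone

section ExpSmall

/-- A sequence of probabilities decays exponentially fast. -/
def ExpSmall (p : ℕ → ℝ≥0∞) : Prop :=
  ∃ c > (0 : ℝ), ∀ᶠ n : ℕ in atTop, p n ≤ ENNReal.ofReal (Real.exp (-(c * n)))

namespace ExpSmall

variable {p q : ℕ → ℝ≥0∞}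

lemma mono (hq : ExpSmall q) (hpq : p ≤ᶠ[atTop] q) : ExpSmall p := by
  obtain ⟨c, hc, hle⟩ := hq
  exact ⟨c, hc, hpq.trans hle⟩

lemma of_eventually_le_const_mul_exp {C c : ℝ} (hc : 0 < c)
    (hp : ∀ᶠ n : ℕ in atTop, p n ≤ ENNReal.ofReal (C * Real.exp (-(c * n)))) : ExpSmall p := by
  have hlim : Tendsto (fun n : ℕ => Real.exp (c / 2 * n)) atTop atTop :=
    Real.tendsto_exp_atTop.comp (tendsto_natCast_atTop_atTop.const_mul_atTop (half_pos hc))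
  refine ⟨c / 2, half_pos hc, ?_⟩
  filter_upwards [hp, hlim.eventually_ge_atTop C] with n hn hC
  refine hn.trans (ENNReal.ofReal_le_ofReal ?_)
  calc C * Real.exp (-(c * n)) ≤ Real.exp (c / 2 * n) * Real.exp (-(c * n)) := by gcongr
    _ = Real.exp (-(c / 2 * n)) := by rw [← Real.exp_add]; ring_nf

lemma add (hp : ExpSmall p) (hq : ExpSmall q) : ExpSmall fun n => p n + q n := by
  obtain ⟨c, hc, hpc⟩ := hp
  obtain ⟨d, hd, hqd⟩ := hq
  refine of_eventually_le_const_mul_exp (C := 2) (lt_min hc hd) ?_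
  filter_upwards [hpc, hqd] with n hpn hqn
  refine (add_le_add hpn hqn).trans ?_
  rw [← ENNReal.ofReal_add (by positivity) (by positivity), two_mul]
  gcongr
  exacts [min_le_left c d, min_le_right c d]

lemma natCast_mul (hp : ExpSmall p) (k : ℕ) : ExpSmall fun n => k * p n := by
  obtain ⟨c, hc, hle⟩ := hp
  refine .of_eventually_le_const_mul_exp (C := k) hc ?_
  filter_upwards [hle] with n hn
  rw [ENNReal.ofReal_mul k.cast_nonneg, ENNReal.ofReal_natCast]
  gcongr

lemma union {Ω : ℕ → Type*} [∀ n, MeasurableSpace (Ω n)] {μ : ∀ n, Measure (Ω n)}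
    {s t : ∀ n, Set (Ω n)} (hs : ExpSmall fun n => μ n (s n)) (ht : ExpSmall fun n => μ n (t n)) :
    ExpSmall fun n => μ n (s n ∪ t n) :=
  (hs.add ht).mono (.of_forall fun _ => measure_union_le _ _)

end ExpSmall

lemma expSmall_le_abs_sum_sub {f : ℝ → ℝ} (hf : Measurable f) (hbound : ∀ x, |f x| ≤ 1 + x ^ 2)
    {δ : ℝ} (hδ : 0 < δ) {κ : ℕ → Type*} [∀ n, Fintype (κ n)] (S : ∀ n, Finset (κ n))
    (hS : ∀ᶠ n in atTop, (S n).card ≤ n) :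
    ExpSmall fun n => stdGaussianPi (κ n)
      {h | δ * n ≤ |∑ i ∈ S n, f (h i) - (S n).card * ∫ x, f x ∂(gaussianReal 0 1)|} := by
  obtain ⟨c, hc, hle⟩ := exists_measure_pi_real_abs_sum_sub_ge_le_exp hf
    (zero_mem_interior_integrableExpSet_gaussianReal one_pos hf (by simpa only [one_mul])) hδ
  refine ExpSmall.of_eventually_le_const_mul_exp (C := 2) hc ?_
  filter_upwards [hS] with n hn
  rw [← ofReal_measureReal]
  exact ENNReal.ofReal_le_ofReal (hle (κ n) (S n) n (by exact_mod_cast hn))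

lemma expSmall_le_abs_sum_sq_sub {δ : ℝ} (hδ : 0 < δ) {κ : ℕ → Type*} [∀ n, Fintype (κ n)]
    (S : ∀ n, Finset (κ n)) (hS : ∀ᶠ n in atTop, (S n).card ≤ n) :
    ExpSmall fun n => stdGaussianPi (κ n) {h | δ * n ≤ |∑ i ∈ S n, h i ^ 2 - (S n).card * 1|} := by
  have hbound (x : ℝ) : |x ^ 2| ≤ 1 + x ^ 2 := by
    rw [abs_of_nonneg (sq_nonneg x)]
    linarith
  have hinteg : ∫ x, x ^ 2 ∂(gaussianReal 0 1) = 1 := by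
    rw [integral_sq_gaussianReal_zero, NNReal.coe_one]
  simpa only [hinteg] using expSmall_le_abs_sum_sub (measurable_id'.pow_const 2) hbound hδ S hS

end ExpSmall

section Favorable

lemma abs_sub_mul_le_of_abs_sub_mul_le {T k β μ v η N : ℝ} (hT : |T - k * μ| ≤ η / 2 * N)
    (hk : |k - β * N| ≤ 1) (hμ : β * μ = v) (hN : |μ| ≤ η / 2 * N) : |T - v * N| ≤ η * N := by
  calc |T - v * N| = |(T - k * μ) + (k - β * N) * μ| := by rw [← hμ]; ring_nf
    _ ≤ |T - k * μ| + |k - β * N| * |μ| := (abs_add_le _ _).trans_eq (by rw [abs_mul])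
    _ ≤ η / 2 * N + 1 * (η / 2 * N) := by gcongr
    _ = η * N := by ring

lemma IsMatchedThreshold.isTypical {β a l : ℝ} (hl : IsMatchedThreshold β a l) {ι : Type*}
    [Fintype ι] [DecidableEq ι] {K : Finset ι} {h : ι → ℝ} {η N : ℝ} (hι : Fintype.card ι = N)
    (hK : |K.card - β * N| ≤ 1) (hN : 1 ≤ η / 2 * N)
    (hN₁ : |∫ x, softThreshold l x ∂(gaussianReal 0 1)| ≤ η / 2 * N)
    (hN₂ : |∫ x, softThreshold l x ^ 2 ∂(gaussianReal 0 1)| ≤ η / 2 * N)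
    (hsum : |∑ i ∈ K, h i| ≤ η / 2 * N)
    (hsum_sq : |∑ i ∈ K, h i ^ 2 - K.card * 1| ≤ η / 2 * N)
    (hcompl : |∑ i ∈ Kᶜ, softThreshold l (h i)
      - Kᶜ.card * ∫ x, softThreshold l x ∂(gaussianReal 0 1)| ≤ η / 2 * N)
    (hcompl_sq : |∑ i ∈ Kᶜ, softThreshold l (h i) ^ 2
      - Kᶜ.card * ∫ x, softThreshold l x ^ 2 ∂(gaussianReal 0 1)| ≤ η / 2 * N) :
    IsTypical K h β l a η N := by
  have hKc : |(Kᶜ.card : ℝ) - (1 - β) * N| ≤ 1 := by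
    rwa [Finset.card_compl, Nat.cast_sub K.card_le_univ, hι, abs_sub_comm,
      show (1 - β) * N - (N - K.card) = K.card - β * N by ring]
  exact
    { card := by linarith
      sum := by linarith
      sum_sq := abs_sub_mul_le_of_abs_sub_mul_le hsum_sq hK (mul_one β) (by rwa [abs_one])
      sum_compl := abs_sub_mul_le_of_abs_sub_mul_le hcompl hKc hl.integral_eq hN₁
      sum_compl_sq := abs_sub_mul_le_of_abs_sub_mul_le hcompl_sq hKc hl.integral_sq_eq hN₂ }

lemma eventually_le_mul_natCast (b : ℝ) {δ : ℝ} (hδ : 0 < δ) : ∀ᶠ n : ℕ in atTop, b ≤ δ * n :=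
  (tendsto_natCast_atTop_atTop.const_mul_atTop hδ).eventually_ge_atTop b

lemma abs_le_one_add_sq (x : ℝ) : |x| ≤ 1 + x ^ 2 := by
  rw [← sq_abs]
  nlinarith [sq_nonneg (|x| - 1)]

lemma IsMatchedThreshold.expSmall_not_isTypical {β a l : ℝ} (hl : IsMatchedThreshold β a l)
    {ι : ℕ → Type*} [∀ n, Fintype (ι n)] [∀ n, DecidableEq (ι n)]
    (hι : ∀ n, Fintype.card (ι n) = n) {K : ∀ n, Finset (ι n)}
    (hK : ∀ n, |(K n).card - β * n| ≤ 1) {η : ℝ} (hη : 0 < η) :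
    ExpSmall fun n => stdGaussianPi (ι n) {h | ¬IsTypical (K n) h β l a η n} := by
  have hcard (S : ∀ n, Finset (ι n)) : ∀ᶠ n in atTop, (S n).card ≤ n :=
    .of_forall fun n => (S n).card_le_univ.trans_eq (hι n)
  have hle (x : ℝ) : |softThreshold l x| ≤ |x| := by
    rw [abs_of_nonneg (softThreshold_nonneg l x)]
    exact softThreshold_le_abs hl.threshold_nonneg x
  have hsum := expSmall_le_abs_sum_sub measurable_id' abs_le_one_add_sq (half_pos hη) K (hcard K)
  have hsum_sq := expSmall_le_abs_sum_sq_sub (half_pos hη) K (hcard K)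
  have hcompl := expSmall_le_abs_sum_sub (measurable_softThreshold l)
    (fun x => (hle x).trans (abs_le_one_add_sq x)) (half_pos hη) (fun n => (K n)ᶜ) (hcard _)
  have hcompl_sq := expSmall_le_abs_sum_sub ((measurable_softThreshold l).pow_const 2)
    (fun x => by rw [abs_of_nonneg (sq_nonneg _)]; linarith [sq_le_sq.2 (hle x)])
    (half_pos hη) (fun n => (K n)ᶜ) (hcard _)
  refine (((hsum.union hsum_sq).union hcompl).union hcompl_sq).mono ?_
  filter_upwards [eventually_le_mul_natCast _ (half_pos hη),
    eventually_le_mul_natCast _ (half_pos hη), eventually_le_mul_natCast _ (half_pos hη)]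
    with n hN hN₁ hN₂
  refine measure_mono fun h hh => ?_
  by_contra hnot
  simp only [mem_union, mem_ofPred_eq, not_or, not_le, integral_id_gaussianReal, mul_zero,
    sub_zero] at hnot
  obtain ⟨⟨⟨hsum, hsum_sq⟩, hcompl⟩, hcompl_sq⟩ := hnot
  exact hh (hl.isTypical (by rw [hι]) (hK n) hN hN₁ hN₂ hsum.le hsum_sq.le hcompl.le hcompl_sq.le)

lemma exists_typicality_tolerances {β : ℝ} (hβ : 0 < β) (l : ℝ) {ε : ℝ} (hε : 0 < ε) :
    ∃ τ > 0, ∃ η > 0, η * (2 + (l + τ)) ≤ β * τ ∧ η * (2 + 2 * (l + τ) + (l + τ) ^ 2) ≤ ε ∧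
      2 * τ * β * l + β * τ ^ 2 ≤ ε := by
  have small (f : ℝ → ℝ) (hf : Continuous f) (hf0 : f 0 = 0) {b : ℝ} (hb : 0 < b) :
      ∀ᶠ x in 𝓝[>] 0, f x ≤ b :=
    ((hf.tendsto' 0 0 hf0).eventually_le_const hb).filter_mono nhdsWithin_le_nhds
  obtain ⟨τ, hτε, hτ⟩ := ((small (fun τ => 2 * τ * β * l + β * τ ^ 2) (by fun_prop) (by simp)
    hε).and self_mem_nhdsWithin).exists
  obtain ⟨η, ⟨hητ, hηε⟩, hη⟩ :=
    (((small (fun η => η * (2 + (l + τ))) (by fun_prop) (by simp) (mul_pos hβ hτ)).and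
      (small (fun η => η * (2 + 2 * (l + τ) + (l + τ) ^ 2)) (by fun_prop) (by simp) hε)).and
      self_mem_nhdsWithin).exists
  exact ⟨τ, hτ, η, hη, hητ, hηε, hτε⟩

/-- The Gaussian pair `x = (g, (h, h₀))` of the comparison process behaves as in the limit: the norm
of `g` is close to `r * √N`, the largest correlation of `h` with a unit vector of `descentCone K` is
close to `s * √N`, and `h₀` is negligible. -/
structure IsFavorable {κ ι : Type*} [Fintype κ] [Fintype ι] [DecidableEq ι] (K : Finset ι)
    (r s δ N : ℝ) (x : (κ → ℝ) × (ι ⊕ Unit → ℝ)) : Prop where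
  abs_euclNorm_sub_le : |euclNorm x.1 - r * √N| ≤ δ * √N
  abs_inr_le : |x.2 (Sum.inr ())| ≤ δ * √N
  dotProduct_le : ∀ w ∈ descentCone K, (x.2 ∘ Sum.inl) ⬝ᵥ w ≤ (s + δ) * √N * euclNorm w
  exists_le_dotProduct :
    ∃ w ∈ descentCone K, euclNorm w = 1 ∧ (s - δ) * √N ≤ (x.2 ∘ Sum.inl) ⬝ᵥ w

lemma abs_euclNorm_sub_le {κ : Type*} [Fintype κ] {x : κ → ℝ} {r δ N : ℝ} (hr : 0 < r) (hN : 0 < N)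
    (hx : |∑ i, x i ^ 2 - r ^ 2 * N| ≤ δ * r * N) : |euclNorm x - r * √N| ≤ δ * √N := by
  have hrN : 0 < r * √N := by positivity
  refine le_of_mul_le_mul_right ?_ hrN
  calc |euclNorm x - r * √N| * (r * √N) ≤ |euclNorm x - r * √N| * |euclNorm x + r * √N| := by
        gcongr
        exact (le_add_of_nonneg_left (euclNorm_nonneg x)).trans (le_abs_self _)
    _ = |euclNorm x ^ 2 - r ^ 2 * √N ^ 2| := by rw [← abs_mul]; ring_nf
    _ = |∑ i, x i ^ 2 - r ^ 2 * N| := by rw [euclNorm_sq, Real.sq_sqrt hN.le]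
    _ ≤ δ * r * N := hx
    _ = δ * √N * (r * √N) := by nth_rw 1 [← Real.mul_self_sqrt hN.le]; ring

lemma expSmall_abs_euclNorm_sub_gt {r : ℝ} (hr : 0 < r) {κ : ℕ → Type*} [∀ n, Fintype (κ n)]
    (hκ_le : ∀ n, Fintype.card (κ n) ≤ n) (hκ : ∀ n, |Fintype.card (κ n) - r ^ 2 * n| ≤ 1)
    {δ : ℝ} (hδ : 0 < δ) :
    ExpSmall fun n => stdGaussianPi (κ n) {g | δ * √n < |euclNorm g - r * √n|} := by
  have hδr : 0 < δ * r / 2 := by positivity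
  refine (expSmall_le_abs_sum_sq_sub hδr (fun n => Finset.univ) (.of_forall hκ_le)).mono ?_
  filter_upwards [eventually_gt_atTop 0, eventually_le_mul_natCast 1 hδr] with n hn hn'
  refine measure_mono fun g hg => ?_
  by_contra hnot
  rw [mem_ofPred_eq, not_le, Finset.card_univ] at hnot
  exact hg.not_ge (abs_euclNorm_sub_le hr (by exact_mod_cast hn)
    (abs_sub_mul_le_of_abs_sub_mul_le hnot.le (hκ n) (mul_one _) (by rwa [abs_one])))

lemma expSmall_abs_eval_gt {κ : ℕ → Type*} [∀ n, Fintype (κ n)] (k : ∀ n, κ n) {δ : ℝ}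
    (hδ : 0 < δ) : ExpSmall fun n => stdGaussianPi (κ n) {h | δ * √n < |h (k n)|} := by
  have hδ_sq : 0 < δ ^ 2 / 2 := by positivity
  refine (expSmall_le_abs_sum_sq_sub hδ_sq (fun n => {k n}) ?_).mono ?_
  · filter_upwards [eventually_ge_atTop 1] with n hn
    rwa [Finset.card_singleton]
  filter_upwards [eventually_le_mul_natCast 1 hδ_sq] with n hn
  refine measure_mono fun h hh => ?_
  have hsq : δ ^ 2 * n < h (k n) ^ 2 := by
    rw [← Real.sq_sqrt n.cast_nonneg, ← mul_pow, ← sq_abs (h (k n))]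
    exact pow_lt_pow_left₀ hh (by positivity) two_ne_zero
  rw [mem_ofPred_eq, Finset.sum_singleton, Finset.card_singleton, Nat.cast_one, mul_one]
  exact le_trans (by linarith) (le_abs_self _)

lemma expSmall_not_isFavorable {r β a l : ℝ} (hr : 0 < r) (hβ : 0 < β) (ha : 0 < a)
    (hl : IsMatchedThreshold β a l) {κ ι : ℕ → Type*} [∀ n, Fintype (κ n)] [∀ n, Fintype (ι n)]
    [∀ n, DecidableEq (ι n)] (hκ_le : ∀ n, Fintype.card (κ n) ≤ n)
    (hκ : ∀ n, |Fintype.card (κ n) - r ^ 2 * n| ≤ 1) (hι : ∀ n, Fintype.card (ι n) = n)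
    {K : ∀ n, Finset (ι n)} (hK : ∀ n, |(K n).card - β * n| ≤ 1) {δ : ℝ} (hδ : 0 < δ) :
    ExpSmall fun n => ((stdGaussianPi (κ n)).prod (stdGaussianPi (ι n ⊕ Unit)))
      {x | ¬IsFavorable (K n) r √a δ n x} := by
  have hs : 0 < √a := Real.sqrt_pos.2 ha
  set δ' := min δ √a
  have hδ' : 0 < δ' := lt_min hδ hs
  obtain ⟨τ, hτ, η, hη, hητ, hη_sq, hτ_sq⟩ :=
    exists_typicality_tolerances hβ l (by positivity : 0 < √a * δ' / 2)
  have hfst := (expSmall_abs_euclNorm_sub_gt hr hκ_le hκ hδ).mono (.of_forall fun n =>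
    (measurePreserving_fst (ν := stdGaussianPi (ι n ⊕ Unit))).measure_preimage_le _)
  have hinr := (expSmall_abs_eval_gt (fun n => (Sum.inr () : ι n ⊕ Unit)) hδ).mono
    (.of_forall fun n => (measurePreserving_snd (μ := stdGaussianPi (κ n))).measure_preimage_le _)
  have hinl := (hl.expSmall_not_isTypical hι hK hη).mono (.of_forall fun n =>
    (measurePreserving_comp_inl.comp (measurePreserving_snd
      (μ := stdGaussianPi (κ n)) (ν := stdGaussianPi (ι n ⊕ Unit)))).measure_preimage_le _)
  refine ((hfst.union hinr).union hinl).mono ?_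
  filter_upwards [eventually_gt_atTop 0] with n hn
  refine measure_mono fun x hx => ?_
  by_contra hnot
  simp only [mem_union, mem_preimage, mem_ofPred_eq, not_or, not_lt, not_not] at hnot
  obtain ⟨⟨hg, h0⟩, htyp⟩ := hnot
  have hN : (0 : ℝ) < n := by exact_mod_cast hn
  refine hx ⟨hg, h0, fun w hw => ?_, ?_⟩
  · refine htyp.dotProduct_le_mul_euclNorm hl.threshold_nonneg hN.le ha.le hδ.le ?_ hw
    calc η * (2 + 2 * l + l ^ 2) ≤ η * (2 + 2 * (l + τ) + (l + τ) ^ 2) := by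
          have := hl.threshold_nonneg
          gcongr <;> exact le_add_of_nonneg_right hτ.le
      _ ≤ √a * δ' / 2 := hη_sq
      _ ≤ √a * δ / 2 := by
          gcongr
          exact min_le_left _ _
      _ ≤ 2 * √a * δ := by linarith [mul_pos hs hδ]
  · obtain ⟨w, hw, hw_norm, hle⟩ := htyp.exists_unit_mem_descentCone hl.threshold_nonneg hN ha hδ'
      (min_le_right _ _) hη.le hτ.le hητ hη_sq hτ_sq
    refine ⟨w, hw, hw_norm, le_trans ?_ hle⟩
    gcongr
    exact min_le_left _ _

end Favorable

section Residual

/-- The coefficient vector `(-w, σ)`: with `v = σ v'`, the residual `v - A w` of the estimate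
`x̃ + w` is the standard Gaussian matrix `[A, v']` applied to it. -/
def augment {ι : Type*} (σ : ℝ) (w : ι → ℝ) : ι ⊕ Unit → ℝ := Sum.elim (-w) fun _ => σ

lemma continuous_augment {ι : Type*} (σ : ℝ) : Continuous (augment (ι := ι) σ) := by
  refine continuous_pi fun o => ?_
  rcases o with j | _
  · exact (continuous_apply j).neg
  · exact continuous_const

lemma convex_augment_image {ι : Type*} (σ : ℝ) {D : Set (ι → ℝ)} (hD : Convex ℝ D) :
    Convex ℝ (augment σ '' D) := by
  rintro _ ⟨u, hu, rfl⟩ _ ⟨v, hv, rfl⟩ a b ha hb hab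
  refine ⟨a • u + b • v, hD hu hv ha hb hab, ?_⟩
  ext (j | _)
  · simp only [augment, Sum.elim_inl, Pi.neg_apply, Pi.add_apply, Pi.smul_apply, smul_eq_mul]
    ring
  · simp only [augment, Sum.elim_inr, Pi.add_apply, Pi.smul_apply, smul_eq_mul, ← add_mul, hab,
      one_mul]

lemma euclNorm_augment {ι : Type*} [Fintype ι] (σ : ℝ) (w : ι → ℝ) :
    euclNorm (augment σ w) = √(euclNorm w ^ 2 + σ ^ 2) := by
  rw [← Real.sqrt_sq (euclNorm_nonneg (augment σ w)), euclNorm_sq, euclNorm_sq]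
  simp [augment, Fintype.sum_sum_type]

variable {m n : ℕ} {σ : ℝ}

instance isProbabilityMeasure_muAv (m n : ℕ) (σ : ℝ) : IsProbabilityMeasure (muAv m n σ) := by
  unfold muAv
  infer_instance

/-- The entries of the matrix `[A, v / σ]`, for the sample `ω = (A, v)`. -/
noncomputable def standardize (σ : ℝ) (ω : (Fin m → Fin n → ℝ) × (Fin m → ℝ)) :
    Fin m × (Fin n ⊕ Unit) → ℝ :=
  fun p => Sum.elim (ω.1 p.1) (fun _ => ω.2 p.1 / σ) p.2

lemma measurable_standardize (σ : ℝ) : Measurable (standardize (m := m) (n := n) σ) := by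
  refine measurable_pi_lambda _ fun p => ?_
  rcases p with ⟨i, j | _⟩ <;> simp only [standardize, Sum.elim_inl, Sum.elim_inr] <;> fun_prop

lemma measurePreserving_div_gaussianReal (hσ : 0 < σ) :
    MeasurePreserving (· / σ) (gaussianReal 0 (σ ^ 2).toNNReal) (gaussianReal 0 1) := by
  refine ⟨by fun_prop, ?_⟩
  rw [gaussianReal_map_div_const, zero_div]
  congr 1
  ext
  rw [NNReal.coe_div, Real.coe_toNNReal _ (sq_nonneg σ), NNReal.coe_one]
  exact div_self (pow_pos hσ 2).ne'

lemma measurePreserving_standardize (hσ : 0 < σ) :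
    MeasurePreserving (standardize σ) (muAv m n σ)
      (stdGaussianPi (Fin m × (Fin n ⊕ Unit))) := by
  refine ⟨measurable_standardize σ, (Measure.pi_eq fun s hs => ?_).symm⟩
  rw [Measure.map_apply (measurable_standardize σ) (MeasurableSet.univ_pi hs)]
  have hpre : standardize σ ⁻¹' (univ.pi s) =
      (univ.pi fun i : Fin m => univ.pi fun j : Fin n => s (i, .inl j)) ×ˢ
        (univ.pi fun i : Fin m => (· / σ) ⁻¹' s (i, .inr ())) := by
    ext ω
    simp only [standardize, mem_preimage, mem_prod, mem_univ_pi, Prod.forall, Sum.forall,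
      Sum.elim_inl, Sum.elim_inr, forall_and, Unique.forall_iff, PUnit.default_eq_unit]
  rw [hpre, muAv, Measure.prod_prod, Measure.pi_pi, Measure.pi_pi, Fintype.prod_prod_type]
  simp only [Fintype.prod_sum_type, Measure.pi_pi, Finset.univ_unique, Finset.prod_singleton,
    PUnit.default_eq_unit, Finset.prod_mul_distrib,
    (measurePreserving_div_gaussianReal hσ).measure_preimage (hs _).nullMeasurableSet]

/-- The LASSO objective at the estimate with error vector `w`. -/
noncomputable def residualNorm (σ : ℝ) (ω : (Fin m → Fin n → ℝ) × (Fin m → ℝ))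
    (w : Fin n → ℝ) : ℝ :=
  euclNorm (matrixOfProd (standardize σ ω) *ᵥ augment σ w)

lemma continuous_residualNorm (σ : ℝ) (ω : (Fin m → Fin n → ℝ) × (Fin m → ℝ)) :
    Continuous (residualNorm σ ω) :=
  continuous_euclNorm.comp (continuous_const.matrix_mulVec (continuous_augment σ))

lemma e2norm_eq_euclNorm (x : Fin n → ℝ) : e2norm x = euclNorm x := by
  rw [← Real.sqrt_sq (euclNorm_nonneg x), euclNorm_sq, e2norm]

lemma lassoVal_eq_residualNorm (hσ : 0 < σ) (xt x : Fin n → ℝ)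
    (ω : (Fin m → Fin n → ℝ) × (Fin m → ℝ)) :
    lassoVal m n xt ω x = residualNorm σ ω (x - xt) := by
  rw [lassoVal, e2norm_eq_euclNorm, residualNorm]
  congr 1
  ext i
  simp only [matrixOfProd, mulVec, dotProduct, of_apply, Function.curry_apply, standardize,
    augment, Fintype.sum_sum_type, Sum.elim_inl, Sum.elim_inr, Finset.univ_unique,
    Finset.sum_singleton, div_mul_cancel₀ _ hσ.ne', Pi.sub_apply, neg_sub, mul_sub,
    Finset.sum_sub_distrib]
  ring

end Residual

section Comparison

variable {ι κ : Type*} [Fintype ι] [Fintype κ] {m n : ℕ} {σ : ℝ}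

/-- Gordon's auxiliary objective for `residualNorm`. -/
noncomputable def auxObjective (σ : ℝ) (x : (κ → ℝ) × (ι ⊕ Unit → ℝ)) (w : ι → ℝ) : ℝ :=
  euclNorm (augment σ w) * euclNorm x.1 + augment σ w ⬝ᵥ x.2

lemma auxObjective_eq (σ : ℝ) (x : (κ → ℝ) × (ι ⊕ Unit → ℝ)) (w : ι → ℝ) :
    auxObjective σ x w = √(euclNorm w ^ 2 + σ ^ 2) * euclNorm x.1 + σ * x.2 (.inr ()) -
      (x.2 ∘ Sum.inl) ⬝ᵥ w := by
  rw [auxObjective, euclNorm_augment, dotProduct_comm]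
  simp only [augment, dotProduct, Fintype.sum_sum_type, Sum.elim_inl, Sum.elim_inr, Pi.neg_apply,
    mul_neg, Finset.sum_neg_distrib, Finset.univ_unique, Finset.sum_singleton,
    PUnit.default_eq_unit, Function.comp_apply]
  ring

lemma muAv_exists_residualNorm_lt_le [Nonempty (Fin m)] (hσ : 0 < σ) (B : Set (Fin n → ℝ))
    (c : ℝ) :
    muAv m n σ {ω | ∃ w ∈ B, residualNorm σ ω w < c} ≤
      2 * ((stdGaussianPi (Fin m)).prod (stdGaussianPi (Fin n ⊕ Unit)))
        {x | ∃ w ∈ B, auxObjective σ x w ≤ c} := by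
  have hpre : {ω : (Fin m → Fin n → ℝ) × (Fin m → ℝ) | ∃ w ∈ B, residualNorm σ ω w < c} =
      standardize σ ⁻¹' {A | ∃ p ∈ augment σ '' B, euclNorm (matrixOfProd A *ᵥ p) < c} := by
    simp only [preimage_ofPred_eq, exists_mem_image, residualNorm]
  rw [hpre]
  refine ((measurePreserving_standardize hσ).measure_preimage_le _).trans ?_
  simpa only [exists_mem_image, auxObjective] using
    stdGaussianPi_exists_euclNorm_mulVec_lt_le (augment σ '' B) c

lemma muAv_forall_lt_residualNorm_le [Nonempty (Fin m)] (hσ : 0 < σ) {D : Set (Fin n → ℝ)}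
    (hconv : Convex ℝ D) (hcomp : IsCompact D) (hne : D.Nonempty) {c : ℝ} (hc : 0 ≤ c) :
    muAv m n σ {ω | ∀ w ∈ D, c < residualNorm σ ω w} ≤
      2 * ((stdGaussianPi (Fin m)).prod (stdGaussianPi (Fin n ⊕ Unit)))
        {x | ∀ w ∈ D, c ≤ auxObjective σ x w} := by
  have hpre : {ω : (Fin m → Fin n → ℝ) × (Fin m → ℝ) | ∀ w ∈ D, c < residualNorm σ ω w} =
      standardize σ ⁻¹' {A | ∀ p ∈ augment σ '' D, c < euclNorm (matrixOfProd A *ᵥ p)} := by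
    simp only [preimage_ofPred_eq, forall_mem_image, residualNorm]
  rw [hpre]
  refine ((measurePreserving_standardize hσ).measure_preimage_le _).trans ?_
  simpa only [forall_mem_image, auxObjective] using stdGaussianPi_forall_lt_euclNorm_mulVec_le
    (convex_augment_image σ hconv) (hcomp.image (continuous_augment σ)) (hne.image _) hc

-- A minimizer in `B` contradicts `residualNorm ≤ c₁` somewhere on `D` and `residualNorm ≥ c₂` on
-- `B`; Gordon's two inequalities bound the failure of either.
lemma muAv_exists_isMinOn_residualNorm_le [Nonempty (Fin m)] (hσ : 0 < σ)
    {D B : Set (Fin n → ℝ)} (hconv : Convex ℝ D) (hcomp : IsCompact D) (hne : D.Nonempty)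
    {c₁ c₂ : ℝ} (hc₁ : 0 ≤ c₁) (hc : c₁ < c₂) :
    muAv m n σ {ω | ∃ w ∈ B, IsMinOn (residualNorm σ ω) D w} ≤
      2 * (((stdGaussianPi (Fin m)).prod (stdGaussianPi (Fin n ⊕ Unit)))
          {x | ∀ w ∈ D, c₁ ≤ auxObjective σ x w} +
        ((stdGaussianPi (Fin m)).prod (stdGaussianPi (Fin n ⊕ Unit)))
          {x | ∃ w ∈ B, auxObjective σ x w ≤ c₂}) := by
  have hsub : {ω : (Fin m → Fin n → ℝ) × (Fin m → ℝ) |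
      ∃ w ∈ B, IsMinOn (residualNorm σ ω) D w} ⊆
      {ω | ∀ w ∈ D, c₁ < residualNorm σ ω w} ∪ {ω | ∃ w ∈ B, residualNorm σ ω w < c₂} := by
    rintro ω ⟨w, hwB, hw⟩
    by_contra! hω
    simp only [mem_union, mem_ofPred_eq, not_or] at hω
    push Not at hω
    obtain ⟨⟨u, huD, hu⟩, hB⟩ := hω
    exact absurd ((hB w hwB).trans ((hw huD).trans hu)) hc.not_ge
  rw [mul_add]
  exact (measure_mono hsub).trans ((measure_union_le _ _).trans (add_le_add
    (muAv_forall_lt_residualNorm_le hσ hconv hcomp hne hc₁)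
    (muAv_exists_residualNorm_lt_le hσ B c₂)))

lemma muAv_exists_isMinOn_residualNorm_le_of_forall [Nonempty (Fin m)] (hσ : 0 < σ)
    {D B : Set (Fin n → ℝ)} (hconv : Convex ℝ D) (hcomp : IsCompact D) (hne : D.Nonempty)
    {c₁ c₂ : ℝ} (hc₁ : 0 ≤ c₁) (hc : c₁ < c₂) {P : (Fin m → ℝ) × (Fin n ⊕ Unit → ℝ) → Prop}
    (hD : ∀ x, P x → ∃ w ∈ D, auxObjective σ x w < c₁)
    (hB : ∀ x, P x → ∀ w ∈ B, c₂ < auxObjective σ x w) :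
    muAv m n σ {ω | ∃ w ∈ B, IsMinOn (residualNorm σ ω) D w} ≤
      4 * ((stdGaussianPi (Fin m)).prod (stdGaussianPi (Fin n ⊕ Unit))) {x | ¬P x} := by
  refine (muAv_exists_isMinOn_residualNorm_le hσ hconv hcomp hne hc₁ hc).trans ?_
  set ν := (stdGaussianPi (Fin m)).prod (stdGaussianPi (Fin n ⊕ Unit))
  rw [show 4 * ν {x | ¬P x} = 2 * (ν {x | ¬P x} + ν {x | ¬P x}) by ring]
  gcongr with x x
  · intro hx hP
    obtain ⟨w, hw, hlt⟩ := hD x hP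
    exact hlt.not_ge (hx w hw)
  · rintro ⟨w, hw, hle⟩ hP
    exact (hB x hP w hw).not_ge hle

end Comparison

section InfimumConcentration

variable {P : Type*} [Fintype P] {S : Set (P → ℝ)} {f : (P → ℝ) → ℝ} {R t : ℝ}

/-- The infimum of `f p + p ⬝ᵥ h` over `p ∈ S` is within `t` of `y`; stated without `⨅`, whose
value is junk when the infimum is infinite. -/
def IsInfNear (f : (P → ℝ) → ℝ) (S : Set (P → ℝ)) (y t : ℝ) (h : P → ℝ) : Prop :=
  (∃ p ∈ S, f p + p ⬝ᵥ h < y + t) ∧ ∀ p ∈ S, y - t ≤ f p + p ⬝ᵥ h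

lemma isInfNear_of_abs_affineSup_sub_lt [Nonempty S] (hf : Continuous f) {h : P → ℝ}
    (hbdd : BddAbove (range fun j =>
      (-(TopologicalSpace.denseSeq S j).1) ⬝ᵥ h - f (TopologicalSpace.denseSeq S j)))
    {x₀ : ℝ} (hx₀ : |affineSup (fun j => -(TopologicalSpace.denseSeq S j).1)
      (fun j => f (TopologicalSpace.denseSeq S j)) h - x₀| < t) :
    IsInfNear f S (-x₀) t h := by
  obtain ⟨hlow, hhigh⟩ := abs_lt.1 hx₀
  simp only [affineSup, neg_dotProduct] at hlow hhigh hbdd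
  constructor
  · obtain ⟨j, hj⟩ := exists_lt_of_lt_ciSup (lt_sub_iff_add_lt.1 hlow)
    exact ⟨_, (TopologicalSpace.denseSeq S j).2, by linarith⟩
  · intro p hp
    refine (TopologicalSpace.denseRange_denseSeq S).induction_on
      (p := fun p : S => -x₀ - t ≤ f p + p.1 ⬝ᵥ h) ⟨p, hp⟩
      (isClosed_le continuous_const (by fun_prop)) fun j => ?_
    linarith [(le_ciSup hbdd j).trans_lt (sub_lt_iff_lt_add.1 hhigh)]

lemma exists_stdGaussianPi_not_isInfNear_le (hf : Continuous f) (hf_bdd : BddBelow (f '' S))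
    (hne : S.Nonempty) (hS : ∀ p ∈ S, euclNorm p ≤ R) (hR : 0 < R) (ht : 8 * R ≤ t) :
    ∃ y, stdGaussianPi P {h | ¬IsInfNear f S y t h} ≤
      ENNReal.ofReal (48 * Real.exp (-(t ^ 2 / (8 * R ^ 2)))) := by
  have := hne.to_subtype
  obtain ⟨b, hb⟩ := hf_bdd
  have hbdd (h : P → ℝ) : BddAbove (range fun j =>
      (-(TopologicalSpace.denseSeq S j).1) ⬝ᵥ h - f (TopologicalSpace.denseSeq S j)) := by
    refine ⟨R * euclNorm h - b, ?_⟩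
    rintro _ ⟨j, rfl⟩
    have hj := (TopologicalSpace.denseSeq S j).2
    refine sub_le_sub ((dotProduct_le_euclNorm_mul_euclNorm _ _).trans ?_)
      (hb (mem_image_of_mem f hj))
    rw [euclNorm_neg]
    exact mul_le_mul_of_nonneg_right (hS _ hj) (euclNorm_nonneg h)
  obtain ⟨x₀, hx₀⟩ := affineSup_concentration
    (fun j => (euclNorm_neg _).trans_le (hS _ (TopologicalSpace.denseSeq S j).2)) hbdd hR
  have htR : 8 ≤ t / R := (le_div_iff₀ hR).2 ht
  refine ⟨-x₀, (measure_mono fun h hh => ?_).trans <|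
    (ENNReal.le_ofReal_iff_toReal_le (measure_ne_top _ _) (by positivity)).2 <|
    (hx₀ (t / R - 4) (by linarith)).trans ?_⟩
  · by_contra hlt
    rw [mem_ofPred_eq, not_le, sub_add_cancel, div_mul_cancel₀ _ hR.ne'] at hlt
    exact hh (isInfNear_of_abs_affineSup_sub_lt hf (hbdd h) hlt)
  · have hsq : t ^ 2 / (8 * R ^ 2) = (t / R / 2) ^ 2 / 2 := by
      field_simp
      ring
    rw [hsq]
    gcongr
    linarith

end InfimumConcentration

section ScalarObjective

/-- The function of the norm `ρ` of the error vector to which the auxiliary objective, scaled by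
`√n`, concentrates when the constraint set contains the whole descent cone near `0`. -/
noncomputable def scalarObjective (σ r s ρ : ℝ) : ℝ := r * √(ρ ^ 2 + σ ^ 2) - s * ρ

variable {σ : ℝ}

lemma abs_le_sqrt_sq_add_sq (ρ σ : ℝ) : |ρ| ≤ √(ρ ^ 2 + σ ^ 2) :=
  Real.abs_le_sqrt (le_add_of_nonneg_right (sq_nonneg σ))

lemma sqrt_sq_add_sq_add_mul_le (hσ : 0 < σ) (ρ a : ℝ) :
    √(a ^ 2 + σ ^ 2) + a / √(a ^ 2 + σ ^ 2) * (ρ - a) ≤ √(ρ ^ 2 + σ ^ 2) := by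
  have ha : 0 < √(a ^ 2 + σ ^ 2) := by positivity
  have hcauchy : ρ * a + σ ^ 2 ≤ √(ρ ^ 2 + σ ^ 2) * √(a ^ 2 + σ ^ 2) := by
    rw [← Real.sqrt_mul (by positivity)]
    exact Real.le_sqrt_of_sq_le (by nlinarith [sq_nonneg (ρ * σ - a * σ)])
  have hline : √(a ^ 2 + σ ^ 2) + a / √(a ^ 2 + σ ^ 2) * (ρ - a) =
      (ρ * a + σ ^ 2) / √(a ^ 2 + σ ^ 2) := by
    field_simp
    rw [Real.sq_sqrt (by positivity)]
    ring
  rwa [hline, div_le_iff₀ ha]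

lemma scalarObjective_add_mul_le (hσ : 0 < σ) {r : ℝ} (hr : 0 ≤ r) (s ρ a : ℝ) :
    scalarObjective σ r s a + (a / √(a ^ 2 + σ ^ 2) * r - s) * (ρ - a) ≤
      scalarObjective σ r s ρ := by
  have := mul_le_mul_of_nonneg_left (sqrt_sq_add_sq_add_mul_le hσ ρ a) hr
  unfold scalarObjective
  linarith

lemma lt_div_sqrt_mul (hσ : 0 < σ) {r s ρ a : ℝ} (hr : 0 ≤ r) (hs : 0 ≤ s) (hsr : s < r)
    (hρ : ρ ^ 2 * (r ^ 2 - s ^ 2) = s ^ 2 * σ ^ 2) (hρ_nonneg : 0 ≤ ρ) (ha : ρ < a) :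
    s < a / √(a ^ 2 + σ ^ 2) * r := by
  have ha_pos : 0 < a := hρ_nonneg.trans_lt ha
  rw [div_mul_eq_mul_div, lt_div_iff₀ (by positivity)]
  apply lt_of_pow_lt_pow_left₀ 2 (by positivity)
  rw [mul_pow, mul_pow, Real.sq_sqrt (by positivity)]
  have h₁ : ρ ^ 2 < a ^ 2 := by gcongr
  have h₂ : s ^ 2 < r ^ 2 := by gcongr
  nlinarith

lemma div_sqrt_mul_lt (hσ : 0 < σ) {r s ρ a : ℝ} (hs : 0 ≤ s) (hsr : s < r)
    (hρ : ρ ^ 2 * (r ^ 2 - s ^ 2) = s ^ 2 * σ ^ 2) (ha_nonneg : 0 ≤ a) (ha : a < ρ) :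
    a / √(a ^ 2 + σ ^ 2) * r < s := by
  rw [div_mul_eq_mul_div, div_lt_iff₀ (by positivity)]
  apply lt_of_pow_lt_pow_left₀ 2 (by positivity)
  rw [mul_pow, mul_pow, Real.sq_sqrt (by positivity)]
  have h₁ : a ^ 2 < ρ ^ 2 := by gcongr
  have h₂ : s ^ 2 < r ^ 2 := by gcongr
  nlinarith

end ScalarObjective

section FavorableBounds

variable {ι κ : Type*} [Fintype ι] [DecidableEq ι] [Fintype κ] {K : Finset ι} {r s δ N σ : ℝ}
  {x : (κ → ℝ) × (ι ⊕ Unit → ℝ)}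

lemma IsFavorable.le_auxObjective (H : IsFavorable K r s δ N x) (hσ : 0 ≤ σ) {w : ι → ℝ}
    (hw : w ∈ descentCone K) :
    (scalarObjective σ r s (euclNorm w) -
      δ * (√(euclNorm w ^ 2 + σ ^ 2) + σ + euclNorm w)) * √N ≤ auxObjective σ x w := by
  rw [auxObjective_eq, scalarObjective]
  have hg := mul_le_mul_of_nonneg_left (abs_le.1 H.abs_euclNorm_sub_le).1
    (Real.sqrt_nonneg (euclNorm w ^ 2 + σ ^ 2))
  have hh₀ := mul_le_mul_of_nonneg_left (abs_le.1 H.abs_inr_le).1 hσ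
  linarith [H.dotProduct_le w hw]

lemma IsFavorable.exists_auxObjective_le (H : IsFavorable K r s δ N x) (hσ : 0 ≤ σ) {ρ : ℝ}
    (hρ : 0 ≤ ρ) : ∃ w ∈ descentCone K, euclNorm w = ρ ∧ auxObjective σ x w ≤
      (scalarObjective σ r s ρ + δ * (√(ρ ^ 2 + σ ^ 2) + σ + ρ)) * √N := by
  obtain ⟨w, hwK, hw_norm, hw⟩ := H.exists_le_dotProduct
  have hρw : euclNorm (ρ • w) = ρ := by rw [euclNorm_smul, hw_norm, abs_of_nonneg hρ, mul_one]
  refine ⟨ρ • w, smul_mem_descentCone hwK hρ, hρw, ?_⟩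
  rw [auxObjective_eq, scalarObjective, hρw, dotProduct_smul, smul_eq_mul]
  have hg := mul_le_mul_of_nonneg_left (abs_le.1 H.abs_euclNorm_sub_le).2
    (Real.sqrt_nonneg (ρ ^ 2 + σ ^ 2))
  have hh₀ := mul_le_mul_of_nonneg_left (abs_le.1 H.abs_inr_le).2 hσ
  linarith [mul_le_mul_of_nonneg_left hw hρ]

-- Along a ray the auxiliary objective grows at least at the rate given by the tangent slope of
-- `scalarObjective`.
lemma IsFavorable.auxObjective_smul_add_le (H : IsFavorable K r s δ N x) (hσ : 0 < σ)
    (hδ : 0 ≤ δ) (hδr : δ ≤ r) {w : ι → ℝ} (hw : w ∈ descentCone K) {c ρ : ℝ} (hc : c ≤ 1)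
    (hρ : 0 ≤ ρ) (hcw : c * euclNorm w = ρ) (hc_nonneg : 0 ≤ c) :
    auxObjective σ x (c • w) +
      (ρ / √(ρ ^ 2 + σ ^ 2) * r - s - 2 * δ) * (euclNorm w - ρ) * √N ≤ auxObjective σ x w := by
  have hcw' : euclNorm (c • w) = ρ := by rw [euclNorm_smul, abs_of_nonneg hc_nonneg, hcw]
  have hd : 0 ≤ euclNorm w - ρ := by nlinarith [euclNorm_nonneg w]
  set θ := ρ / √(ρ ^ 2 + σ ^ 2)
  have hθ : 0 ≤ θ := by positivity
  have hθ_le : θ ≤ 1 := div_le_one_of_le₀ ((le_abs_self ρ).trans (abs_le_sqrt_sq_add_sq ρ σ))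
    (Real.sqrt_nonneg _)
  have hdot : (1 - c) * ((x.2 ∘ Sum.inl) ⬝ᵥ w) ≤ (s + δ) * √N * (euclNorm w - ρ) := by
    calc (1 - c) * ((x.2 ∘ Sum.inl) ⬝ᵥ w)
        ≤ (1 - c) * ((s + δ) * √N * euclNorm w) :=
          mul_le_mul_of_nonneg_left (H.dotProduct_le w hw) (sub_nonneg.2 hc)
      _ = (s + δ) * √N * (euclNorm w - ρ) := by rw [← hcw]; ring
  have hsqrt : θ * (euclNorm w - ρ) ≤ √(euclNorm w ^ 2 + σ ^ 2) - √(ρ ^ 2 + σ ^ 2) := by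
    linarith [sqrt_sq_add_sq_add_mul_le hσ (euclNorm w) ρ]
  have hg : (r - δ) * √N ≤ euclNorm x.1 := by linarith [(abs_le.1 H.abs_euclNorm_sub_le).1]
  have hgrowth : θ * (euclNorm w - ρ) * ((r - δ) * √N) ≤
      (√(euclNorm w ^ 2 + σ ^ 2) - √(ρ ^ 2 + σ ^ 2)) * euclNorm x.1 :=
    mul_le_mul hsqrt hg (mul_nonneg (sub_nonneg.2 hδr) (Real.sqrt_nonneg N))
      ((mul_nonneg hθ hd).trans hsqrt)
  have hθδ : θ * δ * ((euclNorm w - ρ) * √N) ≤ δ * ((euclNorm w - ρ) * √N) :=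
    mul_le_mul_of_nonneg_right (mul_le_of_le_one_left hδ hθ_le)
      (mul_nonneg hd (Real.sqrt_nonneg N))
  rw [auxObjective_eq, auxObjective_eq, hcw', dotProduct_smul, smul_eq_mul]
  linarith

lemma IsFavorable.abs_auxObjective_sub_le (H : IsFavorable K r s δ N x) {w : ι → ℝ} {R : ℝ}
    (hw : euclNorm (augment σ w) ≤ R) :
    |auxObjective σ x w - (r * √N * euclNorm (augment σ w) + augment σ w ⬝ᵥ x.2)| ≤
      R * (δ * √N) := by
  have hsub : auxObjective σ x w - (r * √N * euclNorm (augment σ w) + augment σ w ⬝ᵥ x.2) =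
      euclNorm (augment σ w) * (euclNorm x.1 - r * √N) := by
    rw [auxObjective]
    ring
  rw [hsub, abs_mul, abs_of_nonneg (euclNorm_nonneg _)]
  exact mul_le_mul hw H.abs_euclNorm_sub_le (abs_nonneg _) ((euclNorm_nonneg _).trans hw)

end FavorableBounds

section ErrorRegion

lemma euclNorm_zero {ι : Type*} [Fintype ι] : euclNorm (0 : ι → ℝ) = 0 := by
  simpa using euclNorm_smul 0 (0 : ι → ℝ)

/-- The properties of the set `{x - x̃ | ‖x‖₁ ≤ ‖x̃‖₁}` of error vectors on which the upper bound on
the error depends, `K` being the set of coordinates where `x̃` may be positive. -/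
structure IsErrorRegion {ι : Type*} [Fintype ι] [DecidableEq ι] (K : Finset ι)
    (D : Set (ι → ℝ)) : Prop where
  convex : Convex ℝ D
  isCompact : IsCompact D
  zero_mem : 0 ∈ D
  subset_descentCone : D ⊆ descentCone K

variable {ι κ : Type*} [Fintype ι] [DecidableEq ι] [Fintype κ] {K : Finset ι} {D : Set (ι → ℝ)}
  {r s δ N σ t y ρ₁ ρ₂ : ℝ} {x : (κ → ℝ) × (ι ⊕ Unit → ℝ)}

lemma IsErrorRegion.smul_mem (hD : IsErrorRegion K D) {w : ι → ℝ} (hw : w ∈ D) {c : ℝ}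
    (hc : c ∈ Icc 0 1) : c • w ∈ D :=
  hD.convex.smul_mem_of_zero_mem hD.zero_mem hw hc

lemma IsFavorable.near_le_auxObjective (H : IsFavorable K r s δ N x) (hσ : 0 < σ) (hr : 0 ≤ r)
    (hδ : 0 ≤ δ) (hslope : ρ₂ / √(ρ₂ ^ 2 + σ ^ 2) * r ≤ s) (hρ : ρ₁ ≤ ρ₂) {w : ι → ℝ}
    (hwK : w ∈ descentCone K) (hw : euclNorm w ≤ ρ₁) :
    (scalarObjective σ r s ρ₂ + (s - ρ₂ / √(ρ₂ ^ 2 + σ ^ 2) * r) * (ρ₂ - ρ₁) -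
      δ * (√(ρ₂ ^ 2 + σ ^ 2) + σ + ρ₂)) * √N ≤ auxObjective σ x w := by
  refine le_trans (mul_le_mul_of_nonneg_right ?_ (Real.sqrt_nonneg N))
    (H.le_auxObjective hσ.le hwK)
  have hw₀ := euclNorm_nonneg w
  have hw₂ := hw.trans hρ
  have hδw : δ * (√(euclNorm w ^ 2 + σ ^ 2) + σ + euclNorm w) ≤
      δ * (√(ρ₂ ^ 2 + σ ^ 2) + σ + ρ₂) := by gcongr
  have htangent := scalarObjective_add_mul_le hσ hr s (euclNorm w) ρ₂
  have hgap := mul_le_mul_of_nonneg_left (sub_le_sub_left hw ρ₂) (sub_nonneg.2 hslope)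
  linarith

lemma IsFavorable.pos_le_auxObjective (H : IsFavorable K r s δ N x) (hσ : 0 ≤ σ) (hs : 0 ≤ s)
    (hδ : 0 ≤ δ) (hδ_le : 6 * δ ≤ r - s) {w : ι → ℝ} (hw : w ∈ descentCone K) :
    σ * (r - s) / 2 * √N ≤ auxObjective σ x w := by
  refine le_trans (mul_le_mul_of_nonneg_right ?_ (Real.sqrt_nonneg N)) (H.le_auxObjective hσ hw)
  have hw_le := (le_abs_self _).trans (abs_le_sqrt_sq_add_sq (euclNorm w) σ)
  have hσ_le : σ ≤ √(euclNorm w ^ 2 + σ ^ 2) := by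
    rw [add_comm]
    exact (le_abs_self _).trans (abs_le_sqrt_sq_add_sq σ (euclNorm w))
  set q := √(euclNorm w ^ 2 + σ ^ 2)
  calc σ * (r - s) / 2 = (r - s) / 2 * σ := by ring
    _ ≤ (r - s - 3 * δ) * q := mul_le_mul (by linarith) hσ_le hσ (by linarith)
    _ = r * q - s * q - δ * (q + q + q) := by ring
    _ ≤ scalarObjective σ r s (euclNorm w) - δ * (q + σ + euclNorm w) := by
      unfold scalarObjective
      gcongr

lemma IsFavorable.abs_auxObjective_sub_le_of_euclNorm_le (H : IsFavorable K r s δ N x)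
    (hδt : √(ρ₂ ^ 2 + σ ^ 2) * (δ * √N) ≤ t) {w : ι → ℝ}
    (hw : euclNorm w ≤ ρ₂) :
    |auxObjective σ x w - (r * √N * euclNorm (augment σ w) + augment σ w ⬝ᵥ x.2)| ≤ t := by
  have hw₀ := euclNorm_nonneg w
  refine (H.abs_auxObjective_sub_le ?_).trans hδt
  rw [euclNorm_augment]
  gcongr

lemma IsFavorable.exists_auxObjective_lt_of_isInfNear (H : IsFavorable K r s δ N x)
    (hδt : √(ρ₂ ^ 2 + σ ^ 2) * (δ * √N) ≤ t)
    (hinf : IsInfNear (fun p => r * √N * euclNorm p)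
      (augment σ '' {w ∈ D | euclNorm w ≤ ρ₂}) y t x.2) :
    ∃ w ∈ {w ∈ D | euclNorm w ≤ ρ₂}, auxObjective σ x w < y + 2 * t := by
  obtain ⟨_, ⟨w, hw, rfl⟩, hlt⟩ := hinf.1
  exact ⟨w, hw, by linarith [(abs_le.1 (H.abs_auxObjective_sub_le_of_euclNorm_le hδt hw.2)).2]⟩

lemma IsFavorable.sub_le_auxObjective_of_isInfNear (H : IsFavorable K r s δ N x)
    (hδt : √(ρ₂ ^ 2 + σ ^ 2) * (δ * √N) ≤ t)
    (hinf : IsInfNear (fun p => r * √N * euclNorm p)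
      (augment σ '' {w ∈ D | euclNorm w ≤ ρ₂}) y t x.2)
    {w : ι → ℝ} (hwD : w ∈ D) (hw : euclNorm w ≤ ρ₂) : y - 2 * t ≤ auxObjective σ x w := by
  have hle := hinf.2 _ (mem_image_of_mem _ ⟨hwD, hw⟩)
  linarith [(abs_le.1 (H.abs_auxObjective_sub_le_of_euclNorm_le hδt hw)).1]

lemma IsFavorable.far_le_auxObjective (H : IsFavorable K r s δ N x)
    (hδt : √(ρ₂ ^ 2 + σ ^ 2) * (δ * √N) ≤ t)
    (hinf : IsInfNear (fun p => r * √N * euclNorm p)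
      (augment σ '' {w ∈ D | euclNorm w ≤ ρ₂}) y t x.2)
    (hD : IsErrorRegion K D) (hσ : 0 < σ) (hδ : 0 ≤ δ)
    (hδr : δ ≤ r) (hρ₁ : 0 ≤ ρ₁) (hρ : ρ₁ < ρ₂)
    (hslope : 2 * δ ≤ ρ₁ / √(ρ₁ ^ 2 + σ ^ 2) * r - s) {w : ι → ℝ} (hwD : w ∈ D)
    (hw : ρ₂ ≤ euclNorm w) :
    y - 2 * t + (ρ₁ / √(ρ₁ ^ 2 + σ ^ 2) * r - s - 2 * δ) * (ρ₂ - ρ₁) * √N ≤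
      auxObjective σ x w := by
  have hw_pos : 0 < euclNorm w := by linarith
  have hc : ρ₁ / euclNorm w ≤ 1 := by
    rw [div_le_one hw_pos]
    linarith
  have hc₀ : 0 ≤ ρ₁ / euclNorm w := div_nonneg hρ₁ hw_pos.le
  have hcw : ρ₁ / euclNorm w * euclNorm w = ρ₁ := div_mul_cancel₀ _ hw_pos.ne'
  have hnear := H.sub_le_auxObjective_of_isInfNear hδt hinf (hD.smul_mem hwD ⟨hc₀, hc⟩)
    (by rw [euclNorm_smul, abs_of_nonneg hc₀, hcw]; exact hρ.le)
  have hgrowth := H.auxObjective_smul_add_le hσ hδ hδr (hD.subset_descentCone hwD) hc hρ₁ hcw hc₀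
  have hgap : (ρ₁ / √(ρ₁ ^ 2 + σ ^ 2) * r - s - 2 * δ) * (ρ₂ - ρ₁) * √N ≤
      (ρ₁ / √(ρ₁ ^ 2 + σ ^ 2) * r - s - 2 * δ) * (euclNorm w - ρ₁) * √N := by
    gcongr
  linarith

end ErrorRegion

section NormLocalization

variable {m n : ℕ} {σ r s δ N ρ₁ ρ₂ : ℝ} {K : Finset (Fin n)} {D : Set (Fin n → ℝ)}

lemma scalarObjective_nonneg (hs : 0 ≤ s) (hsr : s ≤ r) (σ ρ : ℝ) : 0 ≤ scalarObjective σ r s ρ :=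
  sub_nonneg.2 <| (mul_le_mul_of_nonneg_left (le_abs_self ρ) hs).trans <|
    mul_le_mul hsr (abs_le_sqrt_sq_add_sq ρ σ) (abs_nonneg ρ) (hs.trans hsr)

lemma IsErrorRegion.muAv_exists_isMinOn_near_le [Nonempty (Fin m)] (hD : IsErrorRegion K D)
    (hσ : 0 < σ) (hs : 0 ≤ s) (hsr : s ≤ r) (hδ : 0 ≤ δ) (hN : 0 < N) (hρ₂ : 0 ≤ ρ₂)
    (hρ : ρ₁ < ρ₂) (hslope : ρ₂ / √(ρ₂ ^ 2 + σ ^ 2) * r < s)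
    (hδ_le : 4 * (δ * (√(ρ₂ ^ 2 + σ ^ 2) + σ + ρ₂)) ≤
      (s - ρ₂ / √(ρ₂ ^ 2 + σ ^ 2) * r) * (ρ₂ - ρ₁))
    (hball : ∀ w ∈ descentCone K, euclNorm w ≤ ρ₂ → w ∈ D) :
    muAv m n σ {ω | ∃ w ∈ {w ∈ D | euclNorm w < ρ₁}, IsMinOn (residualNorm σ ω) D w} ≤
      4 * ((stdGaussianPi (Fin m)).prod (stdGaussianPi (Fin n ⊕ Unit)))
        {x | ¬IsFavorable K r s δ N x} := by
  have hF := scalarObjective_nonneg hs hsr σ ρ₂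
  set gap := (s - ρ₂ / √(ρ₂ ^ 2 + σ ^ 2) * r) * (ρ₂ - ρ₁) with gap_def
  have hgap : 0 < gap := mul_pos (sub_pos.2 hslope) (sub_pos.2 hρ)
  refine muAv_exists_isMinOn_residualNorm_le_of_forall hσ hD.convex hD.isCompact ⟨0, hD.zero_mem⟩
    (c₁ := (scalarObjective σ r s ρ₂ + gap / 3) * √N)
    (c₂ := (scalarObjective σ r s ρ₂ + 2 * gap / 3) * √N) (by positivity)
    (by gcongr; linarith) (fun x H => ?_) fun x H w hw => ?_
  · obtain ⟨w, hw, hw_norm, hle⟩ := H.exists_auxObjective_le hσ.le hρ₂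
    refine ⟨w, hball w hw hw_norm.le, hle.trans_lt ?_⟩
    gcongr
    linarith
  · refine lt_of_lt_of_le ?_ (H.near_le_auxObjective hσ (hs.trans hsr) hδ hslope.le hρ.le
      (hD.subset_descentCone hw.1) hw.2.le)
    rw [← gap_def]
    gcongr
    linarith

lemma exists_stdGaussianPi_prod_not_isInfNear_le {κ ι : Type*} [Fintype κ] [Fintype ι]
    {D : Set (ι → ℝ)} (hD : 0 ∈ D) (hσ : 0 < σ) (hr : 0 ≤ r) (hρ₂ : 0 ≤ ρ₂) {t : ℝ}
    (ht : 8 * √(ρ₂ ^ 2 + σ ^ 2) ≤ t) :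
    ∃ y, ((stdGaussianPi κ).prod (stdGaussianPi (ι ⊕ Unit)))
      {x | ¬IsInfNear (fun p => r * √N * euclNorm p) (augment σ '' {w ∈ D | euclNorm w ≤ ρ₂})
        y t x.2} ≤
      ENNReal.ofReal (48 * Real.exp (-(t ^ 2 / (8 * √(ρ₂ ^ 2 + σ ^ 2) ^ 2)))) := by
  obtain ⟨y, hy⟩ := exists_stdGaussianPi_not_isInfNear_le
    (f := fun p : ι ⊕ Unit → ℝ => r * √N * euclNorm p) (R := √(ρ₂ ^ 2 + σ ^ 2))
    (S := augment σ '' {w ∈ D | euclNorm w ≤ ρ₂}) (continuous_const.mul continuous_euclNorm)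
    ⟨0, forall_mem_image.2 fun p _ => mul_nonneg (by positivity) (euclNorm_nonneg p)⟩
    ⟨_, 0, ⟨hD, euclNorm_zero.trans_le hρ₂⟩, rfl⟩
    (forall_mem_image.2 fun w hw => by
      have := euclNorm_nonneg w
      rw [euclNorm_augment]
      gcongr
      exact hw.2)
    (by positivity) ht
  exact ⟨y, (measurePreserving_snd.measure_preimage_le _).trans hy⟩

lemma IsErrorRegion.muAv_exists_isMinOn_far_le_of_isInfNear [Nonempty (Fin m)]
    (hD : IsErrorRegion K D) (hσ : 0 < σ) (hs : 0 ≤ s) (hsr : s < r) (hδ : 0 ≤ δ)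
    (hδ_le : 6 * δ ≤ r - s) (hN : 0 < N) (hρ₁ : 0 ≤ ρ₁) (hρ : ρ₁ < ρ₂) {τ : ℝ} (hτ : 0 < τ)
    (hδτ : √(ρ₂ ^ 2 + σ ^ 2) * δ ≤ τ)
    (hslope : 8 * τ ≤ (ρ₁ / √(ρ₁ ^ 2 + σ ^ 2) * r - s - 2 * δ) * (ρ₂ - ρ₁)) (y : ℝ) :
    muAv m n σ {ω | ∃ w ∈ {w ∈ D | ρ₂ < euclNorm w}, IsMinOn (residualNorm σ ω) D w} ≤
      4 * ((stdGaussianPi (Fin m)).prod (stdGaussianPi (Fin n ⊕ Unit)))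
        {x | ¬(IsFavorable K r s δ N x ∧ IsInfNear (fun p => r * √N * euclNorm p)
          (augment σ '' {w ∈ D | euclNorm w ≤ ρ₂}) y (τ * √N) x.2)} := by
  have hsqrt : 0 < √N := Real.sqrt_pos.2 hN
  have hrs : 0 < r - s := sub_pos.2 hsr
  have hτN : 0 < τ * √N := by positivity
  have hslope' : 2 * δ ≤ ρ₁ / √(ρ₁ ^ 2 + σ ^ 2) * r - s :=
    sub_nonneg.1 (pos_of_mul_pos_left (by linarith) (sub_pos.2 hρ).le).le
  have hδt : √(ρ₂ ^ 2 + σ ^ 2) * (δ * √N) ≤ τ * √N := by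
    rw [← mul_assoc]
    gcongr
  have hgrowth := mul_le_mul_of_nonneg_right hslope hsqrt.le
  refine muAv_exists_isMinOn_residualNorm_le_of_forall hσ hD.convex hD.isCompact ⟨0, hD.zero_mem⟩
    (c₁ := max (y + 2 * (τ * √N)) 0) (c₂ := max (y + 5 * (τ * √N)) (σ * (r - s) / 4 * √N))
    (le_max_right _ _) (max_lt_max (by linarith) (by positivity)) ?_ ?_
  · rintro x ⟨H, hinf⟩
    obtain ⟨w, hw, hlt⟩ := H.exists_auxObjective_lt_of_isInfNear hδt hinf
    exact ⟨w, hw.1, lt_max_of_lt_left hlt⟩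
  · rintro x ⟨H, hinf⟩ w ⟨hwD, hw⟩
    have hfar := H.far_le_auxObjective hδt hinf hD hσ hδ (by linarith) hρ₁ hρ hslope' hwD hw.le
    have hpos := H.pos_le_auxObjective hσ.le hs hδ hδ_le (hD.subset_descentCone hwD)
    exact max_lt (by linarith) (by linarith [mul_pos (mul_pos hσ hrs) hsqrt])

lemma IsErrorRegion.muAv_exists_isMinOn_far_le [Nonempty (Fin m)] (hD : IsErrorRegion K D)
    (hσ : 0 < σ) (hs : 0 ≤ s) (hsr : s < r) (hδ : 0 ≤ δ) (hδ_le : 6 * δ ≤ r - s) (hN : 0 < N)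
    (hρ₁ : 0 ≤ ρ₁) (hρ : ρ₁ < ρ₂) {τ : ℝ} (hτ : 0 < τ) (hδτ : √(ρ₂ ^ 2 + σ ^ 2) * δ ≤ τ)
    (hslope : 8 * τ ≤ (ρ₁ / √(ρ₁ ^ 2 + σ ^ 2) * r - s - 2 * δ) * (ρ₂ - ρ₁))
    (hτN : 8 * √(ρ₂ ^ 2 + σ ^ 2) ≤ τ * √N) :
    muAv m n σ {ω | ∃ w ∈ {w ∈ D | ρ₂ < euclNorm w}, IsMinOn (residualNorm σ ω) D w} ≤
      4 * (((stdGaussianPi (Fin m)).prod (stdGaussianPi (Fin n ⊕ Unit)))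
          {x | ¬IsFavorable K r s δ N x} +
        ENNReal.ofReal (48 * Real.exp (-((τ * √N) ^ 2 / (8 * √(ρ₂ ^ 2 + σ ^ 2) ^ 2))))) := by
  obtain ⟨y, hy⟩ := exists_stdGaussianPi_prod_not_isInfNear_le (κ := Fin m) (N := N) hD.zero_mem hσ
    (hs.trans hsr.le) (hρ₁.trans hρ.le) hτN
  refine (hD.muAv_exists_isMinOn_far_le_of_isInfNear hσ hs hsr hδ hδ_le hN hρ₁ hρ hτ hδτ hslope
    y).trans ?_
  simp only [not_and_or, ofPred_or]
  gcongr
  exact (measure_union_le _ _).trans (by gcongr)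

end NormLocalization

section LinearRegime

lemma expSmall_const_mul_exp_neg_mul_sqrt_sq {τ R : ℝ} (hτ : 0 < τ) (hR : 0 < R) (C : ℝ) :
    ExpSmall fun n => ENNReal.ofReal (C * Real.exp (-((τ * √n) ^ 2 / (8 * R ^ 2)))) :=
  .of_eventually_le_const_mul_exp (C := C) (c := τ ^ 2 / (8 * R ^ 2)) (by positivity)
    (.of_forall fun n => le_of_eq (by
      rw [mul_pow, Real.sq_sqrt n.cast_nonneg, mul_div_right_comm]))

/-- The problem sizes `m n ≈ α n` and `(K n).card ≈ β n`: the number of measurements and the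
sparsity grow linearly with the dimension `n`. -/
structure IsLinearRegime (α β : ℝ) (m : ℕ → ℕ) (K : ∀ n, Finset (Fin n)) : Prop where
  le : ∀ n, m n ≤ n
  abs_sub_le : ∀ n, |m n - α * n| ≤ 1
  abs_card_sub_le : ∀ n, |(K n).card - β * n| ≤ 1

namespace IsLinearRegime

variable {α β a l σ ρ ρ₁ ρ₂ : ℝ} {m : ℕ → ℕ} {K : ∀ n, Finset (Fin n)}

lemma eventually_nonempty (H : IsLinearRegime α β m K) (hα : 0 < α) :
    ∀ᶠ n in atTop, Nonempty (Fin (m n)) := by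
  filter_upwards [eventually_le_mul_natCast 2 hα] with n hn
  have hm : (0 : ℝ) < m n := by linarith [(abs_le.1 (H.abs_sub_le n)).1]
  exact Fin.pos_iff_nonempty.1 (by exact_mod_cast hm)

lemma expSmall_not_isFavorable (H : IsLinearRegime α β m K) (hα : 0 < α) (hβ : 0 < β) (ha : 0 < a)
    (hl : IsMatchedThreshold β a l) {δ : ℝ} (hδ : 0 < δ) :
    ExpSmall fun n => ((stdGaussianPi (Fin (m n))).prod (stdGaussianPi (Fin n ⊕ Unit)))
      {x | ¬IsFavorable (K n) √α √a δ n x} :=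
  _root_.expSmall_not_isFavorable (Real.sqrt_pos.2 hα) hβ ha hl
    (fun n => by simpa using H.le n)
    (fun n => by simpa only [Fintype.card_fin, Real.sq_sqrt hα.le] using H.abs_sub_le n)
    Fintype.card_fin H.abs_card_sub_le hδ

lemma expSmall_exists_isMinOn_near (H : IsLinearRegime α β m K) (hσ : 0 < σ) (hβ : 0 < β)
    (ha : 0 < a) (haα : a < α) (hl : IsMatchedThreshold β a l)
    (hρ_eq : ρ ^ 2 * (α - a) = a * σ ^ 2) (hρ₁ : 0 ≤ ρ₁) (hρ : ρ₁ < ρ)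
    {D : ∀ n, Set (Fin n → ℝ)} (hD : ∀ n, IsErrorRegion (K n) (D n))
    (hball : ∀ n, ∀ w ∈ descentCone (K n), euclNorm w ≤ ρ → w ∈ D n) :
    ExpSmall fun n => muAv (m n) n σ
      {ω | ∃ w ∈ {w ∈ D n | euclNorm w < ρ₁}, IsMinOn (residualNorm σ ω) (D n) w} := by
  have hα : 0 < α := ha.trans haα
  have hs := Real.sqrt_nonneg a
  have hsr : √a < √α := Real.sqrt_lt_sqrt ha.le haα
  have hρ_eq' : ρ ^ 2 * (√α ^ 2 - √a ^ 2) = √a ^ 2 * σ ^ 2 := by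
    rwa [Real.sq_sqrt hα.le, Real.sq_sqrt ha.le]
  obtain ⟨ρ₂, hρ₁₂, hρ₂⟩ := exists_between hρ
  have hρ₂_pos : 0 < ρ₂ := hρ₁.trans_lt hρ₁₂
  have hslope := div_sqrt_mul_lt hσ hs hsr hρ_eq' hρ₂_pos.le hρ₂
  set gap := (√a - ρ₂ / √(ρ₂ ^ 2 + σ ^ 2) * √α) * (ρ₂ - ρ₁)
  have hgap : 0 < gap := mul_pos (sub_pos.2 hslope) (sub_pos.2 hρ₁₂)
  obtain ⟨δ, hδ, hδ_le⟩ : ∃ δ > 0, 4 * (δ * (√(ρ₂ ^ 2 + σ ^ 2) + σ + ρ₂)) ≤ gap :=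
    ⟨gap / (4 * (√(ρ₂ ^ 2 + σ ^ 2) + σ + ρ₂)), by positivity, le_of_eq (by field_simp)⟩
  refine ((H.expSmall_not_isFavorable hα hβ ha hl hδ).natCast_mul 4).mono ?_
  filter_upwards [H.eventually_nonempty hα, eventually_gt_atTop 0] with n _ hn
  exact (hD n).muAv_exists_isMinOn_near_le hσ hs hsr.le hδ.le (by exact_mod_cast hn) hρ₂_pos.le
    hρ₁₂ hslope hδ_le fun w hw hle => hball n w hw (hle.trans hρ₂.le)

lemma expSmall_exists_isMinOn_far (H : IsLinearRegime α β m K) (hσ : 0 < σ) (hβ : 0 < β)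
    (ha : 0 < a) (haα : a < α) (hl : IsMatchedThreshold β a l) (hρ_nonneg : 0 ≤ ρ)
    (hρ_eq : ρ ^ 2 * (α - a) = a * σ ^ 2) (hρ : ρ < ρ₂) :
    ExpSmall fun n => ⨆ (D : Set (Fin n → ℝ)) (_ : IsErrorRegion (K n) D), muAv (m n) n σ
      {ω | ∃ w ∈ {w ∈ D | ρ₂ < euclNorm w}, IsMinOn (residualNorm σ ω) D w} := by
  have hα : 0 < α := ha.trans haα
  have hs := Real.sqrt_nonneg a
  have hsr : √a < √α := Real.sqrt_lt_sqrt ha.le haα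
  have hρ_eq' : ρ ^ 2 * (√α ^ 2 - √a ^ 2) = √a ^ 2 * σ ^ 2 := by
    rwa [Real.sq_sqrt hα.le, Real.sq_sqrt ha.le]
  obtain ⟨ρ₁, hρ₁, hρ₁₂⟩ := exists_between hρ
  have hslope := lt_div_sqrt_mul hσ (Real.sqrt_nonneg α) hs hsr hρ_eq' hρ_nonneg hρ₁
  set κ := ρ₁ / √(ρ₁ ^ 2 + σ ^ 2) * √α - √a with κ_def
  have hκ : 0 < κ := sub_pos.2 hslope
  set R := √(ρ₂ ^ 2 + σ ^ 2)
  have hR : 0 < R := by positivity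
  set τ := κ * (ρ₂ - ρ₁) / 16
  have hτ : 0 < τ := div_pos (mul_pos hκ (sub_pos.2 hρ₁₂)) (by norm_num)
  obtain ⟨δ, hδ, hδ_le⟩ : ∃ δ > 0, δ ≤ min (min (κ / 4) ((√α - √a) / 6)) (τ / R) :=
    ⟨_, lt_min (lt_min (by positivity) (by linarith)) (by positivity), le_rfl⟩
  obtain ⟨⟨hδκ, hδ_sub⟩, hδτ⟩ := by simpa only [le_min_iff] using hδ_le
  refine (((H.expSmall_not_isFavorable hα hβ ha hl hδ).add
    (expSmall_const_mul_exp_neg_mul_sqrt_sq hτ hR 48)).natCast_mul 4).mono ?_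
  filter_upwards [H.eventually_nonempty hα, eventually_gt_atTop 0,
    (Real.tendsto_sqrt_atTop.comp tendsto_natCast_atTop_atTop |>.const_mul_atTop
      hτ).eventually_ge_atTop (8 * R)] with n _ hn hτN
  refine iSup₂_le fun D hD => hD.muAv_exists_isMinOn_far_le hσ hs hsr hδ.le (by linarith)
    (by exact_mod_cast hn) (hρ_nonneg.trans hρ₁.le) hρ₁₂ hτ ?_ ?_ hτN
  · rwa [mul_comm, ← le_div_iff₀ hR]
  · rw [← κ_def]
    calc 8 * τ = κ / 2 * (ρ₂ - ρ₁) := by simp only [τ]; ring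
      _ ≤ (κ - 2 * δ) * (ρ₂ - ρ₁) :=
        mul_le_mul_of_nonneg_right (by linarith) (sub_pos.2 hρ₁₂).le

end IsLinearRegime

end LinearRegime

section Lasso

variable {m n k : ℕ} {σ ρ : ℝ} {K : Finset (Fin n)} {xt x w : Fin n → ℝ}
  {ω : (Fin m → Fin n → ℝ) × (Fin m → ℝ)}

/-- The error vectors `x - xt` of the competitors `x` in the LASSO with true signal `xt`. -/
def feasibleErrors (xt : Fin n → ℝ) : Set (Fin n → ℝ) := {w | l1norm (xt + w) ≤ l1norm xt}

lemma zero_mem_feasibleErrors (xt : Fin n → ℝ) : 0 ∈ feasibleErrors xt :=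
  (congrArg l1norm (add_zero xt)).le

lemma sub_mem_feasibleErrors_iff : x - xt ∈ feasibleErrors xt ↔ l1norm x ≤ l1norm xt := by
  rw [feasibleErrors, mem_ofPred_eq, add_sub_cancel]

lemma feasibleErrors_eq_preimage (xt : Fin n → ℝ) :
    feasibleErrors xt = (WithLp.linearEquiv 1 ℝ (Fin n → ℝ)).symm ⁻¹'
      Metric.closedBall (-WithLp.toLp 1 xt) (l1norm xt) := by
  ext w
  simp [feasibleErrors, l1norm, dist_eq_norm, PiLp.norm_eq_of_L1, add_comm (xt _)]

lemma convex_feasibleErrors (xt : Fin n → ℝ) : Convex ℝ (feasibleErrors xt) := by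
  rw [feasibleErrors_eq_preimage]
  exact (convex_closedBall _ _).linear_preimage
    (WithLp.linearEquiv 1 ℝ (Fin n → ℝ)).symm.toLinearMap

lemma isCompact_feasibleErrors (xt : Fin n → ℝ) : IsCompact (feasibleErrors xt) := by
  rw [feasibleErrors_eq_preimage]
  exact (PiLp.continuousLinearEquiv 1 ℝ fun _ => ℝ).symm.toHomeomorph.isCompact_preimage.2
    (isCompact_closedBall _ _)

lemma feasibleErrors_subset_descentCone (hzero : ∀ i ∈ Kᶜ, xt i = 0) (hnonneg : ∀ i, 0 ≤ xt i) :
    feasibleErrors xt ⊆ descentCone K := by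
  intro w hw
  have hK : ∑ i ∈ K, (|xt i| + w i) ≤ ∑ i ∈ K, |(xt + w) i| :=
    Finset.sum_le_sum fun i _ => by
      rw [abs_of_nonneg (hnonneg i)]
      exact le_abs_self _
  have hKc : ∑ i ∈ Kᶜ, |(xt + w) i| = ∑ i ∈ Kᶜ, |w i| :=
    Finset.sum_congr rfl fun i hi => by rw [Pi.add_apply, hzero i hi, zero_add]
  have hxt : ∑ i ∈ Kᶜ, |xt i| = 0 :=
    Finset.sum_eq_zero fun i hi => by rw [hzero i hi, abs_zero]
  rw [feasibleErrors, mem_ofPred_eq, l1norm, l1norm, ← Finset.sum_add_sum_compl K,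
    ← Finset.sum_add_sum_compl K fun i => |xt i|] at hw
  rw [Finset.sum_add_distrib] at hK
  rw [mem_descentCone]
  linarith

lemma mem_feasibleErrors_piecewise (hρ : 0 ≤ ρ) (hw : w ∈ descentCone K) (hwρ : euclNorm w ≤ ρ) :
    w ∈ feasibleErrors (K.piecewise (fun _ => ρ) 0) := by
  have habs (i : Fin n) : |w i| ≤ ρ := (PiLp.norm_apply_le (WithLp.toLp 2 w) i).trans hwρ
  have hK : ∑ i ∈ K, |K.piecewise (fun _ => ρ) 0 i + w i| =
      ∑ i ∈ K, |K.piecewise (fun _ => ρ) 0 i| + ∑ i ∈ K, w i := by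
    rw [← Finset.sum_add_distrib]
    refine Finset.sum_congr rfl fun i hi => ?_
    rw [K.piecewise_eq_of_mem _ _ hi, abs_of_nonneg hρ,
      abs_of_nonneg (by linarith [(abs_le.1 (habs i)).1])]
  have hKc : ∑ i ∈ Kᶜ, |K.piecewise (fun _ => ρ) 0 i + w i| =
      ∑ i ∈ Kᶜ, |K.piecewise (fun _ => ρ) 0 i| + ∑ i ∈ Kᶜ, |w i| := by
    rw [← Finset.sum_add_distrib]
    refine Finset.sum_congr rfl fun i hi => ?_
    rw [K.piecewise_eq_of_notMem _ _ (Finset.mem_compl.1 hi)]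
    simp
  rw [mem_descentCone] at hw
  simp only [feasibleErrors, mem_ofPred_eq, l1norm, Pi.add_apply,
    ← Finset.sum_add_sum_compl K, hK, hKc]
  linarith

/-- The last `k` coordinates, those on which a `k`-sparse vector may be nonzero. -/
def trailing (n k : ℕ) : Finset (Fin n) :=
  ({i | (i : ℕ) < n - k} : Finset (Fin n))ᶜ

lemma notMem_trailing_iff {i : Fin n} : i ∉ trailing n k ↔ (i : ℕ) < n - k := by
  rw [trailing, Finset.notMem_compl, Finset.mem_filter_univ]

lemma card_trailing (hk : k ≤ n) : (trailing n k).card = k := by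
  rw [trailing, Finset.card_compl, Fin.card_filter_val_lt, Fintype.card_fin]
  lia

lemma kSparseNonneg.isErrorRegion (h : kSparseNonneg n k xt) :
    IsErrorRegion (trailing n k) (feasibleErrors xt) where
  convex := convex_feasibleErrors xt
  isCompact := isCompact_feasibleErrors xt
  zero_mem := zero_mem_feasibleErrors xt
  subset_descentCone := feasibleErrors_subset_descentCone
    (fun i hi => h.1 i (notMem_trailing_iff.1 (Finset.mem_compl.1 hi))) h.2

lemma kSparseNonneg_piecewise_trailing (n k : ℕ) (hρ : 0 ≤ ρ) :
    kSparseNonneg n k ((trailing n k).piecewise (fun _ => ρ) 0) :=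
  ⟨fun _ hi => Finset.piecewise_eq_of_notMem _ _ _ (notMem_trailing_iff.2 hi),
    Finset.le_piecewise_of_le_of_le _ (h := (0 : Fin n → ℝ)) (fun _ => hρ) le_rfl⟩

lemma sq_mul_sqrt_div_mul_sub {a b : ℝ} (ha : 0 ≤ a) (hab : a < b) :
    (σ * √(a / (b - a))) ^ 2 * (b - a) = a * σ ^ 2 := by
  have hdiff : 0 < b - a := sub_pos.2 hab
  rw [mul_pow, Real.sq_sqrt (div_nonneg ha hdiff.le)]
  field_simp

lemma zetaObj_le (hx : l1norm x ≤ l1norm xt) : zetaObj m n xt ω ≤ lassoVal m n xt ω x :=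
  csInf_le ⟨0, by rintro _ ⟨y, -, rfl⟩; exact Real.sqrt_nonneg _⟩ ⟨x, hx, rfl⟩

lemma lassoVal_eq_zetaObj_iff (hσ : 0 < σ) (hx : l1norm x ≤ l1norm xt) :
    lassoVal m n xt ω x = zetaObj m n xt ω ↔
      IsMinOn (residualNorm σ ω) (feasibleErrors xt) (x - xt) := by
  constructor
  · intro h w hw
    have hle := h.trans_le (zetaObj_le (x := xt + w) hw)
    rwa [lassoVal_eq_residualNorm hσ, lassoVal_eq_residualNorm hσ, add_sub_cancel_left] at hle
  · intro h
    refine le_antisymm (le_csInf ⟨_, xt, le_rfl, rfl⟩ ?_) (zetaObj_le hx)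
    rintro _ ⟨y, hy, rfl⟩
    rw [lassoVal_eq_residualNorm hσ, lassoVal_eq_residualNorm hσ]
    exact h (sub_mem_feasibleErrors_iff.2 hy)

lemma exists_lassoVal_eq_zetaObj (hσ : 0 < σ) (xt : Fin n → ℝ)
    (ω : (Fin m → Fin n → ℝ) × (Fin m → ℝ)) :
    ∃ x, l1norm x ≤ l1norm xt ∧ lassoVal m n xt ω x = zetaObj m n xt ω := by
  obtain ⟨w, hw, hmin⟩ := (isCompact_feasibleErrors xt).exists_isMinOn
    ⟨0, zero_mem_feasibleErrors xt⟩ (continuous_residualNorm σ ω).continuousOn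
  refine ⟨xt + w, hw, (lassoVal_eq_zetaObj_iff hσ hw).2 ?_⟩
  rwa [add_sub_cancel_left]

lemma ofReal_one_sub_le_measure {Ω : Type*} [MeasurableSpace Ω] {μ : Measure Ω}
    [IsProbabilityMeasure μ] {G : Set Ω} {e : ℝ} (he : 0 ≤ e) (hG : μ Gᶜ ≤ ENNReal.ofReal e) :
    ENNReal.ofReal (1 - e) ≤ μ G := by
  rw [ENNReal.ofReal_sub _ he, ENNReal.ofReal_one, ← measure_univ (μ := μ)]
  exact tsub_le_iff_right.2 ((measure_univ_le_add_compl G).trans (by gcongr))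

lemma muAv_compl_forall_minimizer_le (hσ : 0 < σ) (xt : Fin n → ℝ) (u : ℝ) :
    muAv m n σ {ω | ∀ x, l1norm x ≤ l1norm xt → lassoVal m n xt ω x = zetaObj m n xt ω →
      e2norm (x - xt) ≤ u}ᶜ ≤
    muAv m n σ {ω | ∃ w ∈ {w ∈ feasibleErrors xt | u < euclNorm w},
      IsMinOn (residualNorm σ ω) (feasibleErrors xt) w} := by
  refine measure_mono fun ω hω => ?_
  simp only [mem_compl_iff, mem_ofPred_eq, not_forall, not_le] at hω
  obtain ⟨x, hx, hmin, hu⟩ := hω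
  rw [e2norm_eq_euclNorm] at hu
  exact ⟨x - xt, ⟨sub_mem_feasibleErrors_iff.2 hx, hu⟩, (lassoVal_eq_zetaObj_iff hσ hx).1 hmin⟩

lemma muAv_compl_exists_minimizer_le (hσ : 0 < σ) (xt : Fin n → ℝ) (l u : ℝ) :
    muAv m n σ {ω | ∃ x, l1norm x ≤ l1norm xt ∧ lassoVal m n xt ω x = zetaObj m n xt ω ∧
      l ≤ e2norm (x - xt) ∧ e2norm (x - xt) ≤ u}ᶜ ≤
    muAv m n σ {ω | ∃ w ∈ {w ∈ feasibleErrors xt | euclNorm w < l},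
        IsMinOn (residualNorm σ ω) (feasibleErrors xt) w} +
      muAv m n σ {ω | ∃ w ∈ {w ∈ feasibleErrors xt | u < euclNorm w},
        IsMinOn (residualNorm σ ω) (feasibleErrors xt) w} := by
  refine (measure_mono fun ω hω => ?_).trans (measure_union_le _ _)
  by_contra hnot
  simp only [mem_union, mem_ofPred_eq, not_or, not_exists, not_and] at hnot
  obtain ⟨x, hx, hmin⟩ := exists_lassoVal_eq_zetaObj hσ xt ω
  have hfeas := sub_mem_feasibleErrors_iff.2 hx
  have hmin' := (lassoVal_eq_zetaObj_iff hσ hx).1 hmin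
  refine hω ⟨x, hx, hmin, ?_, ?_⟩ <;> rw [e2norm_eq_euclNorm] <;> by_contra! hlt
  exacts [hnot.1 _ ⟨hfeas, hlt⟩ hmin', hnot.2 _ ⟨hfeas, hlt⟩ hmin']

lemma abs_natCeil_mul_sub_le {a : ℝ} (ha : 0 ≤ a) (n : ℕ) : |(⌈a * n⌉₊ : ℝ) - a * n| ≤ 1 := by
  rw [abs_of_nonneg (sub_nonneg.2 (Nat.le_ceil _)), sub_le_iff_le_add']
  exact (Nat.ceil_lt_add_one (by positivity)).le

lemma natCeil_mul_le {a : ℝ} (ha : a ≤ 1) (n : ℕ) : ⌈a * n⌉₊ ≤ n :=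
  Nat.ceil_le.2 (mul_le_of_le_one_left n.cast_nonneg ha)

lemma isLinearRegime_mDim_trailing_kDim {α β : ℝ} (hα : α ∈ Icc 0 1) (hβ : β ∈ Icc 0 1) :
    IsLinearRegime α β (mDim α) fun n => trailing n (kDim β n) where
  le := natCeil_mul_le hα.2
  abs_sub_le := abs_natCeil_mul_sub_le hα.1
  abs_card_sub_le n := by
    rw [card_trailing (show kDim β n ≤ n from natCeil_mul_le hβ.2 n)]
    exact abs_natCeil_mul_sub_le hβ.1 n

end Lasso

theorem lasso_stmt17 (σ α βw αw t : ℝ) (hσ : 0 < σ)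
    (hα : α ∈ Set.Ioo (0 : ℝ) 1) (hβw : βw ∈ Set.Ioo (0 : ℝ) 1) (hβα : βw < α)
    (hαw : αw ∈ Set.Ioo (0 : ℝ) α) (ht : 0 ≤ t)
    (herf : (2 / Real.sqrt Real.pi) * ∫ s in (0 : ℝ)..t, Real.exp (-s ^ 2)
      = (1 - αw) / (1 - βw))
    (hchar : (1 - βw) * Real.sqrt (2 / Real.pi) * Real.exp (-t ^ 2)
      = αw * (Real.sqrt 2 * t)) :
    ∀ ε₁ ∈ Set.Ioo (0 : ℝ) 1, ∃ ε₂ > (0 : ℝ), ∃ ε₃ > (0 : ℝ), ∃ N : ℕ, ∀ n ≥ N,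
      (∃ xts : Fin n → ℝ, kSparseNonneg n (kDim βw n) xts ∧
        muAv (mDim α n) n σ
          {ω | ∃ xh : Fin n → ℝ, l1norm xh ≤ l1norm xts ∧
            lassoVal (mDim α n) n xts ω xh = zetaObj (mDim α n) n xts ω ∧
            (1 - ε₁) * (σ * Real.sqrt (αw / (α - αw))) ≤ e2norm (xh - xts) ∧
            e2norm (xh - xts) ≤ (1 + ε₁) * (σ * Real.sqrt (αw / (α - αw)))}
        ≥ ENNReal.ofReal (1 - Real.exp (-(ε₂ * n)))) ∧
      (∀ xts : Fin n → ℝ, kSparseNonneg n (kDim βw n) xts →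
        muAv (mDim α n) n σ
          {ω | ∀ xh : Fin n → ℝ, l1norm xh ≤ l1norm xts →
            lassoVal (mDim α n) n xts ω xh = zetaObj (mDim α n) n xts ω →
            e2norm (xh - xts) ≤ (1 + ε₁) * (σ * Real.sqrt (αw / (α - αw)))}
        ≥ ENNReal.ofReal (1 - Real.exp (-(ε₃ * n)))) := by
  intro ε₁ hε₁
  set ρ := σ * √(αw / (α - αw))
  have hρ : 0 < ρ := mul_pos hσ (Real.sqrt_pos.2 (div_pos hαw.1 (sub_pos.2 hαw.2)))
  have hρ_eq : ρ ^ 2 * (α - αw) = αw * σ ^ 2 := sq_mul_sqrt_div_mul_sub hαw.1.le hαw.2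
  have hl := isMatchedThreshold_sqrt_two_mul hβw.2.ne ht herf hchar
  have H := isLinearRegime_mDim_trailing_kDim (Ioo_subset_Icc_self hα) (Ioo_subset_Icc_self hβw)
  have hsparse (n : ℕ) := kSparseNonneg_piecewise_trailing n (kDim βw n) hρ.le
  have hnear := H.expSmall_exists_isMinOn_near hσ hβw.1 hαw.1 hαw.2 hl hρ_eq
    (mul_nonneg (sub_nonneg.2 hε₁.2.le) hρ.le) (by nlinarith [hε₁.1])
    (fun n => (hsparse n).isErrorRegion) fun n w => mem_feasibleErrors_piecewise hρ.le
  have hfar := H.expSmall_exists_isMinOn_far hσ hβw.1 hαw.1 hαw.2 hl hρ.le hρ_eq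
    (ρ₂ := (1 + ε₁) * ρ) (by nlinarith [hε₁.1])
  obtain ⟨ε₂, hε₂, hle₂⟩ := hnear.add hfar
  obtain ⟨ε₃, hε₃, hle₃⟩ := hfar
  obtain ⟨N, hN⟩ := eventually_atTop.1 (hle₂.and hle₃)
  refine ⟨ε₂, hε₂, ε₃, hε₃, N, fun n hn => ⟨⟨_, hsparse n, ?_⟩, fun xts hxts => ?_⟩⟩
  · exact ofReal_one_sub_le_measure (Real.exp_nonneg _) <|
      (muAv_compl_exists_minimizer_le hσ _ _ _).trans <|
        (add_le_add_right (le_iSup₂_of_le _ (hsparse n).isErrorRegion le_rfl) _).trans (hN n hn).1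
  · exact ofReal_one_sub_le_measure (Real.exp_nonneg _) <|
      (muAv_compl_forall_minimizer_le hσ _ _).trans <|
        (le_iSup₂_of_le _ hxts.isErrorRegion le_rfl).trans (hN n hn).2
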